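/- Let 1 < p ≤ q < p*. For every open bounded convex set Ω ⊂ ℝ^N one has the strict inequality μ_{p,q}(Ω) < λ_{p,q}(Ω). -/

import Mathlib

open MeasureTheory Metric Set Real

noncomputable section

/-- The Rayleigh quotient `(∫_Ω |∇v|^p) / (∫_Ω |v|^q)^(p/q)`, where the gradient is
understood as the (a.e. defined) Fréchet derivative. -/
def rayleighQuot {N : ℕ} (p q : ℝ) (Ω : Set (EuclideanSpace ℝ (Fin N)))
    (v : EuclideanSpace ℝ (Fin N) → ℝ) : ℝ :=
  (∫ x in Ω, ‖fderiv ℝ v x‖ ^ p) / (∫ x in Ω, |v x| ^ q) ^ (p / q)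

/-- The first (generalized) Dirichlet eigenvalue `λ_{p,q}(Ω)`: infimum of the Rayleigh
quotient over nontrivial smooth functions compactly supported in `Ω`. -/
def lambdaPQ {N : ℕ} (p q : ℝ) (Ω : Set (EuclideanSpace ℝ (Fin N))) : ℝ :=
  sInf { R : ℝ | ∃ v : EuclideanSpace ℝ (Fin N) → ℝ,
    ContDiff ℝ (⊤ : ℕ∞) v ∧ HasCompactSupport v ∧ tsupport v ⊆ Ω ∧
    (∃ x ∈ Ω, v x ≠ 0) ∧ R = rayleighQuot p q Ω v }

/-- The first nontrivial (generalized) Neumann eigenvalue `μ_{p,q}(Ω)`: infimum of the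
Rayleigh quotient over nontrivial Lipschitz functions on the closure of `Ω` satisfying
the constraint `∫_Ω |v|^(q-2) v = 0`. -/
def muPQ {N : ℕ} (p q : ℝ) (Ω : Set (EuclideanSpace ℝ (Fin N))) : ℝ :=
  sInf { R : ℝ | ∃ v : EuclideanSpace ℝ (Fin N) → ℝ, ∃ K : NNReal,
    LipschitzOnWith K v (closure Ω) ∧ (∃ x ∈ Ω, v x ≠ 0) ∧
    (∫ x in Ω, |v x| ^ (q - 2) * v x) = 0 ∧ R = rayleighQuot p q Ω v }

/-- `q` is below the critical Sobolev exponent `p* = Np/(N-p)` (with `p* = ∞` if `p ≥ N`). -/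
def ltCritical (N : ℕ) (p q : ℝ) : Prop := p < N → q < N * p / (N - p)

end

open scoped ENNReal NNReal Pointwise Topology

/-!
Let `D` be open, of at most the volume of a ball of radius `diam Ω / 2`, and let `f ‖x‖` be the
radially decreasing rearrangement of an almost minimizer `u` for `λ = lambdaPQ p q D`. Testing `λ`
with the truncation `min |u| (f ρ)` bounds the energy of `u` below the level `f ρ` from below, so,
since `p ≤ q`, Pólya–Szegő above that level bounds the energy of `f ‖x‖` on `ball 0 ρ` by
`λ * ∫ x in ball 0 ρ, f ‖x‖ ^ q`, with a slack. (Pólya–Szegő itself is obtained without the coarea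
formula, by differentiating at `t = 0` a comparison of Hopf–Lax flows which follows from
Brunn–Minkowski.) In polar coordinates this bound passes from balls to sets which are star-shaped
about the origin, and the slack becomes a gain as soon as the set is not a cone near the origin.

If `x₀` and `x₁` are diametral points of `closure Ω`, the functions `f ‖x - x₀‖` and `f ‖x - x₁‖`
vanish outside disjoint balls, and `Ω` is star-shaped about both points. A combination of the two
with opposite signs satisfies the constraint, whence `muPQ p q Ω ≤ λ`, strictly if `Ω` is not a cone
near `x₀`.

If `Ω` has less volume than a ball of radius `diam Ω / 2`, a dilate `D` of `Ω` by a factor larger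
than `1` is admissible, and dilating strictly decreases `lambdaPQ`. Otherwise `Ω` is extremal in the
isodiametric inequality, so `closure Ω - closure Ω` fills the ball of radius `diam Ω`. Then some
boundary point of `Ω` is touched by a ball inside `Ω` and by a ball around `Ω`, so `Ω` is not a cone
near it, and `D = Ω` gives the strict inequality.
-/

section PrekopaLeindler

lemma volume_add_volume_le_volume_add_of_isCompact {A B : Set ℝ} (hA : IsCompact A)
    (hB : IsCompact B) (hA₀ : A.Nonempty) (hB₀ : B.Nonempty) :
    volume A + volume B ≤ volume (A + B) := by
  obtain ⟨a, ha, ha_max⟩ := hA.exists_isMaxOn hA₀ continuousOn_id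
  obtain ⟨b, hb, hb_min⟩ := hB.exists_isMinOn hB₀ continuousOn_id
  -- The translates `A + b` and `a + B` meet only at `a + b`.
  have h_inter : (· + b) '' A ∩ (a + ·) '' B ⊆ {a + b} := by
    rintro _ ⟨⟨y, hy, rfl⟩, z, hz, hzy⟩
    have hya : y ≤ a := ha_max hy
    have hbz : b ≤ z := hb_min hz
    simp only [mem_singleton_iff] at hzy ⊢
    linarith
  have h_union : (· + b) '' A ∪ (a + ·) '' B ⊆ A + B := by
    rintro _ (⟨y, hy, rfl⟩ | ⟨y, hy, rfl⟩)
    · exact add_mem_add hy hb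
    · exact add_mem_add ha hy
  calc volume A + volume B = volume ((· + b) '' A) + volume ((a + ·) '' B) := by simp
    _ = volume ((· + b) '' A ∪ (a + ·) '' B) :=
        (measure_union₀ (hB.image (by fun_prop)).measurableSet.nullMeasurableSet
          (measure_mono_null h_inter (by simp))).symm
    _ ≤ volume (A + B) := measure_mono h_union

lemma volume_add_volume_le_volume_add {A B : Set ℝ} (hA : MeasurableSet A)
    (hB : MeasurableSet B) (hA₀ : A.Nonempty) (hB₀ : B.Nonempty) :
    volume A + volume B ≤ volume (A + B) := by
  obtain ⟨a, ha⟩ := hA₀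
  obtain ⟨b, hb⟩ := hB₀
  have h_compact (K : Set ℝ) (hK : K ⊆ A ∧ IsCompact K) (L : Set ℝ) (hL : L ⊆ B ∧ IsCompact L) :
      volume K + volume L ≤ volume (A + B) :=
    calc volume K + volume L ≤ volume (insert a K) + volume (insert b L) := by
          gcongr <;> exact subset_insert _ _
      _ ≤ volume (insert a K + insert b L) :=
          volume_add_volume_le_volume_add_of_isCompact (hK.2.insert a) (hL.2.insert b)
            (insert_nonempty _ _) (insert_nonempty _ _)
      _ ≤ volume (A + B) :=
          measure_mono (add_subset_add (insert_subset ha hK.1) (insert_subset hb hL.1))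
  rw [hA.measure_eq_iSup_isCompact, hB.measure_eq_iSup_isCompact]
  simp only [iSup_and']
  exact ENNReal.biSup_add_biSup_le' ⟨∅, by simp⟩ ⟨∅, by simp⟩ h_compact

lemma lintegral_eq_lintegral_meas_ofReal_lt {α : Type*} [MeasurableSpace α] {μ : Measure α}
    {f : α → ℝ≥0∞} (hf : Measurable f) (hf_top : ∀ x, f x ≠ ∞) :
    ∫⁻ x, f x ∂μ = ∫⁻ s in Ioi (0 : ℝ), μ {x | ENNReal.ofReal s < f x} := by
  calc ∫⁻ x, f x ∂μ = ∫⁻ x, ENNReal.ofReal (f x).toReal ∂μ := by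
        simp [ENNReal.ofReal_toReal (hf_top _)]
    _ = ∫⁻ s in Ioi (0 : ℝ), μ {x | s < (f x).toReal} :=
        lintegral_eq_lintegral_meas_lt μ (ae_of_all _ fun _ ↦ ENNReal.toReal_nonneg)
          hf.ennreal_toReal.aemeasurable
    _ = _ := setLIntegral_congr_fun measurableSet_Ioi fun s hs ↦ by
        simp only [ENNReal.ofReal_lt_iff_lt_toReal (mem_Ioi.1 hs).le (hf_top _)]

variable {a b : ℝ}

lemma ennreal_geom_mean_le_arith_mean (ha : 0 < a) (hb : 0 < b) (hab : a + b = 1) (x y : ℝ≥0∞) :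
    x ^ a * y ^ b ≤ ENNReal.ofReal a * x + ENNReal.ofReal b * y := by
  have ha' : ENNReal.ofReal a ≠ 0 := by simpa using ha
  have hb' : ENNReal.ofReal b ≠ 0 := by simpa using hb
  by_cases hx : x = ∞
  · simp [hx, ENNReal.mul_top ha']
  by_cases hy : y = ∞
  · simp [hy, ENNReal.mul_top hb']
  lift x to ℝ≥0 using hx
  lift y to ℝ≥0 using hy
  rw [← ENNReal.coe_rpow_of_nonneg _ ha.le, ← ENNReal.coe_rpow_of_nonneg _ hb.le]
  lift a to ℝ≥0 using ha.le
  lift b to ℝ≥0 using hb.le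
  rw [ENNReal.ofReal_coe_nnreal, ENNReal.ofReal_coe_nnreal]
  exact_mod_cast NNReal.geom_mean_le_arith_mean2_weighted a b x y (by exact_mod_cast hab)

lemma ennreal_lt_rpow_mul_rpow (ha : 0 < a) (hb : 0 < b) (hab : a + b = 1) {s x y : ℝ≥0∞}
    (hx : s < x) (hy : s < y) : s < x ^ a * y ^ b := by
  rcases eq_or_ne s 0 with rfl | hs
  · rw [pos_iff_ne_zero, mul_ne_zero_iff]
    simp [ENNReal.rpow_eq_zero_iff, hx.ne', hy.ne', ha.not_gt, hb.not_gt]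
  calc s = s ^ a * s ^ b := by rw [← ENNReal.rpow_add _ _ hs hx.ne_top, hab, ENNReal.rpow_one]
    _ < x ^ a * y ^ b :=
        ENNReal.mul_lt_mul (ENNReal.rpow_lt_rpow hx ha) (ENNReal.rpow_lt_rpow hy hb)

lemma ofReal_mul_volume_superlevel_add_le (ha : 0 < a) (hb : 0 < b) (hab : a + b = 1)
    {f g h : ℝ → ℝ≥0∞} (hf : Measurable f) (hg : Measurable g)
    (H : ∀ x y, f x ^ a * g y ^ b ≤ h (a * x + b * y)) {s : ℝ≥0∞} (hsf : ∃ x, s < f x)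
    (hsg : ∃ x, s < g x) :
    ENNReal.ofReal a * volume {x | s < f x} + ENNReal.ofReal b * volume {x | s < g x} ≤
      volume {x | s < h x} := by
  have h_smul {c : ℝ} (hc : 0 < c) (A : Set ℝ) :
      ENNReal.ofReal c * volume A = volume (c • A) := by
    rw [Measure.addHaar_smul]; simp [abs_of_pos hc]
  rw [h_smul ha, h_smul hb]
  refine (volume_add_volume_le_volume_add ((measurableSet_lt measurable_const hf).const_smul₀ _)
    ((measurableSet_lt measurable_const hg).const_smul₀ _) (Set.Nonempty.smul_set hsf)
    (Set.Nonempty.smul_set hsg)).trans (measure_mono ?_)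
  rintro _ ⟨_, ⟨x, hx, rfl⟩, _, ⟨y, hy, rfl⟩, rfl⟩
  exact (ennreal_lt_rpow_mul_rpow ha hb hab hx hy).trans_le (H x y)

lemma prekopa_leindler_real_of_iSup_eq_one (ha : 0 < a) (hb : 0 < b) (hab : a + b = 1)
    {f g h : ℝ → ℝ≥0∞} (hf : Measurable f) (hg : Measurable g) (hh : Measurable h)
    (H : ∀ x y, f x ^ a * g y ^ b ≤ h (a * x + b * y)) (hf_sup : ⨆ x, f x = 1)
    (hg_sup : ⨆ x, g x = 1) :
    (∫⁻ x, f x) ^ a * (∫⁻ x, g x) ^ b ≤ ∫⁻ x, h x := by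
  have hf_le (x) : f x ≤ 1 := hf_sup ▸ le_iSup f x
  have hg_le (x) : g x ≤ 1 := hg_sup ▸ le_iSup g x
  have h_min : ∀ x y, f x ^ a * g y ^ b ≤ min (h (a * x + b * y)) 1 := fun x y ↦
    le_min (H x y) (mul_le_one' (ENNReal.rpow_le_one (hf_le x) ha.le)
      (ENNReal.rpow_le_one (hg_le y) hb.le))
  have h_anti (u : ℝ → ℝ≥0∞) : Antitone fun s : ℝ ↦ volume {x | ENNReal.ofReal s < u x} :=
    fun s t hst ↦ measure_mono fun x hx ↦ (ENNReal.ofReal_le_ofReal hst).trans_lt hx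
  calc (∫⁻ x, f x) ^ a * (∫⁻ x, g x) ^ b
      ≤ ENNReal.ofReal a * (∫⁻ x, f x) + ENNReal.ofReal b * ∫⁻ x, g x :=
        ennreal_geom_mean_le_arith_mean ha hb hab _ _
    _ = ∫⁻ s in Ioi (0 : ℝ), (ENNReal.ofReal a * volume {x | ENNReal.ofReal s < f x} +
          ENNReal.ofReal b * volume {x | ENNReal.ofReal s < g x}) := by
        rw [lintegral_eq_lintegral_meas_ofReal_lt hf
            fun x ↦ ne_top_of_le_ne_top ENNReal.one_ne_top (hf_le x),
          lintegral_eq_lintegral_meas_ofReal_lt hg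
            fun x ↦ ne_top_of_le_ne_top ENNReal.one_ne_top (hg_le x),
          ← lintegral_const_mul _ (h_anti f).measurable,
          ← lintegral_const_mul _ (h_anti g).measurable,
          ← lintegral_add_left ((h_anti f).measurable.const_mul _)]
    _ ≤ ∫⁻ s in Ioi (0 : ℝ), volume {x | ENNReal.ofReal s < min (h x) 1} := by
        refine lintegral_mono fun s ↦ ?_
        by_cases hs : ENNReal.ofReal s < 1
        · exact ofReal_mul_volume_superlevel_add_le ha hb hab hf hg h_min
            (lt_iSup_iff.1 (hf_sup ▸ hs)) (lt_iSup_iff.1 (hg_sup ▸ hs))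
        · simp [((hf_le _).trans (not_lt.1 hs)).not_gt, ((hg_le _).trans (not_lt.1 hs)).not_gt]
    _ = ∫⁻ x, min (h x) 1 := (lintegral_eq_lintegral_meas_ofReal_lt (hh.min measurable_const)
        fun x ↦ ne_top_of_le_ne_top ENNReal.one_ne_top (min_le_right _ _)).symm
    _ ≤ ∫⁻ x, h x := lintegral_mono fun x ↦ min_le_left _ _

lemma prekopa_leindler_real_of_iSup_ne_top (ha : 0 < a) (hb : 0 < b) (hab : a + b = 1)
    {f g h : ℝ → ℝ≥0∞} (hf : Measurable f) (hg : Measurable g) (hh : Measurable h)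
    (H : ∀ x y, f x ^ a * g y ^ b ≤ h (a * x + b * y)) (hf_sup : ⨆ x, f x ≠ ∞)
    (hg_sup : ⨆ x, g x ≠ ∞) :
    (∫⁻ x, f x) ^ a * (∫⁻ x, g x) ^ b ≤ ∫⁻ x, h x := by
  set F := ⨆ x, f x with hF
  set G := ⨆ x, g x with hG
  by_cases hF₀ : F = 0
  · simp [fun x ↦ le_antisymm ((le_iSup f x).trans hF₀.le) bot_le, ha]
  by_cases hG₀ : G = 0
  · simp [fun x ↦ le_antisymm ((le_iSup g x).trans hG₀.le) bot_le, hb]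
  set c := F ^ a * G ^ b with hc
  have hFa : F ^ a ≠ 0 := by simp [ENNReal.rpow_eq_zero_iff, hF₀, hf_sup]
  have hGb : G ^ b ≠ 0 := by simp [ENNReal.rpow_eq_zero_iff, hG₀, hg_sup]
  have hGb_top : G ^ b ≠ ∞ := ENNReal.rpow_ne_top_of_nonneg hb.le hg_sup
  have hc_top : c ≠ ∞ := ENNReal.mul_ne_top (ENNReal.rpow_ne_top_of_nonneg ha.le hf_sup) hGb_top
  have hc_inv : F⁻¹ ^ a * G⁻¹ ^ b = c⁻¹ := by
    rw [hc, ENNReal.mul_inv (.inr hGb_top) (.inr hGb), ENNReal.inv_rpow, ENNReal.inv_rpow]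
  have h_rpow (x y : ℝ≥0∞) :
      (F⁻¹ * x) ^ a * (G⁻¹ * y) ^ b = c⁻¹ * (x ^ a * y ^ b) := by
    rw [ENNReal.mul_rpow_of_nonneg _ _ ha.le, ENNReal.mul_rpow_of_nonneg _ _ hb.le,
      mul_mul_mul_comm, hc_inv]
  have h_normalized := prekopa_leindler_real_of_iSup_eq_one ha hb hab (hf.const_mul F⁻¹)
    (hg.const_mul G⁻¹) (hh.const_mul c⁻¹) (fun x y ↦ by rw [h_rpow]; gcongr; exact H x y)
    (by rw [← ENNReal.mul_iSup, ← hF, ENNReal.inv_mul_cancel hF₀ hf_sup])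
    (by rw [← ENNReal.mul_iSup, ← hG, ENNReal.inv_mul_cancel hG₀ hg_sup])
  rw [lintegral_const_mul _ hf, lintegral_const_mul _ hg, lintegral_const_mul _ hh,
    h_rpow] at h_normalized
  exact (ENNReal.mul_le_mul_iff_right (by simpa using hc_top)
    (ENNReal.inv_ne_top.2 (mul_ne_zero hFa hGb))).1 h_normalized

lemma lintegral_eq_iSup_lintegral_min_natCast {α : Type*} [MeasurableSpace α] {μ : Measure α}
    {f : α → ℝ≥0∞} (hf : Measurable f) :
    ∫⁻ x, f x ∂μ = ⨆ n : ℕ, ∫⁻ x, min (f x) n ∂μ := by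
  rw [← lintegral_iSup (fun n ↦ hf.min measurable_const)
    fun m n hmn x ↦ by dsimp only; gcongr]
  refine lintegral_congr fun x ↦ ?_
  rw [← inf_iSup_eq, ENNReal.iSup_natCast, inf_top_eq]

lemma prekopa_leindler_real (ha : 0 < a) (hb : 0 < b) (hab : a + b = 1)
    {f g h : ℝ → ℝ≥0∞} (hf : Measurable f) (hg : Measurable g) (hh : Measurable h)
    (H : ∀ x y, f x ^ a * g y ^ b ≤ h (a * x + b * y)) :
    (∫⁻ x, f x) ^ a * (∫⁻ x, g x) ^ b ≤ ∫⁻ x, h x := by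
  have h_rpow {c : ℝ} (hc : 0 < c) (u : ℕ → ℝ≥0∞) : (⨆ n, u n) ^ c = ⨆ n, u n ^ c :=
    (ENNReal.orderIsoRpow c hc).map_iSup u
  rw [lintegral_eq_iSup_lintegral_min_natCast hf, lintegral_eq_iSup_lintegral_min_natCast hg,
    h_rpow ha, h_rpow hb, ENNReal.iSup_mul]
  simp only [ENNReal.mul_iSup]
  have h_sup (u : ℝ → ℝ≥0∞) (n : ℕ) : ⨆ x, min (u x) n ≠ ∞ :=
    ne_top_of_le_ne_top (ENNReal.natCast_ne_top n) (iSup_le fun x ↦ min_le_right _ _)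
  refine iSup₂_le fun m n ↦ prekopa_leindler_real_of_iSup_ne_top ha hb hab
    (hf.min measurable_const) (hg.min measurable_const) hh (fun x y ↦ le_trans ?_ (H x y))
    (h_sup f m) (h_sup g n)
  gcongr <;> exact min_le_left _ _

lemma measurable_finCons {n : ℕ} :
    Measurable fun z : ℝ × (Fin n → ℝ) ↦ (Fin.cons z.1 z.2 : Fin (n + 1) → ℝ) := by
  simpa [MeasurableEquiv.piFinSuccAbove, Fin.insertNthEquiv, Fin.insertNth_zero] using
    (MeasurableEquiv.piFinSuccAbove (fun _ : Fin (n + 1) ↦ ℝ) 0).symm.measurable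

lemma lintegral_finCons {n : ℕ} {f : (Fin (n + 1) → ℝ) → ℝ≥0∞} (hf : Measurable f) :
    ∫⁻ x, f x = ∫⁻ s : ℝ, ∫⁻ z : Fin n → ℝ, f (Fin.cons s z) := by
  have h_mp := volume_preserving_piFinSuccAbove (fun _ : Fin (n + 1) ↦ ℝ) 0
  rw [← (h_mp.symm _).lintegral_comp hf, Measure.volume_eq_prod,
    lintegral_prod (fun z ↦ f _) (hf.comp (MeasurableEquiv.measurable _)).aemeasurable]
  simp [MeasurableEquiv.piFinSuccAbove, Fin.consEquiv]

lemma prekopa_leindler_pi {n : ℕ} (ha : 0 < a) (hb : 0 < b) (hab : a + b = 1)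
    {f g h : (Fin n → ℝ) → ℝ≥0∞} (hf : Measurable f) (hg : Measurable g) (hh : Measurable h)
    (H : ∀ x y, f x ^ a * g y ^ b ≤ h (a • x + b • y)) :
    (∫⁻ x, f x) ^ a * (∫⁻ x, g x) ^ b ≤ ∫⁻ x, h x := by
  induction n with
  | zero =>
    have h_univ : (volume : Measure (Fin 0 → ℝ)) univ = 1 := by
      rw [volume_pi]; exact Measure.pi_empty_univ _
    simp only [lintegral_unique, h_univ, mul_one]
    exact (H _ _).trans_eq (congrArg h (Subsingleton.elim _ _))
  | succ n ih =>
    have h_meas {u : (Fin (n + 1) → ℝ) → ℝ≥0∞} (hu : Measurable u) (s : ℝ) :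
        Measurable fun z : Fin n → ℝ ↦ u (Fin.cons s z) :=
      hu.comp (measurable_finCons.comp measurable_prodMk_left)
    have h_meas' {u : (Fin (n + 1) → ℝ) → ℝ≥0∞} (hu : Measurable u) :
        Measurable fun s : ℝ ↦ ∫⁻ z : Fin n → ℝ, u (Fin.cons s z) :=
      (hu.comp measurable_finCons).lintegral_prod_right'
    rw [lintegral_finCons hf, lintegral_finCons hg, lintegral_finCons hh]
    refine prekopa_leindler_real ha hb hab (h_meas' hf) (h_meas' hg) (h_meas' hh) fun s t ↦
      ih (h_meas hf s) (h_meas hg t) (h_meas hh _) fun x y ↦ ?_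
    refine (H (Fin.cons s x) (Fin.cons t y)).trans_eq (congrArg h ?_)
    ext i
    refine Fin.cases ?_ (fun j ↦ ?_) i <;> simp

variable {E : Type*} [NormedAddCommGroup E] [NormedSpace ℝ E] [FiniteDimensional ℝ E]
  [MeasurableSpace E] [BorelSpace E] (μ : Measure E) [μ.IsAddHaarMeasure]

theorem prekopa_leindler (ha : 0 < a) (hb : 0 < b) (hab : a + b = 1) {f g h : E → ℝ≥0∞}
    (hf : Measurable f) (hg : Measurable g) (hh : Measurable h)
    (H : ∀ x y, f x ^ a * g y ^ b ≤ h (a • x + b • y)) :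
    (∫⁻ x, f x ∂μ) ^ a * (∫⁻ x, g x ∂μ) ^ b ≤ ∫⁻ x, h x ∂μ := by
  let e : (Fin (Module.finrank ℝ E) → ℝ) ≃L[ℝ] E :=
    ContinuousLinearEquiv.ofFinrankEq (by simp)
  obtain ⟨c, hc⟩ : ∃ c : ℝ≥0, μ = c • volume.map e := ⟨_, μ.isAddLeftInvariant_eq_smul _⟩
  have h_int {u : E → ℝ≥0∞} (hu : Measurable u) : ∫⁻ x, u x ∂μ = c * ∫⁻ z, u (e z) := by
    rw [hc, lintegral_smul_measure, lintegral_map hu e.continuous.measurable]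
    rfl
  have h_rpow : (c : ℝ≥0∞) ^ a * (c : ℝ≥0∞) ^ b = c := by
    rw [← ENNReal.rpow_add_of_nonneg _ _ ha.le hb.le, hab, ENNReal.rpow_one]
  rw [h_int hf, h_int hg, h_int hh, ENNReal.mul_rpow_of_nonneg _ _ ha.le,
    ENNReal.mul_rpow_of_nonneg _ _ hb.le, mul_mul_mul_comm, h_rpow]
  gcongr
  refine prekopa_leindler_pi ha hb hab (hf.comp e.continuous.measurable)
    (hg.comp e.continuous.measurable) (hh.comp e.continuous.measurable) fun x y ↦ ?_
  simpa using H (e x) (e y)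

lemma measure_rpow_mul_measure_rpow_le (ha : 0 < a) (hb : 0 < b) (hab : a + b = 1) {A B : Set E}
    (hA : MeasurableSet A) (hB : MeasurableSet B) (hAB : MeasurableSet (a • A + b • B)) :
    μ A ^ a * μ B ^ b ≤ μ (a • A + b • B) := by
  simp only [← lintegral_indicator_one hA, ← lintegral_indicator_one hB,
    ← lintegral_indicator_one hAB]
  refine prekopa_leindler μ ha hb hab (measurable_one.indicator hA) (measurable_one.indicator hB)
    (measurable_one.indicator hAB) fun x y ↦ ?_
  by_cases hx : x ∈ A
  · by_cases hy : y ∈ B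
    · simp [hx, hy, add_mem_add (smul_mem_smul_set hx) (smul_mem_smul_set hy)]
    · simp [hy, hb]
  · simp [hx, ha]

lemma exists_pos_ofReal_pow_eq {x : ℝ≥0∞} (hx₀ : x ≠ 0) (hx : x ≠ ∞) {n : ℕ} (hn : n ≠ 0) :
    ∃ r : ℝ, 0 < r ∧ ENNReal.ofReal (r ^ n) = x :=
  ⟨x.toReal ^ (n : ℝ)⁻¹, Real.rpow_pos_of_pos (ENNReal.toReal_pos hx₀ hx) _, by
    rw [Real.rpow_inv_natCast_pow ENNReal.toReal_nonneg hn, ENNReal.ofReal_toReal hx]⟩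

lemma ofReal_pow_rpow_inv {r : ℝ} (hr : 0 ≤ r) {n : ℕ} (hn : n ≠ 0) :
    ENNReal.ofReal (r ^ n) ^ (n : ℝ)⁻¹ = ENNReal.ofReal r := by
  rw [ENNReal.ofReal_rpow_of_nonneg (by positivity) (by positivity),
    Real.pow_rpow_inv_natCast hr hn]

lemma ofReal_add_pow_le_measure_add {A B : Set E} (hA : MeasurableSet A)
    (hB : MeasurableSet B) (hAB : MeasurableSet (A + B)) {r s : ℝ} (hr : 0 < r) (hs : 0 < s)
    (hrA : ENNReal.ofReal (r ^ Module.finrank ℝ E) ≤ μ A)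
    (hsB : ENNReal.ofReal (s ^ Module.finrank ℝ E) ≤ μ B) :
    ENNReal.ofReal ((r + s) ^ Module.finrank ℝ E) ≤ μ (A + B) := by
  set n := Module.finrank ℝ E
  set M := ENNReal.ofReal ((r + s) ^ n) with hM
  have hM₀ : M ≠ 0 := by simpa [hM] using pow_pos (add_pos hr hs) n
  -- Rescale both sets to the same measure before using the multiplicative inequality.
  have h_rescale {c : ℝ} (hc : 0 < c) {C : Set E} (hcC : ENNReal.ofReal (c ^ n) ≤ μ C) :
      M ≤ μ ((c / (r + s))⁻¹ • C) :=
    calc M = ENNReal.ofReal ((c / (r + s))⁻¹ ^ n) * ENNReal.ofReal (c ^ n) := by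
          rw [← ENNReal.ofReal_mul (by positivity), ← mul_pow, inv_div, div_mul_cancel₀ _ hc.ne']
      _ ≤ ENNReal.ofReal ((c / (r + s))⁻¹ ^ n) * μ C := by gcongr
      _ = μ ((c / (r + s))⁻¹ • C) := by
          rw [Measure.addHaar_smul, abs_of_pos (by positivity)]
  have h_sum : r / (r + s) + s / (r + s) = 1 := by field_simp
  have h_smul {c : ℝ} (hc : 0 < c) (C : Set E) : (c / (r + s)) • (c / (r + s))⁻¹ • C = C :=
    smul_inv_smul₀ (by positivity) C
  calc M = M ^ (r / (r + s)) * M ^ (s / (r + s)) := by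
        rw [← ENNReal.rpow_add _ _ hM₀ ENNReal.ofReal_ne_top, h_sum, ENNReal.rpow_one]
    _ ≤ μ ((r / (r + s))⁻¹ • A) ^ (r / (r + s)) * μ ((s / (r + s))⁻¹ • B) ^ (s / (r + s)) := by
        gcongr
        exacts [h_rescale hr hrA, h_rescale hs hsB]
    _ ≤ μ ((r / (r + s)) • (r / (r + s))⁻¹ • A + (s / (r + s)) • (s / (r + s))⁻¹ • B) :=
        measure_rpow_mul_measure_rpow_le μ (by positivity) (by positivity) h_sum
          (hA.const_smul₀ _) (hB.const_smul₀ _) (by rwa [h_smul hr, h_smul hs])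
    _ = μ (A + B) := by rw [h_smul hr, h_smul hs]

theorem brunn_minkowski [Nontrivial E] {A B : Set E} (hA : MeasurableSet A)
    (hB : MeasurableSet B) (hAB : MeasurableSet (A + B)) (hA₀ : A.Nonempty) (hB₀ : B.Nonempty) :
    μ A ^ (Module.finrank ℝ E : ℝ)⁻¹ + μ B ^ (Module.finrank ℝ E : ℝ)⁻¹ ≤
      μ (A + B) ^ (Module.finrank ℝ E : ℝ)⁻¹ := by
  set n := Module.finrank ℝ E
  have hn₀ : n ≠ 0 := Module.finrank_pos.ne'
  have hn_inv : 0 < (n : ℝ)⁻¹ := by positivity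
  have h_left : μ A ≤ μ (A + B) := by
    obtain ⟨y, hy⟩ := hB₀
    rw [← measure_vadd μ y A]
    refine measure_mono ?_
    rintro _ ⟨x, hx, rfl⟩
    exact ⟨x, hx, y, hy, add_comm x y⟩
  have h_right : μ B ≤ μ (A + B) := by
    obtain ⟨x, hx⟩ := hA₀
    rw [← measure_vadd μ x B]
    refine measure_mono ?_
    rintro _ ⟨y, hy, rfl⟩
    exact add_mem_add hx hy
  rcases eq_or_ne (μ (A + B)) ∞ with h_top | h_top
  · simp [h_top, ENNReal.top_rpow_of_pos hn_inv]
  rcases eq_or_ne (μ A) 0 with hμA | hμA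
  · rw [hμA, ENNReal.zero_rpow_of_pos hn_inv, zero_add]
    exact ENNReal.rpow_le_rpow h_right hn_inv.le
  rcases eq_or_ne (μ B) 0 with hμB | hμB
  · rw [hμB, ENNReal.zero_rpow_of_pos hn_inv, add_zero]
    exact ENNReal.rpow_le_rpow h_left hn_inv.le
  obtain ⟨r, hr, hrA⟩ := exists_pos_ofReal_pow_eq hμA (ne_top_of_le_ne_top h_top h_left) hn₀
  obtain ⟨s, hs, hsB⟩ := exists_pos_ofReal_pow_eq hμB (ne_top_of_le_ne_top h_top h_right) hn₀
  rw [← hrA, ← hsB, ofReal_pow_rpow_inv hr.le hn₀, ofReal_pow_rpow_inv hs.le hn₀,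
    ← ENNReal.ofReal_add hr.le hs.le, ← ofReal_pow_rpow_inv (add_pos hr hs).le hn₀]
  exact ENNReal.rpow_le_rpow
    (ofReal_add_pow_le_measure_add μ hA hB hAB hr hs hrA.le hsB.le) hn_inv.le

end PrekopaLeindler

section BallVolume

variable {E : Type*} [NormedAddCommGroup E] [NormedSpace ℝ E] [FiniteDimensional ℝ E]
  [MeasurableSpace E] [BorelSpace E] (μ : Measure E) [μ.IsAddHaarMeasure]

lemma measure_closedBall_rpow_inv [Nontrivial E] {r : ℝ} (hr : 0 ≤ r) :
    μ (closedBall 0 r) ^ (Module.finrank ℝ E : ℝ)⁻¹ =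
      ENNReal.ofReal r * μ (ball 0 1) ^ (Module.finrank ℝ E : ℝ)⁻¹ := by
  rw [Measure.addHaar_closedBall μ 0 hr, ENNReal.mul_rpow_of_nonneg _ _ (by positivity),
    ofReal_pow_rpow_inv hr Module.finrank_pos.ne']

lemma measure_closedBall_lt_measure_closedBall [Nontrivial E] {r ρ : ℝ} (hρ : 0 < ρ)
    (hrρ : r < ρ) : μ (closedBall 0 r) < μ (closedBall 0 ρ) := by
  rcases lt_or_ge r 0 with hr | hr
  · simpa [closedBall_eq_empty.2 hr] using measure_closedBall_pos μ 0 hρ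
  · rw [Measure.addHaar_closedBall μ 0 hr, Measure.addHaar_closedBall μ 0 hρ.le]
    have : Module.finrank ℝ E ≠ 0 := Module.finrank_pos.ne'
    exact ENNReal.mul_lt_mul_left (measure_ball_pos μ 0 one_pos).ne' measure_ball_lt_top.ne
      ((ENNReal.ofReal_lt_ofReal_iff (by positivity)).2 (by gcongr))

lemma exists_measure_closedBall_eq [Nontrivial E] {V : ℝ≥0∞} (hV : V ≠ ∞) :
    ∃ ρ : ℝ, 0 ≤ ρ ∧ μ (closedBall 0 ρ) = V := by
  rcases eq_or_ne V 0 with rfl | hV₀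
  · exact ⟨0, le_rfl, by simp⟩
  have h₀ : μ (ball 0 1) ≠ 0 := (measure_ball_pos μ 0 one_pos).ne'
  have h_top : μ (ball 0 1) ≠ ∞ := measure_ball_lt_top.ne
  obtain ⟨ρ, hρ, hρV⟩ := exists_pos_ofReal_pow_eq (ENNReal.div_ne_zero.2 ⟨hV₀, h_top⟩)
    (ENNReal.div_ne_top hV h₀) (Module.finrank_pos (R := ℝ) (M := E)).ne'
  exact ⟨ρ, hρ.le, by
    rw [Measure.addHaar_closedBall μ 0 hρ.le, hρV, ENNReal.div_mul_cancel h₀ h_top]⟩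

lemma measure_closedBall_add_le_measure_add_closedBall [Nontrivial E] {A : Set E} (hA : IsOpen A)
    (hA₀ : A.Nonempty) {ρ r : ℝ} (hρ : 0 ≤ ρ) (hr : 0 ≤ r) (h : μ (closedBall 0 ρ) ≤ μ A) :
    μ (closedBall 0 (ρ + r)) ≤ μ (A + closedBall 0 r) := by
  have hn : 0 < (Module.finrank ℝ E : ℝ)⁻¹ := inv_pos.2 (Nat.cast_pos.2 Module.finrank_pos)
  rw [← ENNReal.rpow_le_rpow_iff hn]
  calc μ (closedBall 0 (ρ + r)) ^ (Module.finrank ℝ E : ℝ)⁻¹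
      = μ (closedBall 0 ρ) ^ (Module.finrank ℝ E : ℝ)⁻¹ +
          μ (closedBall 0 r) ^ (Module.finrank ℝ E : ℝ)⁻¹ := by
        rw [measure_closedBall_rpow_inv μ (add_nonneg hρ hr), measure_closedBall_rpow_inv μ hρ,
          measure_closedBall_rpow_inv μ hr, ENNReal.ofReal_add hρ hr, add_mul]
    _ ≤ μ A ^ (Module.finrank ℝ E : ℝ)⁻¹ +
          μ (closedBall 0 r) ^ (Module.finrank ℝ E : ℝ)⁻¹ := by gcongr
    _ ≤ μ (A + closedBall 0 r) ^ (Module.finrank ℝ E : ℝ)⁻¹ :=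
        brunn_minkowski μ hA.measurableSet measurableSet_closedBall hA.add_right.measurableSet hA₀
          (nonempty_closedBall.2 hr)

end BallVolume

section RadialProfile

lemma exists_gt_lt_measure_superlevel {α : Type*} [MeasurableSpace α] {μ : Measure α} {w : α → ℝ}
    {s : ℝ} {V : ℝ≥0∞} (h : V < μ {x | s < w x}) : ∃ t > s, V < μ {x | t < w x} := by
  obtain ⟨u, hu_anti, hu_gt, hu_lim⟩ := exists_seq_strictAnti_tendsto s
  have h_mono : Monotone fun n ↦ {x | u n < w x} := fun m n hmn x hx ↦
    (hu_anti.antitone hmn).trans_lt hx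
  have h_union : {x | s < w x} = ⋃ n, {x | u n < w x} := by
    ext x
    simp only [mem_ofPred_eq, mem_iUnion]
    exact ⟨fun hx ↦ (hu_lim.eventually_lt_const hx).exists, fun ⟨n, hn⟩ ↦ (hu_gt n).trans hn⟩
  rw [h_union, h_mono.measure_iUnion] at h
  obtain ⟨n, hn⟩ := lt_iSup_iff.1 h
  exact ⟨u n, hu_gt n, hn⟩

lemma measure_superlevel_lt_top {α : Type*} [TopologicalSpace α] [MeasurableSpace α]
    {μ : Measure α} [IsFiniteMeasureOnCompacts μ] {w : α → ℝ} (hw : HasCompactSupport w) {s : ℝ}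
    (hs : 0 ≤ s) : μ {x | s < w x} < ∞ :=
  (measure_mono fun _ hx ↦ subset_tsupport _ (hs.trans_lt hx).ne').trans_lt
    hw.isCompact.measure_lt_top

section Basic

variable {E : Type*} [NormedAddCommGroup E] [MeasurableSpace E]

/-- The profile `f` of the symmetric decreasing rearrangement of the positive part of `w`: the
function `x ↦ f ‖x‖` is equimeasurable with it. As a generalized inverse of the distribution
function it is defined on all of `ℝ`, and it is constant on `(-∞, 0]`, where balls are null. -/
noncomputable def radialProfile (μ : Measure E) (w : E → ℝ) (r : ℝ) : ℝ :=
  sInf {s | 0 ≤ s ∧ μ {x | s < w x} ≤ μ (closedBall 0 r)}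

variable {μ : Measure E} {w : E → ℝ}

lemma radialProfile_nonneg (r : ℝ) : 0 ≤ radialProfile μ w r :=
  Real.sInf_nonneg fun _ h ↦ h.1

lemma lt_radialProfile_iff (hw : BddAbove (range w)) {s r : ℝ} (hs : 0 ≤ s) :
    s < radialProfile μ w r ↔ μ (closedBall 0 r) < μ {x | s < w x} := by
  refine ⟨fun h ↦ ?_, fun h ↦ ?_⟩
  · by_contra! h'
    exact h.not_ge (csInf_le ⟨0, fun _ ht ↦ ht.1⟩ ⟨hs, h'⟩)
  · obtain ⟨t, hst, ht⟩ := exists_gt_lt_measure_superlevel h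
    refine hst.trans_le (le_csInf ?_ fun t' ht' ↦ ?_)
    · obtain ⟨M, hM⟩ := hw
      have h_empty : {x | max M 0 < w x} = ∅ :=
        eq_empty_of_forall_notMem fun x hx ↦
          ((le_max_left M 0).trans_lt hx).not_ge (hM (mem_range_self x))
      exact ⟨max M 0, le_max_right _ _, h_empty ▸ by simp⟩
    · by_contra! h'
      exact ((measure_mono fun x hx ↦ h'.trans hx).trans ht'.2).not_gt ht

lemma antitone_radialProfile (hw : BddAbove (range w)) : Antitone (radialProfile μ w) := by
  refine fun r r' hrr' ↦ le_of_forall_lt fun s hs ↦ ?_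
  rcases lt_or_ge s 0 with hs₀ | hs₀
  · exact hs₀.trans_le (radialProfile_nonneg r)
  · rw [lt_radialProfile_iff hw hs₀] at hs ⊢
    exact (measure_mono (closedBall_subset_closedBall hrr')).trans_lt hs

lemma bddAbove_range_radialProfile_norm (hw : BddAbove (range w)) :
    BddAbove (range fun x : E ↦ radialProfile μ w ‖x‖) :=
  ⟨radialProfile μ w 0, forall_mem_range.2 fun x ↦ antitone_radialProfile hw (norm_nonneg x)⟩

lemma radialProfile_max_sub (hw : BddAbove (range w)) {c : ℝ} (hc : 0 ≤ c) (r : ℝ) :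
    radialProfile μ (fun x ↦ max (w x - c) 0) r = max (radialProfile μ w r - c) 0 := by
  have hw' : BddAbove (range fun x ↦ max (w x - c) 0) := by
    obtain ⟨M, hM⟩ := hw
    refine ⟨max (M - c) 0, forall_mem_range.2 fun x ↦ ?_⟩
    gcongr
    exact hM (mem_range_self x)
  refine eq_of_forall_lt_iff fun s ↦ ?_
  rcases lt_or_ge s 0 with hs | hs
  · exact iff_of_true (hs.trans_le (radialProfile_nonneg r)) (hs.trans_le (le_max_right _ _))
  · simp only [lt_radialProfile_iff hw' hs, lt_max_iff, hs.not_gt, or_false, lt_sub_iff_add_lt,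
      lt_radialProfile_iff hw (add_nonneg hs hc)]

end Basic

variable {E : Type*} [NormedAddCommGroup E] [NormedSpace ℝ E] [Nontrivial E]
  [FiniteDimensional ℝ E] [MeasurableSpace E] [BorelSpace E] {μ : Measure E} [μ.IsAddHaarMeasure]
  {w : E → ℝ}

lemma radialProfile_le_radialProfile_add {L : ℝ≥0} (hL : LipschitzWith L w)
    (hw : HasCompactSupport w) (r : ℝ) {δ : ℝ} (hδ : 0 ≤ δ) :
    radialProfile μ w r ≤ radialProfile μ w (r + δ) + L * δ := by
  have hw_bdd := hL.continuous.bddAbove_range_of_hasCompactSupport hw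
  by_contra! h
  set s := radialProfile μ w (r + δ) + L * δ with hs
  have hs₀ : 0 ≤ s := add_nonneg (radialProfile_nonneg _) (by positivity)
  rw [lt_radialProfile_iff hw_bdd hs₀] at h
  obtain ⟨ρ, hρ₀, hρ⟩ :=
    exists_measure_closedBall_eq μ (measure_superlevel_lt_top (μ := μ) hw hs₀).ne
  have hrρ : r < ρ := by
    by_contra! hρr
    exact (measure_mono (closedBall_subset_closedBall hρr)).not_gt (hρ ▸ h)
  have hρ_pos : 0 < ρ := hρ₀.lt_of_ne' fun h₀ ↦ by simp [← hρ, h₀] at h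
  have h_nonempty : {x | s < w x}.Nonempty := nonempty_of_measure_ne_zero (bot_lt_of_lt h).ne'
  have h_subset : {x | s < w x} + closedBall 0 δ ⊆ {x | radialProfile μ w (r + δ) < w x} := by
    rintro _ ⟨x, hx, y, hy, rfl⟩
    have h_lip := (abs_le.1 (hL.dist_le_mul x (x + y))).2
    rw [dist_self_add_right] at h_lip
    have h_norm : L * ‖y‖ ≤ L * δ := by
      gcongr
      exact mem_closedBall_zero_iff.1 hy
    simp only [mem_ofPred_eq] at hx ⊢
    linarith
  have h_lt : μ (closedBall 0 (r + δ)) < μ {x | radialProfile μ w (r + δ) < w x} :=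
    calc μ (closedBall 0 (r + δ)) < μ (closedBall 0 (ρ + δ)) :=
          measure_closedBall_lt_measure_closedBall μ (by positivity) (by gcongr)
      _ ≤ μ ({x | s < w x} + closedBall 0 δ) :=
          measure_closedBall_add_le_measure_add_closedBall μ
            (isOpen_lt continuous_const hL.continuous) h_nonempty hρ₀ hδ hρ.le
      _ ≤ μ {x | radialProfile μ w (r + δ) < w x} := measure_mono h_subset
  exact lt_irrefl _ ((lt_radialProfile_iff hw_bdd (radialProfile_nonneg _)).2 h_lt)

lemma lipschitzWith_radialProfile {L : ℝ≥0} (hL : LipschitzWith L w) (hw : HasCompactSupport w) :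
    LipschitzWith L (radialProfile μ w) := by
  refine LipschitzWith.of_le_add_mul L fun r r' ↦ ?_
  rcases le_total r r' with h | h
  · simpa [Real.dist_eq, abs_sub_comm r, abs_of_nonneg (sub_nonneg.2 h)] using
      radialProfile_le_radialProfile_add hL hw r (sub_nonneg.2 h)
  · exact (antitone_radialProfile (hL.continuous.bddAbove_range_of_hasCompactSupport hw) h).trans
      (le_add_of_nonneg_right (by positivity))

lemma measure_lt_radialProfile_norm (hw_cont : Continuous w) (hw : HasCompactSupport w) {s : ℝ}
    (hs : 0 ≤ s) : μ {x | s < radialProfile μ w ‖x‖} = μ {x | s < w x} := by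
  obtain ⟨ρ, -, hρ⟩ :=
    exists_measure_closedBall_eq μ (measure_superlevel_lt_top (μ := μ) hw hs).ne
  have h_ball : {x : E | s < radialProfile μ w ‖x‖} = ball 0 ρ := by
    ext x
    rw [mem_ofPred_eq, mem_ball_zero_iff,
      lt_radialProfile_iff (hw_cont.bddAbove_range_of_hasCompactSupport hw) hs, ← hρ]
    refine ⟨fun h ↦ ?_, fun h ↦
      measure_closedBall_lt_measure_closedBall μ ((norm_nonneg x).trans_lt h) h⟩
    by_contra! h'
    exact (measure_mono (closedBall_subset_closedBall h')).not_gt h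
  rw [h_ball, ← hρ, Measure.addHaar_closedBall_eq_addHaar_ball]

end RadialProfile

section HopfLax

/-- The Hopf–Lax kernel: the cost `L_t(r) = t (r / t) ^ m / m` of moving by `r` in time `t`. -/
noncomputable def hopfLaxKernel (m t r : ℝ) : ℝ := t * (r / t) ^ m / m

/-- The Hopf–Lax semigroup `Q_t g(x) = sup_y (g(y) - L_t(‖x - y‖))`, which solves the
Hamilton–Jacobi equation `∂_t u = ‖∇u‖ ^ p / p` when `p` and `m` are conjugate exponents. -/
noncomputable def hopfLax {E : Type*} [NormedAddCommGroup E] (m t : ℝ) (g : E → ℝ) (x : E) : ℝ :=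
  ⨆ y, (g y - hopfLaxKernel m t ‖x - y‖)

variable {p m t : ℝ}

lemma hopfLaxKernel_nonneg (hm : 0 ≤ m) (ht : 0 ≤ t) {r : ℝ} (hr : 0 ≤ r) :
    0 ≤ hopfLaxKernel m t r := by
  unfold hopfLaxKernel
  positivity

lemma hopfLaxKernel_zero (hm : m ≠ 0) : hopfLaxKernel m t 0 = 0 := by
  simp [hopfLaxKernel, Real.zero_rpow hm]

lemma hopfLaxKernel_le_hopfLaxKernel (hm : 0 ≤ m) (ht : 0 ≤ t) {r r' : ℝ} (hr : 0 ≤ r)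
    (hrr' : r ≤ r') : hopfLaxKernel m t r ≤ hopfLaxKernel m t r' := by
  unfold hopfLaxKernel
  gcongr

lemma hopfLaxKernel_mul (ht : 0 < t) (r : ℝ) : hopfLaxKernel m t (t * r) = t * (r ^ m / m) := by
  rw [hopfLaxKernel, mul_div_cancel_left₀ _ ht.ne', mul_div_assoc]

lemma mul_le_hopfLaxKernel_add (hpm : p.HolderConjugate m) (ht : 0 < t) {b r : ℝ} (hb : 0 ≤ b)
    (hr : 0 ≤ r) : b * r ≤ hopfLaxKernel m t r + t * (b ^ p / p) :=
  calc b * r = t * (b * (r / t)) := by field_simp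
    _ ≤ t * (b ^ p / p + (r / t) ^ m / m) := by
        gcongr
        exact Real.young_inequality_of_nonneg hb (by positivity) hpm
    _ = hopfLaxKernel m t r + t * (b ^ p / p) := by rw [hopfLaxKernel]; ring

section Sup

variable {E : Type*} [NormedAddCommGroup E] {g : E → ℝ}

lemma bddAbove_hopfLax_range (hm : 0 ≤ m) (ht : 0 ≤ t) (hg : BddAbove (range g)) (x : E) :
    BddAbove (range fun y ↦ g y - hopfLaxKernel m t ‖x - y‖) := by
  obtain ⟨M, hM⟩ := hg
  refine ⟨M, ?_⟩
  rintro _ ⟨y, rfl⟩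
  exact (sub_le_self _ (hopfLaxKernel_nonneg hm ht (norm_nonneg _))).trans (hM (mem_range_self y))

lemma lt_hopfLax_iff (hm : 0 ≤ m) (ht : 0 ≤ t) (hg : BddAbove (range g)) {x : E} {s : ℝ} :
    s < hopfLax m t g x ↔ ∃ y, s < g y - hopfLaxKernel m t ‖x - y‖ :=
  lt_ciSup_iff (bddAbove_hopfLax_range hm ht hg x)

lemma sub_hopfLaxKernel_le_hopfLax (hm : 0 ≤ m) (ht : 0 ≤ t) (hg : BddAbove (range g)) (x y : E) :
    g y - hopfLaxKernel m t ‖x - y‖ ≤ hopfLax m t g x :=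
  le_ciSup (bddAbove_hopfLax_range hm ht hg x) y

lemma le_hopfLax (hm : 0 < m) (ht : 0 ≤ t) (hg : BddAbove (range g)) (x : E) :
    g x ≤ hopfLax m t g x := by
  simpa [hopfLaxKernel_zero hm.ne'] using sub_hopfLaxKernel_le_hopfLax hm.le ht hg x x

lemma isOpen_lt_hopfLax (hm : 0 ≤ m) (ht : 0 ≤ t) (hg : BddAbove (range g)) (s : ℝ) :
    IsOpen {x | s < hopfLax m t g x} := by
  simp only [lt_hopfLax_iff hm ht hg, ofPred_exists, hopfLaxKernel]
  refine isOpen_iUnion fun y ↦ isOpen_lt continuous_const ?_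
  have : Continuous fun x ↦ (‖x - y‖ / t) ^ m := by fun_prop (disch := exact hm)
  fun_prop

lemma measurable_hopfLax [MeasurableSpace E] [BorelSpace E] (hm : 0 ≤ m) (ht : 0 ≤ t)
    (hg : BddAbove (range g)) : Measurable (hopfLax m t g) :=
  measurable_of_Ioi fun s ↦ (isOpen_lt_hopfLax hm ht hg s).measurableSet

lemma hopfLax_le_of_lipschitzWith (hpm : p.HolderConjugate m) (ht : 0 < t) {K : ℝ≥0}
    (hg : LipschitzWith K g) (x : E) : hopfLax m t g x ≤ g x + t * ((K : ℝ) ^ p / p) := by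
  refine ciSup_le fun y ↦ ?_
  have h_lip := (le_abs_self _).trans (hg.dist_le_mul y x)
  rw [dist_comm, dist_eq_norm] at h_lip
  linarith [mul_le_hopfLaxKernel_add hpm ht K.coe_nonneg (norm_nonneg (x - y))]

lemma norm_le_of_hopfLax_pos (hpm : p.HolderConjugate m) (ht : 0 < t) (ht₁ : t ≤ 1) {M R : ℝ}
    (hM : ∀ x, g x ≤ M) (hR : ∀ x, 0 < g x → ‖x‖ ≤ R) {x : E} (hx : 0 < hopfLax m t g x) :
    ‖x‖ ≤ R + (M + 1 / p) := by
  obtain ⟨y, hy⟩ := (lt_hopfLax_iff hpm.symm.nonneg ht.le ⟨M, forall_mem_range.2 hM⟩).1 hx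
  have h_kernel := hopfLaxKernel_nonneg hpm.symm.nonneg ht.le (norm_nonneg (x - y))
  have h_young := mul_le_hopfLaxKernel_add hpm ht zero_le_one (norm_nonneg (x - y))
  rw [Real.one_rpow, one_mul] at h_young
  have h_t : t * (1 / p) ≤ 1 / p := mul_le_of_le_one_left (by simpa using hpm.nonneg) ht₁
  calc ‖x‖ = ‖y + (x - y)‖ := by rw [add_sub_cancel]
    _ ≤ ‖y‖ + ‖x - y‖ := norm_add_le _ _
    _ ≤ R + (M + 1 / p) := add_le_add (hR y (by linarith)) (by linarith [hM y])

end Sup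

variable {E : Type*} [NormedAddCommGroup E] [NormedSpace ℝ E] {g : E → ℝ}

lemma eventually_hopfLax_le (hpm : p.HolderConjugate m) {K : ℝ≥0} (hK : LipschitzWith K g)
    {x : E} {D : E →L[ℝ] ℝ} (hD : HasFDerivAt g D x) {b : ℝ} (hb : ‖D‖ < b) :
    ∀ᶠ t in 𝓝[>] 0, hopfLax m t g x ≤ g x + t * (b ^ p / p) := by
  obtain ⟨δ, hδ, h_near⟩ : ∃ δ > 0, ∀ y, ‖x - y‖ < δ → g y - g x ≤ b * ‖x - y‖ := by
    obtain ⟨δ, hδ, h⟩ := Metric.eventually_nhds_iff.1 (hD.isLittleO.def (sub_pos.2 hb))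
    refine ⟨δ, hδ, fun y hy ↦ ?_⟩
    have h_rem := (le_abs_self _).trans (h (by rwa [dist_comm, dist_eq_norm]))
    have h_lin := (le_abs_self _).trans (D.le_opNorm (y - x))
    rw [norm_sub_rev] at h_rem h_lin
    linarith
  have h_p := hpm.pos
  have hb₀ : 0 ≤ b := (norm_nonneg D).trans hb.le
  have h_small : ∀ᶠ t in 𝓝[>] (0 : ℝ), t * ((K + 1 : ℝ) ^ p / p) < δ :=
    ((continuous_mul_const ((K + 1 : ℝ) ^ p / p)).tendsto' 0 0
      (zero_mul _)).eventually_lt_const hδ |>.filter_mono nhdsWithin_le_nhds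
  filter_upwards [h_small, self_mem_nhdsWithin] with t h_small (ht : 0 < t)
  refine ciSup_le fun y ↦ ?_
  rcases lt_or_ge ‖x - y‖ δ with h | h
  · linarith [h_near y h, mul_le_hopfLaxKernel_add hpm ht hb₀ (norm_nonneg (x - y))]
  · -- Far from `x` the kernel beats the Lipschitz bound.
    have h_lip := (le_abs_self _).trans (hK.dist_le_mul y x)
    rw [dist_comm, dist_eq_norm] at h_lip
    have h_young := mul_le_hopfLaxKernel_add hpm ht (by positivity : (0 : ℝ) ≤ K + 1)
      (norm_nonneg (x - y))
    have : 0 ≤ t * (b ^ p / p) := by positivity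
    linarith

lemma exists_norm_le_one_apply_eq_norm [FiniteDimensional ℝ E] (D : E →L[ℝ] ℝ) :
    ∃ e, ‖e‖ ≤ 1 ∧ D e = ‖D‖ := by
  obtain ⟨e, he, h_max⟩ := (isCompact_closedBall (0 : E) 1).exists_isMaxOn
    (nonempty_closedBall.2 zero_le_one) D.continuous.norm.continuousOn
  have h_norm : ‖D e‖ = ‖D‖ := by
    rw [← D.sSup_unitClosedBall_eq_norm]
    exact (IsGreatest.csSup_eq ⟨mem_image_of_mem (‖D ·‖) he, forall_mem_image.2 h_max⟩).symm
  rw [mem_closedBall_zero_iff] at he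
  rcases le_total 0 (D e) with h | h
  · exact ⟨e, he, by rwa [Real.norm_of_nonneg h] at h_norm⟩
  · exact ⟨-e, by rwa [norm_neg], by rwa [map_neg, ← Real.norm_of_nonpos h]⟩

lemma eventually_lt_hopfLax [FiniteDimensional ℝ E] (hpm : p.HolderConjugate m)
    (hg : BddAbove (range g)) {x : E} {D : E →L[ℝ] ℝ} (hD : HasFDerivAt g D x) {c : ℝ}
    (hc : c < ‖D‖ ^ p / p) : ∀ᶠ t in 𝓝[>] 0, g x + t * c < hopfLax m t g x := by
  obtain ⟨e, he, heD⟩ := exists_norm_le_one_apply_eq_norm D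
  -- The maximizer of `D z - ‖z‖ ^ m / m`.
  set z := ‖D‖ ^ (p - 1) • e with hz
  have h_norm : ‖z‖ ^ m ≤ ‖D‖ ^ p :=
    calc ‖z‖ ^ m ≤ (‖D‖ ^ (p - 1)) ^ m := by
          have := hpm.symm.nonneg
          gcongr
          rw [hz, norm_smul, Real.norm_of_nonneg (by positivity)]
          exact mul_le_of_le_one_right (by positivity) he
      _ = ‖D‖ ^ p := by rw [← Real.rpow_mul (norm_nonneg D), hpm.sub_one_mul_conj]
  have h_apply : D z = ‖D‖ ^ p := by
    rw [hz, map_smul, heD, smul_eq_mul, ← Real.rpow_add_one' (norm_nonneg D)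
      (by simpa using hpm.pos.ne'), sub_add_cancel]
  have h_conj : ‖D‖ ^ p - ‖D‖ ^ p / m = ‖D‖ ^ p / p := by
    linear_combination (-‖D‖ ^ p) * hpm.inv_add_inv_eq_one
  have h_slope : ∀ᶠ t in 𝓝[>] (0 : ℝ), c + ‖D‖ ^ p / m < t⁻¹ • (g (x + t • z) - g x) :=
    (hD.hasLineDerivAt z).tendsto_slope_zero_right.eventually_const_lt (by linarith)
  filter_upwards [h_slope, self_mem_nhdsWithin] with t h_slope (ht : 0 < t)
  have h_kernel : hopfLaxKernel m t ‖x - (x + t • z)‖ ≤ t * (‖D‖ ^ p / m) := by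
    rw [sub_add_cancel_left, norm_neg, norm_smul, Real.norm_of_nonneg ht.le, hopfLaxKernel_mul ht]
    have := hpm.symm.pos
    gcongr
  rw [smul_eq_mul, ← div_eq_inv_mul, lt_div_iff₀ ht] at h_slope
  linarith [sub_hopfLaxKernel_le_hopfLax hpm.symm.nonneg ht.le hg x (x + t • z)]

theorem tendsto_hopfLax_sub_div [FiniteDimensional ℝ E] (hpm : p.HolderConjugate m)
    (hg : BddAbove (range g)) {K : ℝ≥0} (hK : LipschitzWith K g) {x : E}
    (hx : DifferentiableAt ℝ g x) :
    Filter.Tendsto (fun t ↦ (hopfLax m t g x - g x) / t) (𝓝[>] 0)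
      (𝓝 (‖fderiv ℝ g x‖ ^ p / p)) := by
  refine tendsto_order.2 ⟨fun c hc ↦ ?_, fun c hc ↦ ?_⟩
  · filter_upwards [eventually_lt_hopfLax hpm hg hx.hasFDerivAt hc, self_mem_nhdsWithin]
      with t h (ht : 0 < t)
    rw [lt_div_iff₀ ht]
    linarith
  · obtain ⟨b, hbc, hb⟩ : ∃ b, b ^ p / p < c ∧ ‖fderiv ℝ g x‖ < b := by
      have h_cont : ContinuousAt (fun b : ℝ ↦ b ^ p / p) ‖fderiv ℝ g x‖ :=
        ((Real.continuous_rpow_const hpm.nonneg).div_const p).continuousAt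
      exact ((h_cont.eventually_lt_const hc).filter_mono nhdsWithin_le_nhds |>.and
        (self_mem_nhdsWithin (s := Ioi _))).exists
    filter_upwards [eventually_hopfLax_le hpm hK hx.hasFDerivAt hb, self_mem_nhdsWithin]
      with t h (ht : 0 < t)
    rw [div_lt_iff₀ ht]
    linarith [mul_lt_mul_of_pos_left hbc ht]

end HopfLax

section PolyaSzego

lemma lintegral_ofReal_le_of_measure_lt_le {α : Type*} [MeasurableSpace α] {μ : Measure α}
    {f g : α → ℝ} (hf : AEMeasurable f μ) (hg : AEMeasurable g μ) (hf₀ : 0 ≤ f) (hg₀ : 0 ≤ g)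
    (h : ∀ s, 0 < s → μ {x | s < f x} ≤ μ {x | s < g x}) :
    ∫⁻ x, ENNReal.ofReal (f x) ∂μ ≤ ∫⁻ x, ENNReal.ofReal (g x) ∂μ := by
  rw [lintegral_eq_lintegral_meas_lt μ (ae_of_all _ hf₀) hf,
    lintegral_eq_lintegral_meas_lt μ (ae_of_all _ hg₀) hg]
  exact setLIntegral_mono' measurableSet_Ioi h

lemma lintegral_hopfLax_sub_div {E : Type*} [NormedAddCommGroup E] [MeasurableSpace E]
    {μ : Measure E} {m t : ℝ} (hm : 0 < m) (ht : 0 < t) {f : E → ℝ} (hf : BddAbove (range f))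
    (hf₀ : 0 ≤ f) (hf_meas : Measurable f) (hf_int : ∫⁻ x, ENNReal.ofReal (f x) ∂μ ≠ ∞) :
    ∫⁻ x, ENNReal.ofReal ((hopfLax m t f x - f x) / t) ∂μ =
      (∫⁻ x, ENNReal.ofReal (hopfLax m t f x) ∂μ - ∫⁻ x, ENNReal.ofReal (f x) ∂μ) /
        ENNReal.ofReal t := by
  have h_ofReal (x : E) : ENNReal.ofReal ((hopfLax m t f x - f x) / t) =
      (ENNReal.ofReal (hopfLax m t f x) - ENNReal.ofReal (f x)) * (ENNReal.ofReal t)⁻¹ := by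
    rw [ENNReal.ofReal_div_of_pos ht, ENNReal.ofReal_sub _ (hf₀ x), div_eq_mul_inv]
  simp only [h_ofReal]
  rw [lintegral_mul_const' _ _ (by simpa using ht), lintegral_sub hf_meas.ennreal_ofReal hf_int
    (ae_of_all _ fun x ↦ ENNReal.ofReal_le_ofReal (le_hopfLax hm ht.le hf x)), div_eq_mul_inv]

variable {E : Type*} [NormedAddCommGroup E] [NormedSpace ℝ E] [FiniteDimensional ℝ E]
  [MeasurableSpace E] [BorelSpace E] {μ : Measure E} [μ.IsAddHaarMeasure]
  {p m t : ℝ} {g : E → ℝ}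

variable {K : ℝ≥0}

lemma tendsto_lintegral_hopfLax_sub_div (hpm : p.HolderConjugate m) (hK : LipschitzWith K g)
    (hg : HasCompactSupport g) (hg₀ : 0 ≤ g) {u : ℕ → ℝ} (hu_mem : ∀ n, u n ∈ Ioc 0 1)
    (hu : Filter.Tendsto u Filter.atTop (𝓝[>] 0)) :
    Filter.Tendsto (fun n ↦ ∫⁻ x, ENNReal.ofReal ((hopfLax m (u n) g x - g x) / u n) ∂μ)
      Filter.atTop (𝓝 (∫⁻ x, ENNReal.ofReal (‖fderiv ℝ g x‖ ^ p / p) ∂μ)) := by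
  have hg_bdd := hK.continuous.bddAbove_range_of_hasCompactSupport hg
  have ⟨M, hM⟩ := hg_bdd
  obtain ⟨R, hR⟩ := hg.isCompact.isBounded.exists_norm_le
  have h_supp (x : E) (hx : 0 < g x) : ‖x‖ ≤ R := hR x (subset_tsupport _ hx.ne')
  refine tendsto_lintegral_of_dominated_convergence
    ((closedBall 0 (R + (M + 1 / p))).indicator fun _ ↦ ENNReal.ofReal ((K : ℝ) ^ p / p))
    (fun n ↦ (((measurable_hopfLax hpm.symm.nonneg (hu_mem n).1.le hg_bdd).sub
      hK.continuous.measurable).div_const _).ennreal_ofReal)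
    (fun n ↦ ae_of_all _ fun x ↦ ?_) ?_ ?_
  · rcases lt_or_ge 0 (hopfLax m (u n) g x) with hx | hx
    · rw [indicator_of_mem (mem_closedBall_zero_iff.2 (norm_le_of_hopfLax_pos hpm (hu_mem n).1
        (hu_mem n).2 (fun y ↦ hM (mem_range_self y)) h_supp hx))]
      refine ENNReal.ofReal_le_ofReal ((div_le_iff₀ (hu_mem n).1).2 ?_)
      linarith [hopfLax_le_of_lipschitzWith hpm (hu_mem n).1 hK x]
    · exact (ENNReal.ofReal_of_nonpos (div_nonpos_of_nonpos_of_nonneg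
        (sub_nonpos.2 (hx.trans (hg₀ x))) (hu_mem n).1.le)).trans_le zero_le
  · rw [lintegral_indicator_const measurableSet_closedBall]
    exact ENNReal.mul_ne_top ENNReal.ofReal_ne_top measure_closedBall_lt_top.ne
  · filter_upwards [hK.ae_differentiableAt] with x hx
    exact (ENNReal.continuous_ofReal.tendsto _).comp
      ((tendsto_hopfLax_sub_div hpm hg_bdd hK hx).comp hu)

variable [Nontrivial E]

-- A point of the left superlevel set lies within `r` of a point of `{s + L_t(r) < g*}`, for some
-- `r`, so Brunn–Minkowski controls the ball through it.
lemma measure_lt_hopfLax_radialProfile_le (hm : 0 ≤ m) (ht : 0 < t) (hg_cont : Continuous g)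
    (hg : BddAbove (range g)) {s : ℝ} (hs : 0 ≤ s) :
    μ {x | s < hopfLax m t (fun x ↦ radialProfile μ g ‖x‖) x} ≤ μ {x | s < hopfLax m t g x} := by
  set V := μ {x | s < hopfLax m t g x}
  have h_ball (x : E) (hx : s < hopfLax m t (fun x ↦ radialProfile μ g ‖x‖) x) :
      μ (closedBall 0 ‖x‖) ≤ V := by
    obtain ⟨y, hy⟩ := (lt_hopfLax_iff hm ht.le (bddAbove_range_radialProfile_norm hg)).1 hx
    have h_kernel := hopfLaxKernel_nonneg hm ht.le (norm_nonneg (x - y))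
    have h_y := (lt_radialProfile_iff hg (by positivity)).1 (lt_sub_iff_add_lt.1 hy)
    calc μ (closedBall 0 ‖x‖) ≤ μ (closedBall 0 (‖y‖ + ‖x - y‖)) :=
          measure_mono (closedBall_subset_closedBall (norm_le_norm_add_norm_sub' x y))
      _ ≤ μ ({z | s + hopfLaxKernel m t ‖x - y‖ < g z} + closedBall 0 ‖x - y‖) :=
          measure_closedBall_add_le_measure_add_closedBall μ (isOpen_lt continuous_const hg_cont)
            (nonempty_of_measure_ne_zero (bot_lt_of_lt h_y).ne') (norm_nonneg _) (norm_nonneg _)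
            h_y.le
      _ ≤ V := by
          refine measure_mono ?_
          rintro _ ⟨a, ha, v, hv, rfl⟩
          have h_sup := sub_hopfLaxKernel_le_hopfLax hm ht.le hg (a + v) a
          have h_mono := hopfLaxKernel_le_hopfLaxKernel hm ht.le (norm_nonneg v)
            (mem_closedBall_zero_iff.1 hv)
          rw [add_sub_cancel_left] at h_sup
          simp only [mem_ofPred_eq] at ha ⊢
          linarith
  rcases eq_or_ne V ∞ with hV | hV
  · exact hV ▸ le_top
  obtain ⟨ρ, hρ₀, hρ⟩ := exists_measure_closedBall_eq μ hV
  rw [← hρ]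
  refine measure_mono fun x hx ↦ ?_
  rw [mem_closedBall_zero_iff]
  by_contra! h
  exact (hρ ▸ h_ball x hx).not_gt
    (measure_closedBall_lt_measure_closedBall μ (hρ₀.trans_lt h) h)

lemma exists_nonneg_forall_lt_apply_iff {φ : ℝ → ℝ} (hφ : Continuous φ)
    (hφ_mono : MonotoneOn φ (Ici 0)) {s : ℝ} (hs : φ 0 ≤ s) (h : ∃ t, 0 ≤ t ∧ s < φ t) :
    ∃ a, 0 ≤ a ∧ ∀ t, 0 ≤ t → (s < φ t ↔ a < t) := by
  obtain ⟨t₀, ht₀, hst₀⟩ := h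
  let S := Ici 0 ∩ {t | φ t ≤ s}
  have hS_bdd : BddAbove S := ⟨t₀, fun t ht ↦ by
    by_contra! h
    exact (hst₀.trans_le (hφ_mono ht₀ ht.1 h.le)).not_ge ht.2⟩
  have hS_mem : sSup S ∈ S :=
    (isClosed_Ici.inter (isClosed_le hφ continuous_const)).csSup_mem ⟨0, self_mem_Ici, hs⟩ hS_bdd
  refine ⟨sSup S, hS_mem.1, fun t ht ↦ ⟨fun h ↦ ?_, fun h ↦ ?_⟩⟩
  · by_contra! h'
    exact h.not_ge ((hφ_mono ht hS_mem.1 h').trans hS_mem.2)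
  · by_contra! h'
    exact h.not_ge (le_csSup hS_bdd ⟨ht, h'⟩)

lemma measure_lt_comp_radialProfile_norm (hg_cont : Continuous g) (hg : HasCompactSupport g)
    (hg₀ : 0 ≤ g) {φ : ℝ → ℝ} (hφ : Continuous φ) (hφ_mono : MonotoneOn φ (Ici 0)) {s : ℝ}
    (hs : φ 0 ≤ s) : μ {x | s < φ (radialProfile μ g ‖x‖)} = μ {x | s < φ (g x)} := by
  by_cases h : ∃ t, 0 ≤ t ∧ s < φ t
  · obtain ⟨a, ha, h_iff⟩ := exists_nonneg_forall_lt_apply_iff hφ hφ_mono hs h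
    have h_iff' (x : E) := h_iff _ (hg₀ x)
    simp only [h_iff _ (radialProfile_nonneg _), h_iff']
    exact measure_lt_radialProfile_norm hg_cont hg ha
  · push Not at h
    have h' (x : E) := h _ (hg₀ x)
    simp [not_lt.2 (h _ (radialProfile_nonneg _)), not_lt.2 (h' _)]

lemma lintegral_comp_radialProfile_norm (hK : LipschitzWith K g) (hg : HasCompactSupport g)
    (hg₀ : 0 ≤ g) {φ : ℝ → ℝ} (hφ : Continuous φ) (hφ_mono : MonotoneOn φ (Ici 0))
    (hφ₀ : φ 0 = 0) :
    ∫⁻ x, ENNReal.ofReal (φ (radialProfile μ g ‖x‖)) ∂μ = ∫⁻ x, ENNReal.ofReal (φ (g x)) ∂μ := by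
  have hφ_nonneg (t : ℝ) (ht : 0 ≤ t) : 0 ≤ φ t := hφ₀ ▸ hφ_mono self_mem_Ici ht ht
  have h_meas : AEMeasurable (fun x : E ↦ φ (radialProfile μ g ‖x‖)) μ :=
    (hφ.comp ((lipschitzWith_radialProfile hK hg).continuous.comp continuous_norm)).aemeasurable
  have h_meas' : AEMeasurable (fun x ↦ φ (g x)) μ := (hφ.comp hK.continuous).aemeasurable
  have h_nonneg (x : E) := hφ_nonneg _ (radialProfile_nonneg (μ := μ) (w := g) ‖x‖)
  have h_nonneg' (x : E) := hφ_nonneg _ (hg₀ x)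
  have h_vol (s : ℝ) (hs : 0 < s) := measure_lt_comp_radialProfile_norm (μ := μ) hK.continuous hg
    hg₀ hφ hφ_mono (hφ₀.le.trans hs.le)
  exact le_antisymm
    (lintegral_ofReal_le_of_measure_lt_le h_meas h_meas' h_nonneg h_nonneg'
      fun s hs ↦ (h_vol s hs).le)
    (lintegral_ofReal_le_of_measure_lt_le h_meas' h_meas h_nonneg' h_nonneg
      fun s hs ↦ (h_vol s hs).ge)

lemma lintegral_hopfLax_radialProfile_sub_div_le (hm : 0 < m) (ht : 0 < t)
    (hK : LipschitzWith K g) (hg : HasCompactSupport g) (hg₀ : 0 ≤ g) :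
    ∫⁻ x, ENNReal.ofReal ((hopfLax m t (fun x ↦ radialProfile μ g ‖x‖) x -
        radialProfile μ g ‖x‖) / t) ∂μ ≤
      ∫⁻ x, ENNReal.ofReal ((hopfLax m t g x - g x) / t) ∂μ := by
  have hg_bdd := hK.continuous.bddAbove_range_of_hasCompactSupport hg
  have hG_bdd := bddAbove_range_radialProfile_norm (μ := μ) hg_bdd
  have hG_meas : Measurable fun x : E ↦ radialProfile μ g ‖x‖ :=
    ((lipschitzWith_radialProfile hK hg).continuous.comp continuous_norm).measurable
  have hG_nonneg : 0 ≤ fun x : E ↦ radialProfile μ g ‖x‖ := fun x ↦ radialProfile_nonneg _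
  have h_int := (hK.continuous.integrable_of_hasCompactSupport hg (μ := μ)).lintegral_lt_top.ne
  have h_eq := lintegral_comp_radialProfile_norm (μ := μ) hK hg hg₀ (φ := fun t ↦ t)
    continuous_id (monotone_id.monotoneOn _) rfl
  rw [lintegral_hopfLax_sub_div hm ht hG_bdd hG_nonneg hG_meas (h_eq ▸ h_int),
    lintegral_hopfLax_sub_div hm ht hg_bdd hg₀ hK.continuous.measurable h_int, h_eq]
  refine ENNReal.div_le_div_right (tsub_le_tsub_right ?_ _) _
  exact lintegral_ofReal_le_of_measure_lt_le (measurable_hopfLax hm.le ht.le hG_bdd).aemeasurable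
    (measurable_hopfLax hm.le ht.le hg_bdd).aemeasurable
    (fun x ↦ (hG_nonneg x).trans (le_hopfLax hm ht.le hG_bdd x))
    (fun x ↦ (hg₀ x).trans (le_hopfLax hm ht.le hg_bdd x))
    fun s hs ↦ measure_lt_hopfLax_radialProfile_le hm.le ht hK.continuous hg_bdd hs.le

/-- The **Pólya–Szegő inequality** for Lipschitz functions. -/
theorem lintegral_norm_fderiv_radialProfile_norm_le (hp : 1 < p) (hK : LipschitzWith K g)
    (hg : HasCompactSupport g) (hg₀ : 0 ≤ g) :
    ∫⁻ x, ENNReal.ofReal (‖fderiv ℝ (fun x : E ↦ radialProfile μ g ‖x‖) x‖ ^ p) ∂μ ≤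
      ∫⁻ x, ENNReal.ofReal (‖fderiv ℝ g x‖ ^ p) ∂μ := by
  set G := fun x : E ↦ radialProfile μ g ‖x‖
  have hpm : p.HolderConjugate p.conjExponent := .conjExponent hp
  have hg_bdd := hK.continuous.bddAbove_range_of_hasCompactSupport hg
  have hG_bdd : BddAbove (range G) := bddAbove_range_radialProfile_norm hg_bdd
  have hG_lip : LipschitzWith (K * 1) G :=
    (lipschitzWith_radialProfile hK hg).comp lipschitzWith_one_norm
  let u (n : ℕ) : ℝ := 1 / (n + 1)
  have hu_mem (n : ℕ) : u n ∈ Ioc 0 1 :=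
    ⟨Nat.one_div_pos_of_nat, (div_le_one₀ (by positivity)).2 (by simp)⟩
  have hu : Filter.Tendsto u Filter.atTop (𝓝[>] 0) :=
    tendsto_nhdsWithin_iff.2
      ⟨tendsto_one_div_add_atTop_nhds_zero_nat, Filter.Eventually.of_forall fun n ↦ (hu_mem n).1⟩
  have h_div : ∫⁻ x, ENNReal.ofReal (‖fderiv ℝ G x‖ ^ p / p) ∂μ ≤
      ∫⁻ x, ENNReal.ofReal (‖fderiv ℝ g x‖ ^ p / p) ∂μ :=
    calc ∫⁻ x, ENNReal.ofReal (‖fderiv ℝ G x‖ ^ p / p) ∂μ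
        = ∫⁻ x, Filter.liminf (fun n ↦ ENNReal.ofReal
            ((hopfLax p.conjExponent (u n) G x - G x) / u n)) Filter.atTop ∂μ := by
          refine lintegral_congr_ae ?_
          filter_upwards [hG_lip.ae_differentiableAt] with x hx
          exact ((ENNReal.continuous_ofReal.tendsto _).comp
            ((tendsto_hopfLax_sub_div hpm hG_bdd hG_lip hx).comp hu)).liminf_eq.symm
      _ ≤ Filter.liminf (fun n ↦ ∫⁻ x, ENNReal.ofReal
            ((hopfLax p.conjExponent (u n) G x - G x) / u n) ∂μ) Filter.atTop :=
          lintegral_liminf_le fun n ↦ (((measurable_hopfLax hpm.symm.nonneg (hu_mem n).1.le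
            hG_bdd).sub hG_lip.continuous.measurable).div_const _).ennreal_ofReal
      _ ≤ Filter.liminf (fun n ↦ ∫⁻ x, ENNReal.ofReal
            ((hopfLax p.conjExponent (u n) g x - g x) / u n) ∂μ) Filter.atTop :=
          Filter.liminf_le_liminf (Filter.Eventually.of_forall fun n ↦
            lintegral_hopfLax_radialProfile_sub_div_le hpm.symm.pos (hu_mem n).1 hK hg hg₀)
      _ = ∫⁻ x, ENNReal.ofReal (‖fderiv ℝ g x‖ ^ p / p) ∂μ :=
          (tendsto_lintegral_hopfLax_sub_div hpm hK hg hg₀ hu_mem hu).liminf_eq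
  have hp_inv : ENNReal.ofReal p⁻¹ ≠ 0 := by simpa using hpm.pos
  simp only [div_eq_mul_inv, ENNReal.ofReal_mul' (inv_nonneg.2 hpm.nonneg),
    lintegral_mul_const' _ _ ENNReal.ofReal_ne_top] at h_div
  exact (ENNReal.mul_le_mul_iff_left hp_inv ENNReal.ofReal_ne_top).1 h_div

end PolyaSzego

section Gradient

variable {E : Type*} [NormedAddCommGroup E] [NormedSpace ℝ E] {p : ℝ} {f u : E → ℝ} {x : E}

lemma norm_fderiv_max_sub_rpow (hp : p ≠ 0) (hf : Continuous f) (c : ℝ) (x : E) :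
    ‖fderiv ℝ (fun y ↦ max (f y - c) 0) x‖ ^ p =
      {y | c < f y}.indicator (fun y ↦ ‖fderiv ℝ f y‖ ^ p) x := by
  by_cases hx : c < f x
  · have h_eq : (fun y ↦ max (f y - c) 0) =ᶠ[𝓝 x] fun y ↦ f y - c := by
      filter_upwards [hf.continuousAt.eventually (lt_mem_nhds hx)] with y hy
      exact max_eq_left (sub_nonneg.2 hy.le)
    rw [h_eq.fderiv_eq, fderiv_sub_const, indicator_of_mem (mem_ofPred_eq ▸ hx)]
  · have h_min : IsLocalMin (fun y ↦ max (f y - c) 0) x := by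
      refine Filter.Eventually.of_forall fun y ↦ ?_
      simp only [max_eq_right (sub_nonpos.2 (not_lt.1 hx)), le_max_right]
    rw [h_min.fderiv_eq_zero, indicator_of_notMem (mem_ofPred_eq ▸ hx), norm_zero,
      Real.zero_rpow hp]

lemma norm_fderiv_abs_le (hu : DifferentiableAt ℝ u x) :
    ‖fderiv ℝ (fun y ↦ |u y|) x‖ ≤ ‖fderiv ℝ u x‖ := by
  by_cases hx : u x = 0
  · have h_min : IsLocalMin (fun y ↦ |u y|) x :=
      Filter.Eventually.of_forall fun y ↦ by simp [hx]
    simp [h_min.fderiv_eq_zero]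
  · rw [(hu.hasFDerivAt.abs hx).fderiv, norm_smul]
    refine mul_le_of_le_one_left (norm_nonneg _) ?_
    rcases lt_or_gt_of_ne hx with h | h <;> simp [h]

lemma exists_lipschitzWith_abs (hu : ContDiff ℝ 1 u) (hu' : HasCompactSupport u) :
    ∃ K, LipschitzWith K fun x ↦ |u x| := by
  obtain ⟨K, hK⟩ := hu.lipschitzWith_of_hasCompactSupport hu' one_ne_zero
  exact ⟨1 * K, lipschitzWith_one_norm.comp hK⟩

variable [MeasurableSpace E] [BorelSpace E] {μ : Measure E}

lemma integrable_norm_fderiv_rpow [IsFiniteMeasureOnCompacts μ] (hp : 0 < p)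
    (hu : ContDiff ℝ 1 u) (hu' : HasCompactSupport u) :
    Integrable (fun x ↦ ‖fderiv ℝ u x‖ ^ p) μ :=
  ((hu.continuous_fderiv one_ne_zero).norm.rpow_const
    fun _ ↦ .inr hp.le).integrable_of_hasCompactSupport
      ((hu'.fderiv ℝ).comp_left (g := fun y ↦ ‖y‖ ^ p) (by simp [hp.ne']))

lemma integrableOn_norm_fderiv_rpow [CompleteSpace E] (hp : 0 ≤ p) {K : ℝ≥0}
    (hK : LipschitzWith K f) {s : Set E} (hs : μ s ≠ ∞) :
    IntegrableOn (fun x ↦ ‖fderiv ℝ f x‖ ^ p) s μ := by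
  refine Measure.integrableOn_of_bounded (M := (K : ℝ) ^ p) hs
    ((measurable_fderiv ℝ f).norm.pow_const p).aestronglyMeasurable (ae_of_all _ fun x ↦ ?_)
  rw [Real.norm_of_nonneg (by positivity)]
  exact Real.rpow_le_rpow (norm_nonneg _) (norm_fderiv_le_of_lipschitz ℝ hK) hp

end Gradient

section TruncatedRearrangement

variable {E : Type*} [NormedAddCommGroup E] [NormedSpace ℝ E] [FiniteDimensional ℝ E]
  [Nontrivial E] [MeasurableSpace E] [BorelSpace E] {μ : Measure E} [μ.IsAddHaarMeasure]
  {p : ℝ} {w u : E → ℝ} {K : ℝ≥0}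

lemma lintegral_superlevel_norm_fderiv_radialProfile_norm_le (hp : 1 < p)
    (hK : LipschitzWith K w) (hw : HasCompactSupport w) {c : ℝ} (hc : 0 ≤ c) :
    ∫⁻ x in {x | c < radialProfile μ w ‖x‖},
        ENNReal.ofReal (‖fderiv ℝ (fun x : E ↦ radialProfile μ w ‖x‖) x‖ ^ p) ∂μ ≤
      ∫⁻ x in {x | c < w x}, ENNReal.ofReal (‖fderiv ℝ w x‖ ^ p) ∂μ := by
  have hw_bdd := hK.continuous.bddAbove_range_of_hasCompactSupport hw
  have h_cont : Continuous fun x : E ↦ radialProfile μ w ‖x‖ :=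
    (lipschitzWith_radialProfile hK hw).continuous.comp continuous_norm
  have h_indicator {f : E → ℝ} (hf : Continuous f) :
      ∫⁻ x, ENNReal.ofReal (‖fderiv ℝ (fun x ↦ max (f x - c) 0) x‖ ^ p) ∂μ =
        ∫⁻ x in {x | c < f x}, ENNReal.ofReal (‖fderiv ℝ f x‖ ^ p) ∂μ := by
    rw [← lintegral_indicator (isOpen_lt continuous_const hf).measurableSet]
    refine lintegral_congr fun x ↦ ?_
    rw [norm_fderiv_max_sub_rpow (by positivity) hf]
    exact (indicator_comp_of_zero ENNReal.ofReal_zero).symm ▸ rfl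
  have hK' : LipschitzWith K fun x ↦ max (w x - c) 0 := by
    simpa using (hK.sub (LipschitzWith.const c)).max_const 0
  have h := lintegral_norm_fderiv_radialProfile_norm_le (μ := μ) hp hK'
    (hw.comp_left (g := fun t ↦ max (t - c) 0) (by simpa using hc)) fun x ↦ le_max_right _ _
  simp only [radialProfile_max_sub hw_bdd hc] at h
  rwa [h_indicator h_cont, h_indicator hK.continuous] at h

lemma integral_comp_radialProfile_norm (hK : LipschitzWith K w) (hw : HasCompactSupport w)
    (hw₀ : 0 ≤ w) {φ : ℝ → ℝ} (hφ : Continuous φ) (hφ_mono : MonotoneOn φ (Ici 0))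
    (hφ₀ : φ 0 = 0) : ∫ x, φ (radialProfile μ w ‖x‖) ∂μ = ∫ x, φ (w x) ∂μ := by
  have hφ_nonneg (t : ℝ) (ht : 0 ≤ t) : 0 ≤ φ t := hφ₀ ▸ hφ_mono self_mem_Ici ht ht
  have h_cont : Continuous fun x : E ↦ radialProfile μ w ‖x‖ :=
    (lipschitzWith_radialProfile hK hw).continuous.comp continuous_norm
  rw [integral_eq_lintegral_of_nonneg_ae (ae_of_all _ fun x ↦ hφ_nonneg _ (radialProfile_nonneg _))
      (hφ.comp h_cont).aestronglyMeasurable,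
    integral_eq_lintegral_of_nonneg_ae (ae_of_all _ fun x ↦ hφ_nonneg _ (hw₀ x))
      (hφ.comp hK.continuous).aestronglyMeasurable,
    lintegral_comp_radialProfile_norm hK hw hw₀ hφ hφ_mono hφ₀]

lemma integral_superlevel_norm_fderiv_radialProfile_abs_le (hp : 1 < p) (hu : ContDiff ℝ 1 u)
    (hu' : HasCompactSupport u) {c : ℝ} (hc : 0 ≤ c) :
    ∫ x in {x | c < radialProfile μ (fun x ↦ |u x|) ‖x‖},
        ‖fderiv ℝ (fun x : E ↦ radialProfile μ (fun x ↦ |u x|) ‖x‖) x‖ ^ p ∂μ ≤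
      ∫ x in {x | c < |u x|}, ‖fderiv ℝ u x‖ ^ p ∂μ := by
  obtain ⟨K, hK⟩ := exists_lipschitzWith_abs hu hu'
  have h_int : IntegrableOn (fun x ↦ ‖fderiv ℝ u x‖ ^ p) {x | c < |u x|} μ :=
    (integrable_norm_fderiv_rpow (by positivity) hu hu').integrableOn
  rw [integral_eq_lintegral_of_nonneg_ae (ae_of_all _ fun x ↦ by positivity)
      ((measurable_fderiv ℝ _).norm.pow_const p).aestronglyMeasurable,
    integral_eq_lintegral_of_nonneg_ae (ae_of_all _ fun x ↦ by positivity)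
      h_int.aestronglyMeasurable]
  refine ENNReal.toReal_mono h_int.lintegral_lt_top.ne ?_
  refine (lintegral_superlevel_norm_fderiv_radialProfile_norm_le hp hK hu'.norm hc).trans ?_
  gcongr with x
  exact norm_fderiv_abs_le ((hu.differentiable one_ne_zero) x)

end TruncatedRearrangement

section SmoothTruncation

lemma exists_contDiff_truncation {k c : ℝ} (hk : 0 < k) (hkc : k < c) :
    ∃ T : ℝ → ℝ, ContDiff ℝ (⊤ : ℕ∞) T ∧ T 0 = 0 ∧ (∀ s, min |s| k ≤ |T s|) ∧
      (∀ s, |deriv T s| ≤ 1) ∧ ∀ s, c ≤ |s| → deriv T s = 0 := by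
  let χ : ContDiffBump (0 : ℝ) := ⟨k, c, hk, hkc⟩
  let T (s : ℝ) : ℝ := ∫ x in 0..s, χ x
  have h_deriv (s : ℝ) : HasDerivAt T (χ s) s :=
    χ.continuous.integral_hasStrictDerivAt 0 s |>.hasDerivAt
  have h_deriv_eq : deriv T = χ := funext fun s ↦ (h_deriv s).deriv
  have h_mono : Monotone T := monotone_of_deriv_nonneg (fun s ↦ (h_deriv s).differentiableAt)
    fun s ↦ h_deriv_eq ▸ χ.nonneg
  have h_id {s : ℝ} (hs : |s| ≤ k) : T s = s := by
    have h_one : EqOn χ (fun _ ↦ 1) (uIcc 0 s) := fun x hx ↦ χ.one_of_mem_closedBall <|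
      mem_closedBall_zero_iff.2 <| ((abs_sub_left_of_mem_uIcc hx).trans_eq (by simp)).trans hs
        |>.trans' (by simp)
    simp [T, intervalIntegral.integral_congr h_one]
  refine ⟨T, contDiff_infty_iff_deriv.2 ⟨fun s ↦ (h_deriv s).differentiableAt,
    h_deriv_eq ▸ χ.contDiff⟩, by simp [T], fun s ↦ ?_, fun s ↦ ?_, fun s hs ↦ ?_⟩
  · have h_min : |min |s| k| = min |s| k := abs_of_nonneg (by positivity)
    rcases le_total 0 s with h | h
    · rw [← h_id (s := min |s| k) (h_min.trans_le (min_le_right _ _))]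
      exact (h_mono ((min_le_left _ _).trans_eq (abs_of_nonneg h))).trans (le_abs_self _)
    · rw [← neg_le_neg_iff, ← h_id (s := -min |s| k) (by rw [abs_neg, h_min]; simp)]
      refine (neg_abs_le _).trans (h_mono ?_)
      rw [le_neg]
      exact (min_le_left _ _).trans_eq (abs_of_nonpos h)
  · rw [h_deriv_eq, abs_of_nonneg χ.nonneg]
    exact χ.le_one
  · rw [h_deriv_eq]
    exact χ.zero_of_le_dist (by simpa using hs)

end SmoothTruncation

section DirichletEigenvalue

/-- The admissible functions in the definition of `λ_{p,q}(D)`: the nontrivial elements of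
`C_c^∞(D)`. -/
structure IsTestFunction {E : Type*} [NormedAddCommGroup E] [NormedSpace ℝ E] (D : Set E)
    (u : E → ℝ) : Prop where
  contDiff : ContDiff ℝ (⊤ : ℕ∞) u
  hasCompactSupport : HasCompactSupport u
  tsupport_subset : tsupport u ⊆ D
  exists_ne_zero : ∃ x ∈ D, u x ≠ 0

namespace IsTestFunction

section NormedSpace

variable {E : Type*} [NormedAddCommGroup E] [NormedSpace ℝ E] {D : Set E} {u v : E → ℝ}

lemma contDiff_one (hu : IsTestFunction D u) : ContDiff ℝ 1 u :=
  hu.contDiff.of_le (by exact_mod_cast le_top)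

lemma differentiable (hu : IsTestFunction D u) : Differentiable ℝ u :=
  hu.contDiff_one.differentiable one_ne_zero

lemma const_mul (hu : IsTestFunction D u) {k : ℝ} (hk : k ≠ 0) :
    IsTestFunction D fun x ↦ k * u x where
  contDiff := contDiff_const.mul hu.contDiff
  hasCompactSupport := hu.hasCompactSupport.mul_left
  tsupport_subset :=
    (closure_mono fun _ hx ↦ right_ne_zero_of_mul hx).trans hu.tsupport_subset
  exists_ne_zero := hu.exists_ne_zero.imp fun _ hx ↦ ⟨hx.1, mul_ne_zero hk hx.2⟩

lemma comp_left (hu : IsTestFunction D u) {T : ℝ → ℝ} (hT : ContDiff ℝ (⊤ : ℕ∞) T) (hT₀ : T 0 = 0)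
    (hT_ne : ∀ s, s ≠ 0 → T s ≠ 0) : IsTestFunction D fun x ↦ T (u x) where
  contDiff := hT.comp hu.contDiff
  hasCompactSupport := hu.hasCompactSupport.comp_left hT₀
  tsupport_subset :=
    (closure_mono (Function.support_comp_subset hT₀ u)).trans hu.tsupport_subset
  exists_ne_zero := hu.exists_ne_zero.imp fun _ hx ↦ ⟨hx.1, hT_ne _ hx.2⟩

lemma comp_inv_smul (hu : IsTestFunction D u) {t : ℝ} (ht : t ≠ 0) :
    IsTestFunction (t • D) fun x ↦ u (t⁻¹ • x) where
  contDiff := hu.contDiff.comp (contDiff_const_smul t⁻¹)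
  hasCompactSupport := hu.hasCompactSupport.comp_smul (inv_ne_zero ht)
  tsupport_subset := fun x hx ↦ by
    rw [mem_smul_set_iff_inv_smul_mem₀ ht]
    exact hu.tsupport_subset <|
      closure_minimal (t := (fun x ↦ t⁻¹ • x) ⁻¹' tsupport u) (fun y hy ↦ subset_tsupport u hy)
        ((isClosed_tsupport u).preimage (continuous_const_smul t⁻¹)) hx
  exists_ne_zero := by
    obtain ⟨x, hx, hx_ne⟩ := hu.exists_ne_zero
    exact ⟨t • x, smul_mem_smul_set hx, by simpa [smul_smul, ht] using hx_ne⟩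

variable [MeasurableSpace E] {μ : Measure E}

lemma setIntegral_abs_rpow {q : ℝ} (hu : IsTestFunction D u) (hq : q ≠ 0) :
    ∫ x in D, |u x| ^ q ∂μ = ∫ x, |u x| ^ q ∂μ :=
  setIntegral_eq_integral_of_forall_compl_eq_zero fun x hx ↦ by
    simp [image_eq_zero_of_notMem_tsupport (mt (@hu.tsupport_subset x) hx), hq]

lemma setIntegral_norm_fderiv_rpow {p : ℝ} (hu : IsTestFunction D u) (hp : p ≠ 0) :
    ∫ x in D, ‖fderiv ℝ u x‖ ^ p ∂μ = ∫ x, ‖fderiv ℝ u x‖ ^ p ∂μ :=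
  setIntegral_eq_integral_of_forall_compl_eq_zero fun x hx ↦ by
    have h_zero : fderiv ℝ u x = 0 := by
      by_contra h
      exact hx (hu.tsupport_subset (support_fderiv_subset ℝ h))
    simp [h_zero, hp]

variable [BorelSpace E]

lemma integrable_comp [IsFiniteMeasureOnCompacts μ] (hu : IsTestFunction D u) {φ : ℝ → ℝ}
    (hφ : Continuous φ) (hφ₀ : φ 0 = 0) : Integrable (fun x ↦ φ (u x)) μ :=
  (hφ.comp hu.contDiff.continuous).integrable_of_hasCompactSupport
    (hu.hasCompactSupport.comp_left hφ₀)

lemma integrable_abs_rpow [IsFiniteMeasureOnCompacts μ] {q : ℝ} (hu : IsTestFunction D u)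
    (hq : 0 < q) : Integrable (fun x ↦ |u x| ^ q) μ :=
  hu.integrable_comp (continuous_abs.rpow_const fun _ ↦ .inr hq.le) (by simp [hq.ne'])

lemma integral_abs_rpow_pos [IsFiniteMeasureOnCompacts μ] [μ.IsOpenPosMeasure] {q : ℝ}
    (hu : IsTestFunction D u) (hq : 0 < q) : 0 < ∫ x, |u x| ^ q ∂μ := by
  obtain ⟨x, -, hx⟩ := hu.exists_ne_zero
  exact integral_pos_of_integrable_nonneg_nonzero (x := x)
    (hu.contDiff.continuous.abs.rpow_const fun _ ↦ .inr hq.le) (hu.integrable_abs_rpow hq)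
    (fun x ↦ by positivity) (by simp [hx, Real.rpow_eq_zero_iff_of_nonneg])

lemma integral_norm_fderiv_comp_le [FiniteDimensional ℝ E] [IsFiniteMeasureOnCompacts μ]
    (hu : IsTestFunction D u) {p c : ℝ} (hp : 0 < p) {T : ℝ → ℝ} (hT : ContDiff ℝ 1 T)
    (hT₀ : T 0 = 0) (hT_deriv : ∀ s, |deriv T s| ≤ 1) (hT_deriv₀ : ∀ s, c < |s| → deriv T s = 0) :
    ∫ x, ‖fderiv ℝ (fun x ↦ T (u x)) x‖ ^ p ∂μ ≤
      ∫ x in {x | |u x| ≤ c}, ‖fderiv ℝ u x‖ ^ p ∂μ := by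
  have h_meas : MeasurableSet {x | |u x| ≤ c} :=
    (isClosed_le hu.contDiff.continuous.abs continuous_const).measurableSet
  rw [← integral_indicator h_meas]
  refine integral_mono (integrable_norm_fderiv_rpow hp (hT.comp hu.contDiff_one)
    (hu.hasCompactSupport.comp_left hT₀))
    ((integrable_norm_fderiv_rpow hp hu.contDiff_one hu.hasCompactSupport).indicator h_meas)
    fun x ↦ ?_
  have h_chain : fderiv ℝ (fun x ↦ T (u x)) x = deriv T (u x) • fderiv ℝ u x :=
    (((hT.differentiable one_ne_zero) _).hasDerivAt.comp_hasFDerivAt x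
      (hu.differentiable x).hasFDerivAt).fderiv
  simp only [h_chain, norm_smul]
  by_cases hx : |u x| ≤ c
  · rw [indicator_of_mem (mem_ofPred_eq ▸ hx)]
    exact Real.rpow_le_rpow (by positivity)
      (mul_le_of_le_one_left (norm_nonneg _) (hT_deriv _)) hp.le
  · simp [hx, hT_deriv₀ _ (not_le.1 hx), hp.ne']

end NormedSpace

end IsTestFunction

lemma exists_isTestFunction {E : Type*} [NormedAddCommGroup E] [NormedSpace ℝ E]
    [FiniteDimensional ℝ E] {D : Set E} (hD : IsOpen D) (hD₀ : D.Nonempty) :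
    ∃ u, IsTestFunction D u := by
  obtain ⟨x, hx⟩ := hD₀
  obtain ⟨u, hu_supp, hu_comp, hu_smooth, -, hux⟩ :=
    exists_contDiff_tsupport_subset (n := (⊤ : ℕ∞)) (hD.mem_nhds hx)
  exact ⟨u, hu_smooth, hu_comp, hu_supp, x, hx, by simp [hux]⟩

variable {N : ℕ} {p q : ℝ} {D : Set (EuclideanSpace ℝ (Fin N))}
  {u : EuclideanSpace ℝ (Fin N) → ℝ}

lemma rayleighQuot_nonneg : 0 ≤ rayleighQuot p q D u :=
  div_nonneg (integral_nonneg fun x ↦ by positivity)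
    (Real.rpow_nonneg (integral_nonneg fun x ↦ by positivity) _)

lemma lambdaPQ_eq_sInf_image :
    lambdaPQ p q D = sInf (rayleighQuot p q D '' {u | IsTestFunction D u}) := by
  refine congr_arg sInf (Set.ext fun R ↦ ?_)
  exact ⟨fun ⟨u, h₁, h₂, h₃, h₄, hR⟩ ↦ ⟨u, ⟨h₁, h₂, h₃, h₄⟩, hR.symm⟩,
    fun ⟨u, ⟨h₁, h₂, h₃, h₄⟩, hR⟩ ↦ ⟨u, h₁, h₂, h₃, h₄, hR.symm⟩⟩

lemma lambdaPQ_nonneg : 0 ≤ lambdaPQ p q D := by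
  rw [lambdaPQ_eq_sInf_image]
  exact Real.sInf_nonneg (forall_mem_image.2 fun _ _ ↦ rayleighQuot_nonneg)

namespace IsTestFunction

lemma rayleighQuot_eq (hu : IsTestFunction D u) (hp : p ≠ 0) (hq : q ≠ 0) :
    rayleighQuot p q D u = (∫ x, ‖fderiv ℝ u x‖ ^ p) / (∫ x, |u x| ^ q) ^ (p / q) := by
  rw [rayleighQuot, hu.setIntegral_abs_rpow hq, hu.setIntegral_norm_fderiv_rpow hp]

lemma lambdaPQ_le (hu : IsTestFunction D u) : lambdaPQ p q D ≤ rayleighQuot p q D u := by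
  rw [lambdaPQ_eq_sInf_image]
  exact csInf_le ⟨0, forall_mem_image.2 fun _ _ ↦ rayleighQuot_nonneg⟩ (mem_image_of_mem _ hu)

lemma lambdaPQ_mul_le (hu : IsTestFunction D u) (hp : p ≠ 0) (hq : 0 < q) :
    lambdaPQ p q D * (∫ x, |u x| ^ q) ^ (p / q) ≤ ∫ x, ‖fderiv ℝ u x‖ ^ p := by
  have h := hu.lambdaPQ_le (p := p) (q := q)
  rwa [hu.rayleighQuot_eq hp hq.ne',
    le_div_iff₀ (Real.rpow_pos_of_pos (hu.integral_abs_rpow_pos hq) _)] at h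

lemma exists_normalized (hu : IsTestFunction D u) (hp : p ≠ 0) (hq : 0 < q) :
    ∃ v, IsTestFunction D v ∧ ∫ x, |v x| ^ q = 1 ∧
      ∫ x, ‖fderiv ℝ v x‖ ^ p = rayleighQuot p q D u := by
  have h_pos := hu.integral_abs_rpow_pos hq (μ := volume)
  rw [hu.rayleighQuot_eq hp hq.ne']
  set I := ∫ x, |u x| ^ q
  have hk : 0 < I ^ (-q⁻¹) := Real.rpow_pos_of_pos h_pos _
  refine ⟨fun x ↦ I ^ (-q⁻¹) * u x, hu.const_mul hk.ne', ?_, ?_⟩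
  · simp only [abs_mul, abs_of_pos hk, Real.mul_rpow hk.le (abs_nonneg _), integral_const_mul]
    rw [← Real.rpow_mul h_pos.le, neg_mul, inv_mul_cancel₀ hq.ne', Real.rpow_neg_one,
      inv_mul_cancel₀ h_pos.ne']
  · have h_grad (x : EuclideanSpace ℝ (Fin N)) :
        ‖fderiv ℝ (fun x ↦ I ^ (-q⁻¹) * u x) x‖ ^ p = I ^ (-(p / q)) * ‖fderiv ℝ u x‖ ^ p := by
      rw [fderiv_const_mul (hu.differentiable x), norm_smul, Real.norm_of_nonneg hk.le,
        Real.mul_rpow hk.le (norm_nonneg _), ← Real.rpow_mul h_pos.le]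
      congr 2
      ring
    simp only [h_grad, integral_const_mul]
    rw [Real.rpow_neg h_pos.le, inv_mul_eq_div]

lemma rpow_mul_lambdaPQ_mul_integral_min_rpow_le (hu : IsTestFunction D u) (hp : 0 < p)
    (hpq : p ≤ q) (hu_le : ∫ x, |u x| ^ q ≤ 1) {c k : ℝ} (hc : 0 < c) (hk : k ∈ Ioo 0 1) :
    k ^ p * (lambdaPQ p q D * ∫ x, min |u x| c ^ q) ≤
      ∫ x in {x | |u x| ≤ c}, ‖fderiv ℝ u x‖ ^ p := by
  have hq : 0 < q := hp.trans_le hpq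
  obtain ⟨T, hT, hT₀, hT_ge, hT_deriv, hT_deriv₀⟩ :=
    exists_contDiff_truncation (mul_pos hk.1 hc) (mul_lt_of_lt_one_left hc hk.2)
  have hv : IsTestFunction D fun x ↦ T (u x) := hu.comp_left hT hT₀ fun s hs ↦
    abs_pos.1 ((lt_min (abs_pos.2 hs) (mul_pos hk.1 hc)).trans_le (hT_ge s))
  have h_min_int : Integrable fun x ↦ min |u x| c ^ q :=
    hu.integrable_comp (φ := fun s ↦ min |s| c ^ q)
      ((continuous_abs.min continuous_const).rpow_const fun _ ↦ .inr hq.le)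
      (by simp [hc.le, hq.ne'])
  set I := ∫ x, min |u x| c ^ q
  have hI₀ : 0 ≤ I := integral_nonneg fun x ↦ by positivity
  have hI₁ : I ≤ 1 := by
    refine (integral_mono h_min_int (hu.integrable_abs_rpow hq) fun x ↦ ?_).trans hu_le
    exact Real.rpow_le_rpow (by positivity) (min_le_left _ _) hq.le
  have h_val : k ^ q * I ≤ ∫ x, |T (u x)| ^ q := by
    rw [← integral_const_mul]
    refine integral_mono (h_min_int.const_mul _) (hv.integrable_abs_rpow hq) fun x ↦ ?_
    simp only
    rw [← Real.mul_rpow hk.1.le (by positivity), mul_min_of_nonneg _ _ hk.1.le]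
    exact Real.rpow_le_rpow (le_min (mul_nonneg hk.1.le (abs_nonneg _)) (mul_pos hk.1 hc).le)
      ((min_le_min_right _ (mul_le_of_le_one_left (abs_nonneg _) hk.2.le)).trans (hT_ge _)) hq.le
  have h_grad : ∫ x, ‖fderiv ℝ (fun x ↦ T (u x)) x‖ ^ p ≤
      ∫ x in {x | |u x| ≤ c}, ‖fderiv ℝ u x‖ ^ p :=
    hu.integral_norm_fderiv_comp_le hp (hT.of_le (by exact_mod_cast le_top)) hT₀ hT_deriv
      fun s hs ↦ hT_deriv₀ s hs.le
  have h_pow : k ^ p * I ≤ (k ^ q * I) ^ (p / q) := by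
    rw [Real.mul_rpow (Real.rpow_nonneg hk.1.le _) hI₀, ← Real.rpow_mul hk.1.le,
      mul_div_cancel₀ _ hq.ne']
    gcongr
    exacts [Real.rpow_nonneg hk.1.le _,
      Real.self_le_rpow_of_le_one hI₀ hI₁ ((div_le_one hq).2 hpq)]
  calc k ^ p * (lambdaPQ p q D * I) = lambdaPQ p q D * (k ^ p * I) := by ring
    _ ≤ lambdaPQ p q D * (∫ x, |T (u x)| ^ q) ^ (p / q) :=
        mul_le_mul_of_nonneg_left (h_pow.trans (Real.rpow_le_rpow
          (mul_nonneg (Real.rpow_nonneg hk.1.le _) hI₀) h_val (by positivity))) lambdaPQ_nonneg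
    _ ≤ ∫ x, ‖fderiv ℝ (fun x ↦ T (u x)) x‖ ^ p := hv.lambdaPQ_mul_le hp.ne' hq
    _ ≤ ∫ x in {x | |u x| ≤ c}, ‖fderiv ℝ u x‖ ^ p := h_grad

lemma lambdaPQ_mul_integral_min_rpow_le (hu : IsTestFunction D u) (hp : 0 < p) (hpq : p ≤ q)
    (hu_le : ∫ x, |u x| ^ q ≤ 1) {c : ℝ} (hc : 0 ≤ c) :
    lambdaPQ p q D * ∫ x, min |u x| c ^ q ≤ ∫ x in {x | |u x| ≤ c}, ‖fderiv ℝ u x‖ ^ p := by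
  rcases hc.eq_or_lt with rfl | hc
  · have h_zero (x) : min |u x| 0 ^ q = 0 := by simp [(hp.trans_le hpq).ne']
    simp only [h_zero, integral_zero, mul_zero]
    exact integral_nonneg fun x ↦ by positivity
  have h_tendsto : Filter.Tendsto (fun k : ℝ ↦ k ^ p * (lambdaPQ p q D * ∫ x, min |u x| c ^ q))
      (𝓝[<] 1) (𝓝 (lambdaPQ p q D * ∫ x, min |u x| c ^ q)) := by
    have h_cont := (Real.continuous_rpow_const hp.le).mul_const
      (lambdaPQ p q D * ∫ x, min |u x| c ^ q)
    simpa using (h_cont.tendsto 1).mono_left nhdsWithin_le_nhds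
  refine le_of_tendsto h_tendsto ?_
  filter_upwards [Ioo_mem_nhdsLT one_pos] with k hk
  exact hu.rpow_mul_lambdaPQ_mul_integral_min_rpow_le hp hpq hu_le hc hk

end IsTestFunction

lemma exists_isTestFunction_integral_le (hp : p ≠ 0) (hq : 0 < q) (hD : IsOpen D)
    (hD₀ : D.Nonempty) {ε : ℝ} (hε : 0 < ε) :
    ∃ u, IsTestFunction D u ∧ ∫ x, |u x| ^ q = 1 ∧
      ∫ x, ‖fderiv ℝ u x‖ ^ p ≤ lambdaPQ p q D + ε := by
  have ⟨u₀, hu₀⟩ := exists_isTestFunction hD hD₀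
  have h_lt : sInf (rayleighQuot p q D '' {u | IsTestFunction D u}) < lambdaPQ p q D + ε := by
    rw [← lambdaPQ_eq_sInf_image]
    exact lt_add_of_pos_right _ hε
  obtain ⟨-, ⟨u, hu, rfl⟩, h⟩ := exists_lt_of_csInf_lt ⟨_, mem_image_of_mem _ hu₀⟩ h_lt
  obtain ⟨v, hv, hv_val, hv_grad⟩ := hu.exists_normalized hp hq
  exact ⟨v, hv, hv_val, hv_grad.trans_le h.le⟩

end DirichletEigenvalue

section SobolevInequality

lemma ltCritical_iff {N : ℕ} {p q : ℝ} (hN : N ≠ 0) (hp : 0 < p) (hq : 0 < q) :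
    ltCritical N p q ↔ p⁻¹ - (N : ℝ)⁻¹ < q⁻¹ := by
  have hN₀ : (0 : ℝ) < N := by positivity
  rcases lt_or_ge p N with h | h
  · have h_inv : (N * p / (N - p) : ℝ) = (p⁻¹ - (N : ℝ)⁻¹)⁻¹ := by
      rw [inv_sub_inv hp.ne' hN₀.ne', inv_div, mul_comm]
    rw [ltCritical, imp_iff_right h, h_inv,
      lt_inv_comm₀ hq (sub_pos.2 ((inv_lt_inv₀ hN₀ hp).2 h))]
  · exact iff_of_true (fun h' ↦ absurd h' h.not_gt)
      ((sub_nonpos.2 ((inv_le_inv₀ hp hN₀).2 h)).trans_lt (inv_pos.2 hq))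

lemma exists_pos_mul_rpow_lt (K : ℝ) {a s : ℝ} (ha : 0 < a) (hs : 0 < s) :
    ∃ v, 0 < v ∧ K * v ^ s < a := by
  have h_cont : Continuous fun v : ℝ ↦ K * v ^ s := (Real.continuous_rpow_const hs.le).const_mul K
  have h_ev : ∀ᶠ v : ℝ in 𝓝[>] 0, K * v ^ s < a :=
    nhdsWithin_le_nhds (h_cont.tendsto 0 |>.eventually_lt_const (by simpa [hs.ne'] using ha))
  exact (h_ev.and self_mem_nhdsWithin).exists.imp fun _ ↦ And.symm

lemma eLpNorm_le_add_eLpNorm_mul_measure_lt {α F : Type*} [MeasurableSpace α]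
    [NormedAddCommGroup F] {μ : Measure α} {f : α → F} (hf : StronglyMeasurable f) {s : Set α}
    (hs : Function.support f ⊆ s) {q r : ℝ} (hq : 1 ≤ q) (hqr : q ≤ r) {c : ℝ} (hc : 0 ≤ c) :
    eLpNorm f (.ofReal q) μ ≤ μ s ^ q⁻¹ * .ofReal c +
      eLpNorm f (.ofReal r) μ * μ {x | c < ‖f x‖} ^ (q⁻¹ - r⁻¹) := by
  have hq₀ : 0 < q := one_pos.trans_le hq
  set S := {x | c < ‖f x‖}
  have hS : MeasurableSet S := measurableSet_lt measurable_const hf.norm.measurable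
  have h_low : eLpNorm (Sᶜ.indicator f) (.ofReal q) μ ≤ μ s ^ q⁻¹ * .ofReal c := by
    have h_supp : Function.support (Sᶜ.indicator f) ⊆ s := by
      rw [support_indicator]
      exact inter_subset_right.trans hs
    rw [← eLpNorm_restrict_eq_of_support_subset h_supp]
    refine (eLpNorm_le_of_ae_bound (C := c) (.of_forall fun x ↦ ?_)).trans_eq ?_
    · by_cases hx : x ∈ S
      · simpa [hx] using hc
      · simpa [hx] using not_lt.1 hx
    · simp [hq₀.le]
  have h_high : eLpNorm (S.indicator f) (.ofReal q) μ ≤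
      eLpNorm f (.ofReal r) μ * μ S ^ (q⁻¹ - r⁻¹) := by
    rw [eLpNorm_indicator_eq_eLpNorm_restrict hS]
    refine (eLpNorm_le_eLpNorm_mul_rpow_measure_univ (ENNReal.ofReal_le_ofReal hqr)
      hf.aestronglyMeasurable).trans ?_
    simp only [Measure.restrict_apply_univ, one_div, ENNReal.toReal_ofReal, hq₀.le,
      hq₀.le.trans hqr]
    gcongr
    exact Measure.restrict_le_self
  calc eLpNorm f (.ofReal q) μ
      = eLpNorm (Sᶜ.indicator f + S.indicator f) (.ofReal q) μ := by
        rw [indicator_compl_add_self]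
    _ ≤ eLpNorm (Sᶜ.indicator f) (.ofReal q) μ + eLpNorm (S.indicator f) (.ofReal q) μ :=
        eLpNorm_add_le (hf.indicator hS.compl).aestronglyMeasurable
          (hf.indicator hS).aestronglyMeasurable (by simpa using ENNReal.ofReal_le_ofReal hq)
    _ ≤ _ := add_le_add h_low h_high

namespace IsTestFunction

variable {E : Type*} [NormedAddCommGroup E] [NormedSpace ℝ E] [MeasurableSpace E]
  {μ : Measure E} {D : Set E} {u : E → ℝ} {p q : ℝ}

lemma eLpNorm_fderiv_restrict (hu : IsTestFunction D u) (r : ℝ≥0∞) :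
    eLpNorm (fderiv ℝ u) r (μ.restrict D) = eLpNorm (fderiv ℝ u) r μ := by
  rw [← eLpNorm_norm, ← eLpNorm_norm (μ := μ)]
  refine eLpNorm_restrict_eq_of_support_subset fun x hx ↦ hu.tsupport_subset ?_
  exact support_fderiv_subset ℝ (norm_ne_zero_iff.1 hx)

variable [BorelSpace E]

lemma eLpNorm_eq [IsFiniteMeasureOnCompacts μ] (hu : IsTestFunction D u) (hq : 0 < q) :
    eLpNorm u (.ofReal q) μ = .ofReal ((∫ x, |u x| ^ q ∂μ) ^ q⁻¹) := by
  rw [(hu.contDiff.continuous.memLp_of_hasCompactSupport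
    hu.hasCompactSupport).eLpNorm_eq_integral_rpow_norm (by simpa using hq) (by simp),
    ENNReal.toReal_ofReal hq.le]
  rfl

lemma eLpNorm_fderiv_eq [IsFiniteMeasureOnCompacts μ] (hu : IsTestFunction D u) (hp : 0 < p) :
    eLpNorm (fderiv ℝ u) (.ofReal p) μ = .ofReal ((∫ x, ‖fderiv ℝ u x‖ ^ p ∂μ) ^ p⁻¹) := by
  rw [((hu.contDiff_one.continuous_fderiv one_ne_zero).memLp_of_hasCompactSupport
    (hu.hasCompactSupport.fderiv ℝ)).eLpNorm_eq_integral_rpow_norm (by simpa using hp) (by simp),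
    ENNReal.toReal_ofReal hp.le]

lemma eLpNorm_fderiv_le_mul [FiniteDimensional ℝ E] (hu : IsTestFunction D u) {r : ℝ}
    (hr : 0 ≤ r) (hrp : r ≤ p) :
    eLpNorm (fderiv ℝ u) (.ofReal r) μ ≤
      eLpNorm (fderiv ℝ u) (.ofReal p) μ * μ D ^ (r⁻¹ - p⁻¹) := by
  rw [← hu.eLpNorm_fderiv_restrict, ← hu.eLpNorm_fderiv_restrict (.ofReal p)]
  simpa [hr, hr.trans hrp] using eLpNorm_le_eLpNorm_mul_rpow_measure_univ (μ := μ.restrict D)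
    (ENNReal.ofReal_le_ofReal hrp)
    (hu.contDiff_one.continuous_fderiv one_ne_zero).aestronglyMeasurable

end IsTestFunction

section FiniteDimensional

variable {E : Type*} [NormedAddCommGroup E] [NormedSpace ℝ E] [FiniteDimensional ℝ E]
  [MeasurableSpace E] [BorelSpace E] (μ : Measure E) [μ.IsAddHaarMeasure] {D : Set E} {p q : ℝ}

lemma exists_eLpNorm_le_eLpNorm_fderiv (hE : 2 ≤ Module.finrank ℝ E) (hp : 1 ≤ p) (hq : 0 < q)
    (hpq : p⁻¹ - (Module.finrank ℝ E : ℝ)⁻¹ ≤ q⁻¹) (hD : Bornology.IsBounded D) :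
    ∃ C : ℝ≥0, ∀ u : E → ℝ, IsTestFunction D u →
      eLpNorm u (.ofReal q) μ ≤ C * eLpNorm (fderiv ℝ u) (.ofReal p) μ := by
  have hn : (1 : ℝ) < Module.finrank ℝ E := by exact_mod_cast hE
  set n : ℝ := (Module.finrank ℝ E : ℝ)
  have hq' : 0 < q⁻¹ := inv_pos.2 hq
  have hp₀ : 0 < p := one_pos.trans_le hp
  -- Mathlib's inequality needs an exponent in `[1, n)`; this is the smallest one that reaches `q`.
  let r : ℝ := (min 1 (q⁻¹ + n⁻¹))⁻¹
  have hr_inv : r⁻¹ = min 1 (q⁻¹ + n⁻¹) := inv_inv _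
  have hr₀ : 0 < r := by positivity
  have hr_one : 1 ≤ r := one_le_inv_iff₀.2 ⟨lt_min one_pos (by positivity), min_le_left _ _⟩
  have hrn : r < n := by
    rw [← inv_lt_inv₀ (by positivity) hr₀, hr_inv]
    exact lt_min (inv_lt_one_of_one_lt₀ hn) (lt_add_of_pos_left _ hq')
  have hrp : r ≤ p := by
    rw [← inv_le_inv₀ hp₀ hr₀, hr_inv]
    exact le_min (inv_le_one_of_one_le₀ hp) (sub_le_iff_le_add.1 hpq)
  have hD_fin : μ D ^ (r⁻¹ - p⁻¹) ≠ ∞ :=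
    ENNReal.rpow_ne_top_of_nonneg (sub_nonneg.2 (by gcongr)) hD.measure_lt_top.ne
  refine ⟨eLpNormLESNormFDerivOfLeConst ℝ μ D r.toNNReal q.toNNReal *
    (μ D ^ (r⁻¹ - p⁻¹)).toNNReal, fun u hu ↦ ?_⟩
  have h_sobolev := eLpNorm_le_eLpNorm_fderiv_of_le μ (p := r.toNNReal) (q := q.toNNReal)
    hu.contDiff_one ((subset_tsupport u).trans hu.tsupport_subset) (by simpa using hr_one)
    (Real.toNNReal_lt_natCast'.2 ⟨hrn, by positivity⟩)
    (by
      rw [NNReal.coe_inv, Real.coe_toNNReal _ hr₀.le, Real.coe_toNNReal _ hq.le, hr_inv,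
        sub_le_iff_le_add]
      exact min_le_right _ _) hD
  refine h_sobolev.trans ?_
  rw [ENNReal.coe_mul, ENNReal.coe_toNNReal hD_fin, mul_assoc, mul_comm (μ D ^ _)]
  gcongr
  exact hu.eLpNorm_fderiv_le_mul hr₀.le hrp

lemma IsTestFunction.one_le_add_of_measure_lt_le {u : E → ℝ} (hu : IsTestFunction D u)
    (hD : Bornology.IsBounded D) (hp : 0 < p) (hq : 1 ≤ q) {s : ℝ} (hs : 0 < s) (hsq : s < q⁻¹)
    {C : ℝ≥0} (hC : eLpNorm u (.ofReal s⁻¹) μ ≤ C * eLpNorm (fderiv ℝ u) (.ofReal p) μ) {A c v : ℝ}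
    (hu_val : ∫ x, |u x| ^ q ∂μ = 1) (hu_grad : ∫ x, ‖fderiv ℝ u x‖ ^ p ∂μ ≤ A) (hc : 0 ≤ c)
    (hv : 0 < v) (h : μ {x | c < |u x|} ≤ .ofReal v) :
    1 ≤ μ.real D ^ q⁻¹ * c + C * A ^ p⁻¹ * v ^ (q⁻¹ - s) := by
  have hq₀ : 0 < q := one_pos.trans_le hq
  have hqs : q ≤ s⁻¹ := (le_inv_comm₀ hq₀ hs).2 hsq.le
  have h_grad : (∫ x, ‖fderiv ℝ u x‖ ^ p ∂μ) ^ p⁻¹ ≤ A ^ p⁻¹ :=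
    Real.rpow_le_rpow (integral_nonneg fun x ↦ by positivity) hu_grad (inv_nonneg.2 hp.le)
  have hA : 0 ≤ A := (integral_nonneg fun x ↦ by positivity).trans hu_grad
  rw [← ENNReal.one_le_ofReal]
  calc (1 : ℝ≥0∞) = eLpNorm u (.ofReal q) μ := by simp [hu.eLpNorm_eq hq₀, hu_val]
    _ ≤ μ D ^ q⁻¹ * .ofReal c +
        eLpNorm u (.ofReal s⁻¹) μ * μ {x | c < |u x|} ^ (q⁻¹ - s) := by
      simpa using eLpNorm_le_add_eLpNorm_mul_measure_lt hu.contDiff.continuous.stronglyMeasurable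
        ((subset_tsupport u).trans hu.tsupport_subset) hq hqs hc
    _ ≤ .ofReal (μ.real D) ^ q⁻¹ * .ofReal c +
        .ofReal C * .ofReal (A ^ p⁻¹) * .ofReal v ^ (q⁻¹ - s) := by
      rw [ofReal_measureReal hD.measure_lt_top.ne, ENNReal.ofReal_coe_nnreal]
      gcongr
      exact hC.trans (by rw [hu.eLpNorm_fderiv_eq hp]; gcongr)
    _ = .ofReal (μ.real D ^ q⁻¹ * c + C * A ^ p⁻¹ * v ^ (q⁻¹ - s)) := by
      rw [ENNReal.ofReal_rpow_of_nonneg measureReal_nonneg (by positivity),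
        ENNReal.ofReal_rpow_of_pos hv, ENNReal.ofReal_add (by positivity) (by positivity),
        ENNReal.ofReal_mul (by positivity), ENNReal.ofReal_mul (by positivity),
        ENNReal.ofReal_mul (by positivity)]

lemma exists_pos_le_radialProfile (hE : 2 ≤ Module.finrank ℝ E) (hp : 1 ≤ p) (hq : 1 ≤ q)
    (hpq : p⁻¹ - (Module.finrank ℝ E : ℝ)⁻¹ < q⁻¹) (hD : Bornology.IsBounded D) (A : ℝ) :
    ∃ c r, 0 < c ∧ 0 < r ∧ ∀ u, IsTestFunction D u → ∫ x, |u x| ^ q ∂μ = 1 →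
      ∫ x, ‖fderiv ℝ u x‖ ^ p ∂μ ≤ A → c ≤ radialProfile μ (fun x ↦ |u x|) r := by
  have hp₀ : 0 < p := one_pos.trans_le hp
  have hq₀ : 0 < q := one_pos.trans_le hq
  have : Nontrivial E := Module.nontrivial_of_finrank_pos (R := ℝ) (two_pos.trans_le hE)
  obtain ⟨s, hs, hsq⟩ := exists_between (max_lt hpq (inv_pos.2 hq₀))
  have ⟨hps, hs₀⟩ := max_lt_iff.1 hs
  obtain ⟨C, hC⟩ := exists_eLpNorm_le_eLpNorm_fderiv μ hE hp (inv_pos.2 hs₀)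
    (hps.le.trans_eq (inv_inv s).symm) hD
  obtain ⟨c, hc, hc_lt⟩ := exists_pos_mul_rpow_lt (μ.real D ^ q⁻¹) (half_pos one_pos) one_pos
  obtain ⟨v, hv, hv_lt⟩ := exists_pos_mul_rpow_lt (C * A ^ p⁻¹) (half_pos one_pos) (sub_pos.2 hsq)
  obtain ⟨r, hr₀, hr⟩ := exists_measure_closedBall_eq μ (ENNReal.ofReal_ne_top (r := v))
  refine ⟨c, r, hc, hr₀.lt_of_ne' ?_, fun u hu hu_val hu_grad ↦ ?_⟩
  · rintro rfl
    simp [hv.not_ge, eq_comm] at hr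
  have hu_bdd : BddAbove (range fun x ↦ |u x|) :=
    hu.contDiff.continuous.abs.bddAbove_range_of_hasCompactSupport
      (hu.hasCompactSupport.comp_left abs_zero)
  refine ((lt_radialProfile_iff hu_bdd hc.le).2 ?_).le
  rw [hr]
  by_contra! h
  have h_one :=
    hu.one_le_add_of_measure_lt_le μ hD hp₀ hq hs₀ hsq (hC u hu) hu_val hu_grad hc.le hv h
  rw [Real.rpow_one] at hc_lt
  linarith

end FiniteDimensional

variable {N : ℕ} {p q : ℝ} {D : Set (EuclideanSpace ℝ (Fin N))}

lemma lambdaPQ_pos (hN : 2 ≤ N) (hp : 1 ≤ p) (hq : 0 < q) (hpq : ltCritical N p q) (hD : IsOpen D)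
    (hD₀ : D.Nonempty) (hD' : Bornology.IsBounded D) : 0 < lambdaPQ p q D := by
  have hp₀ : 0 < p := one_pos.trans_le hp
  rw [ltCritical_iff (by positivity) hp₀ hq] at hpq
  obtain ⟨C, hC⟩ := exists_eLpNorm_le_eLpNorm_fderiv (volume : Measure (EuclideanSpace ℝ (Fin N)))
    (by simpa using hN) hp hq (by simpa using hpq.le) hD'
  refine lambdaPQ_nonneg.lt_of_ne' fun h_zero ↦ ?_
  obtain ⟨ε, hε, hε_lt⟩ := exists_pos_mul_rpow_lt C one_pos (inv_pos.2 hp₀)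
  obtain ⟨u, hu, hu_val, hu_grad⟩ := exists_isTestFunction_integral_le hp₀.ne' hq hD hD₀ hε
  have h := hC u hu
  rw [hu.eLpNorm_eq hq, hu.eLpNorm_fderiv_eq hp₀, hu_val, one_rpow, ← ENNReal.ofReal_coe_nnreal,
    ← ENNReal.ofReal_mul C.coe_nonneg, ENNReal.ofReal_le_ofReal_iff (by positivity)] at h
  rw [h_zero, zero_add] at hu_grad
  refine hε_lt.not_ge (h.trans ?_)
  gcongr

lemma rayleighQuot_comp_inv_smul (p q : ℝ) (u : EuclideanSpace ℝ (Fin N) → ℝ) {t : ℝ}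
    (ht : 0 < t) :
    rayleighQuot p q (t • D) (fun x ↦ u (t⁻¹ • x)) =
      t ^ (N - p - N * (p / q)) * rayleighQuot p q D u := by
  have h_subst (g : EuclideanSpace ℝ (Fin N) → ℝ) :
      ∫ x in t • D, g (t⁻¹ • x) = t ^ (N : ℝ) * ∫ x in D, g x := by
    rw [Measure.setIntegral_comp_smul_of_pos _ _ _ (inv_pos.2 ht), inv_smul_smul₀ ht.ne',
      finrank_euclideanSpace_fin, smul_eq_mul, inv_pow, inv_inv, Real.rpow_natCast]
  have h_grad (x : EuclideanSpace ℝ (Fin N)) :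
      ‖fderiv ℝ (fun x ↦ u (t⁻¹ • x)) x‖ ^ p = t ^ (-p) * ‖fderiv ℝ u (t⁻¹ • x)‖ ^ p := by
    rw [fderiv_comp_smul, norm_smul, Real.norm_of_nonneg (inv_nonneg.2 ht.le),
      Real.mul_rpow (inv_nonneg.2 ht.le) (norm_nonneg _), Real.inv_rpow ht.le, Real.rpow_neg ht.le]
  simp only [rayleighQuot, h_grad]
  rw [h_subst fun x ↦ t ^ (-p) * ‖fderiv ℝ u x‖ ^ p, h_subst fun x ↦ |u x| ^ q, integral_const_mul,
    Real.mul_rpow (by positivity) (integral_nonneg fun x ↦ by positivity), ← Real.rpow_mul ht.le,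
    ← mul_assoc, ← Real.rpow_add ht, mul_div_mul_comm, ← Real.rpow_sub ht, ← sub_eq_add_neg]

lemma lambdaPQ_smul_le (p q : ℝ) (hD : IsOpen D) (hD₀ : D.Nonempty) {t : ℝ} (ht : 0 < t) :
    lambdaPQ p q (t • D) ≤ t ^ (N - p - N * (p / q)) * lambdaPQ p q D := by
  rw [← div_le_iff₀' (by positivity), lambdaPQ_eq_sInf_image (D := D)]
  refine le_csInf (Nonempty.image _ (exists_isTestFunction hD hD₀))
    (forall_mem_image.2 fun u hu ↦ ?_)
  rw [div_le_iff₀' (by positivity), ← rayleighQuot_comp_inv_smul p q u ht]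
  exact (IsTestFunction.comp_inv_smul hu ht.ne').lambdaPQ_le

lemma lambdaPQ_smul_lt (hN : 2 ≤ N) (hp : 1 ≤ p) (hq : 0 < q) (hpq : ltCritical N p q)
    (hD : IsOpen D) (hD₀ : D.Nonempty) (hD' : Bornology.IsBounded D) {t : ℝ} (ht : 1 < t) :
    lambdaPQ p q (t • D) < lambdaPQ p q D := by
  have hp₀ : 0 < p := one_pos.trans_le hp
  have hN₀ : (0 : ℝ) < N := by positivity
  have h_exp : N - p - N * (p / q) < 0 := by
    have h := mul_lt_mul_of_pos_left ((ltCritical_iff (by positivity) hp₀ hq).1 hpq)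
      (mul_pos hN₀ hp₀)
    field_simp at h ⊢
    linarith
  refine (lambdaPQ_smul_le p q hD hD₀ (one_pos.trans ht)).trans_lt ?_
  exact mul_lt_of_lt_one_left (lambdaPQ_pos hN hp hq hpq hD hD₀ hD')
    (Real.rpow_lt_one_of_one_lt_of_neg ht h_exp)

end SobolevInequality

section StarShaped

lemma exists_nonneg_forall_pos_mem_iff_lt {T : Set ℝ} (hT : IsOpen T) (hT_bdd : BddAbove T)
    (hT_Ioc : ∀ t ∈ T, Ioc 0 t ⊆ T) : ∃ ρ, 0 ≤ ρ ∧ ∀ t, 0 < t → (t ∈ T ↔ t < ρ) := by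
  by_cases hT₀ : (T ∩ Ioi 0).Nonempty
  · obtain ⟨t₀, ht₀, ht₀_pos⟩ := hT₀
    refine ⟨sSup T, ht₀_pos.le.trans (le_csSup hT_bdd ht₀), fun t ht ↦ ⟨fun h ↦ ?_, fun h ↦ ?_⟩⟩
    · obtain ⟨s, hts, hs⟩ := (hT.eventually_mem h).exists_gt
      exact hts.trans_le (le_csSup hT_bdd hs)
    · obtain ⟨s, hs, hts⟩ := exists_lt_of_lt_csSup ⟨t₀, ht₀⟩ h
      exact hT_Ioc s hs ⟨ht, hts.le⟩
  · exact ⟨0, le_rfl, fun t ht ↦ iff_of_false (fun h ↦ hT₀ ⟨t, h, ht⟩) ht.not_gt⟩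

variable {E : Type*} [NormedAddCommGroup E] [NormedSpace ℝ E] [FiniteDimensional ℝ E]
  [MeasurableSpace E] [BorelSpace E]

lemma measurableEmbedding_toSphere_prod :
    MeasurableEmbedding fun z : sphere (0 : E) 1 × Ioi (0 : ℝ) ↦ (z.2 : ℝ) • (z.1 : E) :=
  (MeasurableEmbedding.subtype_coe (measurableSet_singleton 0).compl).comp
    (homeomorphUnitSphereProd E).symm.measurableEmbedding

variable (μ : Measure E) [μ.IsAddHaarMeasure]

lemma measurePreserving_toSphere_prod [Nontrivial E] :
    MeasurePreserving (fun z : sphere (0 : E) 1 × Ioi (0 : ℝ) ↦ (z.2 : ℝ) • (z.1 : E))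
      (μ.toSphere.prod (.volumeIoiPow (Module.finrank ℝ E - 1))) μ := by
  have h_val : MeasurePreserving ((↑) : ({0}ᶜ : Set E) → E) (μ.comap (↑)) μ := by
    have h_restrict : μ.restrict {0}ᶜ = μ :=
      Measure.restrict_eq_self_of_ae_mem (compl_mem_ae_iff.2 (measure_singleton 0))
    simpa only [h_restrict] using
      measurePreserving_subtype_coe (μa := μ) (measurableSet_singleton (0 : E)).compl
  exact h_val.comp (μ.measurePreserving_homeomorphUnitSphereProd.symm
    (homeomorphUnitSphereProd E).toMeasurableEquiv)

variable {μ} {K : Set E} {G : E → ℝ} {ε : ℝ}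

lemma setIntegral_ball_eq_mul_integral [Nontrivial E] (hG : ∀ x y, ‖x‖ = ‖y‖ → G x = G y)
    (e : sphere (0 : E) 1) (ρ : ℝ) : ∫ x in ball 0 ρ, G x ∂μ = μ.toSphere.real univ *
      ∫ t : Ioi (0 : ℝ), (Iio ρ).indicator (fun t ↦ G (t • (e : E))) t
        ∂(.volumeIoiPow (Module.finrank ℝ E - 1)) := by
  rw [← integral_indicator measurableSet_ball,
    ← (measurePreserving_toSphere_prod μ).integral_comp measurableEmbedding_toSphere_prod,
    ← smul_eq_mul, ← integral_fun_snd]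
  congr! 2 with z
  have hz : (z.2 : ℝ) • (z.1 : E) ∈ ball 0 ρ ↔ (z.2 : ℝ) < ρ := by
    rw [mem_ball_zero_iff, norm_smul, norm_eq_of_mem_sphere, mul_one,
      norm_of_nonneg (le_of_lt z.2.2)]
  have hz_eq : G ((z.2 : ℝ) • (z.1 : E)) = G ((z.2 : ℝ) • (e : E)) :=
    hG _ _ (by simp only [norm_smul, norm_eq_of_mem_sphere])
  classical simp only [indicator_apply, mem_Iio, hz, hz_eq]

lemma setIntegral_le_of_forall_setIntegral_ball_le [Nontrivial E] (hK : IsOpen K)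
    (hK_bdd : Bornology.IsBounded K) (hK_star : ∀ x ∈ K, ∀ t ∈ Ioc (0 : ℝ) 1, t • x ∈ K)
    (hG : ∀ x y, ‖x‖ = ‖y‖ → G x = G y) (hG_int : IntegrableOn G K μ)
    (hG_ball : ∀ ρ, 0 ≤ ρ → ∫ x in ball 0 ρ, G x ∂μ ≤ ε) : ∫ x in K, G x ∂μ ≤ ε := by
  have hσ : 0 < μ.toSphere.real univ := by
    rw [Measure.toSphere_real_apply_univ]
    exact mul_pos (mod_cast Module.finrank_pos)
      (ENNReal.toReal_pos (measure_ball_pos _ _ one_pos).ne' measure_ball_lt_top.ne)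
  have h_int := ((measurePreserving_toSphere_prod μ).integrable_comp_emb
    measurableEmbedding_toSphere_prod).2 ((integrable_indicator_iff hK.measurableSet).2 hG_int)
  have h_avg : ∫ _ : sphere (0 : E) 1, ε / μ.toSphere.real univ ∂μ.toSphere = ε := by
    rw [integral_const, smul_eq_mul, mul_div_cancel₀ _ hσ.ne']
  rw [← integral_indicator hK.measurableSet,
    ← (measurePreserving_toSphere_prod μ).integral_comp measurableEmbedding_toSphere_prod,
    ← h_avg]
  refine (integral_prod _ h_int).trans_le ?_
  refine integral_mono h_int.integral_prod_left (integrable_const _) fun θ ↦ ?_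
  obtain ⟨M, hM⟩ := hK_bdd.exists_norm_le
  obtain ⟨ρ, hρ, hρ_iff⟩ := exists_nonneg_forall_pos_mem_iff_lt (T := {t : ℝ | t • (θ : E) ∈ K})
    (hK.preimage (by fun_prop))
    ⟨M, fun t ht ↦ (le_abs_self t).trans (by simpa [norm_smul] using hM _ ht)⟩
    fun t ht s hs ↦ by
      have ht₀ := hs.1.trans_le hs.2
      simpa [smul_smul, ht₀.ne'] using
        hK_star _ ht (s / t) ⟨div_pos hs.1 ht₀, (div_le_one ht₀).2 hs.2⟩
  calc ∫ t : Ioi (0 : ℝ), K.indicator G ((t : ℝ) • (θ : E)) ∂_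
      = ∫ t : Ioi (0 : ℝ), (Iio ρ).indicator (fun t ↦ G (t • (θ : E))) t ∂_ := by
        congr! 2 with t
        have ht : (t : ℝ) • (θ : E) ∈ K ↔ (t : ℝ) < ρ := hρ_iff t t.2
        classical simp only [indicator_apply, mem_Iio, ht]
    _ ≤ ε / μ.toSphere.real univ := by
        rw [le_div_iff₀' hσ, ← setIntegral_ball_eq_mul_integral hG]
        exact hG_ball ρ hρ

end StarShaped

section RadialProfileOfNearMinimizer

lemma norm_fderiv_comp_norm_eq {E : Type*} [NormedAddCommGroup E] [InnerProductSpace ℝ E]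
    (f : ℝ → ℝ) {x y : E} (hxy : ‖x‖ = ‖y‖) :
    ‖fderiv ℝ (fun x : E ↦ f ‖x‖) x‖ = ‖fderiv ℝ (fun x : E ↦ f ‖x‖) y‖ := by
  let L : E ≃ₗᵢ[ℝ] E := (Submodule.span ℝ {x - y})ᗮ.reflection
  have hL : L x = y := Submodule.reflection_sub hxy
  have h_comp : (fun x : E ↦ f ‖x‖) ∘ L.toContinuousLinearEquiv = fun x ↦ f ‖x‖ :=
    funext fun z ↦ congrArg f (L.norm_map z)
  have h_fderiv :=
    L.toContinuousLinearEquiv.comp_right_fderiv (f := fun x : E ↦ f ‖x‖) (x := x)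
  rw [h_comp] at h_fderiv
  rw [h_fderiv, ← hL]
  exact ContinuousLinearMap.opNorm_comp_linearIsometryEquiv _ L

variable {E : Type*} [NormedAddCommGroup E] [MeasurableSpace E]

section Antitone

variable [BorelSpace E] {μ : Measure E} {f : ℝ → ℝ}

lemma setIntegral_ball_norm_fderiv_antitone [NormedSpace ℝ E] (hf : Antitone f) {p : ℝ} (hp : p ≠ 0)
    (ρ : ℝ) : ∫ x in ball 0 ρ, ‖fderiv ℝ (fun x : E ↦ f ‖x‖) x‖ ^ p ∂μ =
      ∫ x in {x | f ρ < f ‖x‖}, ‖fderiv ℝ (fun x : E ↦ f ‖x‖) x‖ ^ p ∂μ := by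
  refine setIntegral_eq_of_subset_of_forall_sdiff_eq_zero measurableSet_ball
    (fun x hx ↦ mem_ball_zero_iff.2 (hf.reflect_lt hx)) ?_
  rintro x ⟨hx, hx'⟩
  have h_min : IsLocalMin (fun x : E ↦ f ‖x‖) x := by
    filter_upwards [isOpen_ball.mem_nhds hx] with y hy
    exact (not_lt.1 hx').trans (hf (mem_ball_zero_iff.1 hy).le)
  simp [h_min.fderiv_eq_zero, hp]

lemma integral_min_rpow_add_setIntegral_ball (hf : Antitone f) (hf₀ : ∀ r, 0 ≤ f r) {q : ℝ}
    (hq : 0 ≤ q) (hf_int : Integrable (fun x : E ↦ f ‖x‖ ^ q) μ) (ρ : ℝ) :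
    ∫ x : E, min (f ‖x‖) (f ρ) ^ q ∂μ + ∫ x in ball 0 ρ, f ‖x‖ ^ q ∂μ =
      f ρ ^ q * μ.real (ball (0 : E) ρ) + ∫ x : E, f ‖x‖ ^ q ∂μ := by
  have h_int : Integrable (fun x : E ↦ min (f ‖x‖) (f ρ) ^ q) μ := by
    refine hf_int.mono ?_ (.of_forall fun x ↦ ?_)
    · exact (((hf.measurable.comp measurable_norm).min measurable_const).pow_const
        q).aestronglyMeasurable
    · have h_min : 0 ≤ min (f ‖x‖) (f ρ) := le_min (hf₀ _) (hf₀ _)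
      rw [norm_of_nonneg (rpow_nonneg h_min q), norm_of_nonneg (rpow_nonneg (hf₀ _) q)]
      exact rpow_le_rpow h_min (min_le_left _ _) hq
  have h_ball : ∫ x in ball (0 : E) ρ, min (f ‖x‖) (f ρ) ^ q ∂μ =
      f ρ ^ q * μ.real (ball (0 : E) ρ) := by
    rw [mul_comm, ← smul_eq_mul, ← setIntegral_const]
    refine setIntegral_congr_fun measurableSet_ball fun x hx ↦ ?_
    simp only [min_eq_right (hf (mem_ball_zero_iff.1 hx).le)]
  have h_compl : ∫ x in (ball (0 : E) ρ)ᶜ, min (f ‖x‖) (f ρ) ^ q ∂μ =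
      ∫ x in (ball (0 : E) ρ)ᶜ, f ‖x‖ ^ q ∂μ := by
    refine setIntegral_congr_fun measurableSet_ball.compl fun x hx ↦ ?_
    rw [mem_compl_iff, mem_ball_zero_iff, not_lt] at hx
    simp only [min_eq_left (hf hx)]
  rw [← integral_add_compl measurableSet_ball h_int, h_ball, h_compl,
    ← integral_add_compl measurableSet_ball hf_int]
  ring

end Antitone

section TestFunction

variable {N : ℕ} [NeZero N] {p q ε R : ℝ} {D : Set (EuclideanSpace ℝ (Fin N))}
  {u : EuclideanSpace ℝ (Fin N) → ℝ}

lemma IsTestFunction.integral_radialProfile_rpow (hu : IsTestFunction D u) (hq : 0 < q) :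
    ∫ x : EuclideanSpace ℝ (Fin N), radialProfile volume (fun x ↦ |u x|) ‖x‖ ^ q =
      ∫ x, |u x| ^ q :=
  have ⟨_, hK⟩ := exists_lipschitzWith_abs hu.contDiff_one hu.hasCompactSupport
  integral_comp_radialProfile_norm hK (hu.hasCompactSupport.comp_left abs_zero)
    (fun _ ↦ abs_nonneg _) (continuous_id.rpow_const fun _ ↦ .inr hq.le)
    (monotoneOn_rpow_Ici_of_exponent_nonneg hq.le) (zero_rpow hq.ne')

lemma IsTestFunction.setIntegral_ball_norm_fderiv_radialProfile_add_le (hu : IsTestFunction D u)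
    (hp : 1 < p) (hpq : p ≤ q) (hu_int : ∫ x, |u x| ^ q = 1)
    (hu_le : ∫ x, ‖fderiv ℝ u x‖ ^ p ≤ lambdaPQ p q D + ε) {f : ℝ → ℝ}
    (hf : f = radialProfile volume fun x ↦ |u x|) (ρ : ℝ) :
    (∫ x in ball 0 ρ, ‖fderiv ℝ (fun x : EuclideanSpace ℝ (Fin N) ↦ f ‖x‖) x‖ ^ p) +
        lambdaPQ p q D * f ρ ^ q * volume.real (ball (0 : EuclideanSpace ℝ (Fin N)) ρ) ≤
      lambdaPQ p q D * (∫ x in ball (0 : EuclideanSpace ℝ (Fin N)) ρ, f ‖x‖ ^ q) + ε := by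
  have hp₀ : 0 < p := by linarith
  have hq : 0 < q := hp₀.trans_le hpq
  have hu_cpt := hu.hasCompactSupport
  have hw : HasCompactSupport fun x ↦ |u x| := hu_cpt.comp_left abs_zero
  obtain ⟨K, hK⟩ := exists_lipschitzWith_abs hu.contDiff_one hu_cpt
  have hf_anti : Antitone f :=
    hf ▸ antitone_radialProfile (hK.continuous.bddAbove_range_of_hasCompactSupport hw)
  have hf₀ (r : ℝ) : 0 ≤ f r := hf ▸ radialProfile_nonneg r
  have hf_int : ∫ x : EuclideanSpace ℝ (Fin N), f ‖x‖ ^ q = 1 := by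
    rw [hf, hu.integral_radialProfile_rpow hq, hu_int]
  have h_min : ∫ x : EuclideanSpace ℝ (Fin N), min (f ‖x‖) (f ρ) ^ q =
      ∫ x, min |u x| (f ρ) ^ q := by
    nth_rw 1 [hf]
    exact integral_comp_radialProfile_norm hK hw (fun _ ↦ abs_nonneg _)
      (φ := fun s ↦ min s (f ρ) ^ q)
      ((continuous_id.min continuous_const).rpow_const fun _ ↦ .inr hq.le)
      (fun s hs t _ hst ↦ rpow_le_rpow (le_min hs (hf₀ ρ)) (min_le_min_right _ hst) hq.le)
      (by simp [hf₀ ρ, hq.ne'])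
  have h_split : (∫ x in {x | f ρ < |u x|}, ‖fderiv ℝ u x‖ ^ p) +
      ∫ x in {x | |u x| ≤ f ρ}, ‖fderiv ℝ u x‖ ^ p = ∫ x, ‖fderiv ℝ u x‖ ^ p := by
    have h_compl : {x | |u x| ≤ f ρ} = {x | f ρ < |u x|}ᶜ := by ext x; simp
    rw [h_compl]
    exact integral_add_compl (measurableSet_lt measurable_const hK.continuous.measurable)
      (integrable_norm_fderiv_rpow hp₀ hu.contDiff_one hu_cpt)
  have h_high : ∫ x in {x | f ρ < f ‖x‖},
      ‖fderiv ℝ (fun x : EuclideanSpace ℝ (Fin N) ↦ f ‖x‖) x‖ ^ p ≤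
        ∫ x in {x | f ρ < |u x|}, ‖fderiv ℝ u x‖ ^ p := by
    simpa only [← hf] using integral_superlevel_norm_fderiv_radialProfile_abs_le (μ := volume) hp
      hu.contDiff_one hu_cpt (hf₀ ρ)
  have h_low := hu.lambdaPQ_mul_integral_min_rpow_le hp₀ hpq hu_int.le (hf₀ ρ)
  have h_ball := integral_min_rpow_add_setIntegral_ball hf_anti hf₀ hq.le
    (.of_integral_ne_zero (hf_int ▸ one_ne_zero)) ρ
  rw [← h_min, eq_sub_of_add_eq h_ball, hf_int] at h_low
  rw [setIntegral_ball_norm_fderiv_antitone hf_anti hp₀.ne']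
  linarith

end TestFunction

/-- `f` is the profile of a radial function `x ↦ f ‖x‖` on `E`, normalized in `L^q`, supported in
the closed ball of radius `R`, and satisfying up to `ε` the energy inequalities on centered balls
which rearranging a minimizer of the Rayleigh quotient, of minimal value `lam`, would give. -/
structure IsRadialQuasiMinimizer [NormedSpace ℝ E] (μ : Measure E) (p q lam ε R : ℝ) (f : ℝ → ℝ) :
    Prop where
  exists_lipschitzWith : ∃ K, LipschitzWith K f
  nonneg (r : ℝ) : 0 ≤ f r
  antitone : Antitone f
  eq_zero_of_le {r : ℝ} (hr : R ≤ r) : f r = 0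
  integral_rpow : ∫ x : E, f ‖x‖ ^ q ∂μ = 1
  setIntegral_ball_add_le (ρ : ℝ) :
    ∫ x in ball 0 ρ, ‖fderiv ℝ (fun x : E ↦ f ‖x‖) x‖ ^ p ∂μ +
      lam * f ρ ^ q * μ.real (ball (0 : E) ρ) ≤ lam * ∫ x in ball 0 ρ, f ‖x‖ ^ q ∂μ + ε

lemma IsTestFunction.isRadialQuasiMinimizer {N : ℕ} [NeZero N] {p q ε R : ℝ}
    {D : Set (EuclideanSpace ℝ (Fin N))} {u : EuclideanSpace ℝ (Fin N) → ℝ}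
    (hu : IsTestFunction D u) (hp : 1 < p) (hpq : p ≤ q) (hu_int : ∫ x, |u x| ^ q = 1)
    (hu_le : ∫ x, ‖fderiv ℝ u x‖ ^ p ≤ lambdaPQ p q D + ε)
    (hR : volume D ≤ volume (closedBall (0 : EuclideanSpace ℝ (Fin N)) R)) :
    IsRadialQuasiMinimizer (volume : Measure (EuclideanSpace ℝ (Fin N))) p q (lambdaPQ p q D) ε R
      (radialProfile volume fun x ↦ |u x|) := by
  have hw : HasCompactSupport fun x ↦ |u x| := hu.hasCompactSupport.comp_left abs_zero
  obtain ⟨K, hK⟩ := exists_lipschitzWith_abs hu.contDiff_one hu.hasCompactSupport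
  have hw_bdd := hK.continuous.bddAbove_range_of_hasCompactSupport hw
  refine ⟨⟨K, lipschitzWith_radialProfile hK hw⟩, radialProfile_nonneg,
    antitone_radialProfile hw_bdd, fun {r} hr ↦ ?_,
    (hu.integral_radialProfile_rpow (by linarith)).trans hu_int,
    hu.setIntegral_ball_norm_fderiv_radialProfile_add_le hp hpq hu_int hu_le rfl⟩
  refine (radialProfile_nonneg r).antisymm' (not_lt.1 fun h ↦ ?_)
  refine ((lt_radialProfile_iff hw_bdd le_rfl).1 h).not_ge ?_
  calc volume {x | 0 < |u x|} ≤ volume D := measure_mono fun x hx ↦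
        hu.tsupport_subset (subset_tsupport _ (abs_pos.1 hx))
    _ ≤ volume (closedBall 0 r) := hR.trans (measure_mono (closedBall_subset_closedBall hr))

variable [NormedSpace ℝ E] [FiniteDimensional ℝ E] [BorelSpace E] {μ : Measure E}
  [μ.IsAddHaarMeasure] {s : Set E}

lemma measureReal_sdiff_smul_inter_ball (hs : MeasurableSet s) (hs_half : (2⁻¹ : ℝ) • s ⊆ s)
    (r : ℝ) : μ.real ((s \ (2⁻¹ : ℝ) • s) ∩ ball 0 r) = μ.real (s ∩ ball 0 r) -
      (2 ^ Module.finrank ℝ E)⁻¹ * μ.real (s ∩ ball 0 (2 * r)) := by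
  have h_smul : (2⁻¹ : ℝ) • s ∩ ball 0 r = (2⁻¹ : ℝ) • (s ∩ ball 0 (2 * r)) := by
    rw [smul_set_inter₀ (by norm_num), _root_.smul_ball (by norm_num), smul_zero]
    norm_num [← mul_assoc]
  have h_sdiff : (s \ (2⁻¹ : ℝ) • s) ∩ ball 0 r =
      (s ∩ ball 0 r) \ ((2⁻¹ : ℝ) • s ∩ ball 0 r) := by
    ext x
    simp only [mem_inter_iff, mem_sdiff]
    tauto
  rw [h_sdiff, measureReal_sdiff (inter_subset_inter_left _ hs_half)
    ((hs.const_smul₀ _).inter measurableSet_ball), h_smul, measureReal_def μ (_ • _),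
    Measure.addHaar_smul, ENNReal.toReal_mul, ENNReal.toReal_ofReal (by positivity),
    ← measureReal_def]
  simp

end RadialProfileOfNearMinimizer

namespace IsRadialQuasiMinimizer

variable {E : Type*} [NormedAddCommGroup E] [InnerProductSpace ℝ E] [MeasurableSpace E]
  {μ : Measure E} {p q lam ε R : ℝ} {f : ℝ → ℝ} {s : Set E}

lemma exists_lipschitzWith_norm (hf : IsRadialQuasiMinimizer μ p q lam ε R f) :
    ∃ K, LipschitzWith K fun x : E ↦ f ‖x‖ :=
  have ⟨K, hK⟩ := hf.exists_lipschitzWith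
  ⟨K * 1, hK.comp lipschitzWith_one_norm⟩

lemma continuous_norm (hf : IsRadialQuasiMinimizer μ p q lam ε R f) :
    Continuous fun x : E ↦ f ‖x‖ :=
  hf.exists_lipschitzWith_norm.choose_spec.continuous

lemma integrable_rpow (hf : IsRadialQuasiMinimizer μ p q lam ε R f) :
    Integrable (fun x : E ↦ f ‖x‖ ^ q) μ :=
  .of_integral_ne_zero (hf.integral_rpow ▸ one_ne_zero)

variable [FiniteDimensional ℝ E] [BorelSpace E]

lemma integrableOn_norm_fderiv_rpow (hf : IsRadialQuasiMinimizer μ p q lam ε R f) (hp : 0 ≤ p)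
    (hs : μ s ≠ ∞) : IntegrableOn (fun x ↦ ‖fderiv ℝ (fun x : E ↦ f ‖x‖) x‖ ^ p) s μ :=
  have ⟨_, hK⟩ := hf.exists_lipschitzWith_norm
  _root_.integrableOn_norm_fderiv_rpow hp hK hs

variable [μ.IsAddHaarMeasure]

lemma setIntegral_norm_fderiv_sub_eq (hf : IsRadialQuasiMinimizer μ p q lam ε R f) (hp : 0 ≤ p)
    (hs : MeasurableSet s) (hs_bdd : Bornology.IsBounded s) (hs_half : (2⁻¹ : ℝ) • s ⊆ s)
    (r κ : ℝ) :
    let G : E → ℝ := fun x ↦ ‖fderiv ℝ (fun x : E ↦ f ‖x‖) x‖ ^ p - lam * f ‖x‖ ^ q +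
      κ * ((ball (0 : E) r).indicator 1 x -
        (2 ^ Module.finrank ℝ E)⁻¹ * (ball (0 : E) (2 * r)).indicator 1 x)
    IntegrableOn G s μ ∧ ∫ x in s, G x ∂μ =
      (∫ x in s, ‖fderiv ℝ (fun x : E ↦ f ‖x‖) x‖ ^ p ∂μ) - lam * (∫ x in s, f ‖x‖ ^ q ∂μ) +
        κ * μ.real ((s \ (2⁻¹ : ℝ) • s) ∩ ball 0 r) := by
  have hs_fin := hs_bdd.measure_lt_top (μ := μ) |>.ne
  have h_ind (t : ℝ) : IntegrableOn ((ball (0 : E) t).indicator (1 : E → ℝ)) s μ :=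
    (integrableOn_const (C := (1 : ℝ)) hs_fin).indicator measurableSet_ball
  have h_ind_eq (t : ℝ) : ∫ x in s, (ball (0 : E) t).indicator (1 : E → ℝ) x ∂μ =
      μ.real (s ∩ ball 0 t) := by
    simp [setIntegral_indicator measurableSet_ball]
  have h_grad := hf.integrableOn_norm_fderiv_rpow hp hs_fin
  have h_rpow := (hf.integrable_rpow.integrableOn (s := s)).const_mul lam
  have h_gap := ((h_ind r).sub ((h_ind (2 * r)).const_mul
    (2 ^ Module.finrank ℝ E)⁻¹)).const_mul κ
  refine ⟨(h_grad.sub h_rpow).add h_gap, ?_⟩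
  rw [measureReal_sdiff_smul_inter_ball hs hs_half, ← h_ind_eq, ← h_ind_eq, ← integral_const_mul,
    ← integral_const_mul, ← integral_sub h_grad h_rpow,
    ← integral_sub (h_ind r) ((h_ind (2 * r)).const_mul _), ← integral_const_mul]
  exact integral_add (h_grad.sub h_rpow) h_gap

/- The energy inequality on `ball 0 ρ` has the slack `lam * f ρ ^ q * μ (ball 0 ρ)`, which allows
adding to the integrand a radial function whose integral over a star-shaped set detects that the
set is not a cone near `0`. -/
lemma setIntegral_norm_fderiv_add_le [Nontrivial E] (hf : IsRadialQuasiMinimizer μ p q lam ε R f)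
    (hp : 0 ≤ p) (hq : 0 ≤ q) (hlam : 0 ≤ lam) {K : Set E} (hK : IsOpen K)
    (hK_bdd : Bornology.IsBounded K) (hK_star : ∀ x ∈ K, ∀ t ∈ Ioc (0 : ℝ) 1, t • x ∈ K) (r : ℝ) :
    (∫ x in K, ‖fderiv ℝ (fun x : E ↦ f ‖x‖) x‖ ^ p ∂μ) +
        lam * f (2 * r) ^ q * μ.real ((K \ (2⁻¹ : ℝ) • K) ∩ ball 0 r) ≤
      lam * (∫ x in K, f ‖x‖ ^ q ∂μ) + ε := by
  have hK_half : (2⁻¹ : ℝ) • K ⊆ K :=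
    smul_set_subset_iff.2 fun x hx ↦ hK_star x hx _ (by norm_num)
  obtain ⟨h_int, h_eq⟩ := hf.setIntegral_norm_fderiv_sub_eq hp hK.measurableSet hK_bdd hK_half r
    (lam * f (2 * r) ^ q)
  have h_le := setIntegral_le_of_forall_setIntegral_ball_le (ε := ε) hK hK_bdd hK_star ?_ h_int ?_
  · rw [h_eq] at h_le
    linarith
  · intro x y hxy
    simp only [norm_fderiv_comp_norm_eq f hxy, hxy, indicator, mem_ball_zero_iff, Pi.one_apply]
  · intro ρ hρ
    have h_smul : (2⁻¹ : ℝ) • ball (0 : E) ρ = ball 0 (2⁻¹ * ρ) := by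
      rw [_root_.smul_ball (by norm_num), smul_zero]
      norm_num
    rw [(hf.setIntegral_norm_fderiv_sub_eq hp measurableSet_ball isBounded_ball
      (h_smul ▸ ball_subset_ball (by linarith)) r _).2, h_smul]
    have h_ball := hf.setIntegral_ball_add_le ρ
    suffices lam * f (2 * r) ^ q * μ.real ((ball 0 ρ \ ball 0 (2⁻¹ * ρ)) ∩ ball 0 r) ≤
        lam * f ρ ^ q * μ.real (ball 0 ρ) by linarith
    have h_nonneg (t : ℝ) : 0 ≤ f t ^ q := rpow_nonneg (hf.nonneg t) q
    rcases le_total ρ (2 * r) with h | h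
    · gcongr ?_ * ?_ ^ q * ?_
      · exact mul_nonneg hlam (h_nonneg ρ)
      · exact hf.nonneg _
      · exact hf.antitone h
      · exact measureReal_mono (inter_subset_left.trans sdiff_subset) measure_ball_lt_top.ne
    · have h_empty : (ball 0 ρ \ ball 0 (2⁻¹ * ρ)) ∩ ball (0 : E) r = ∅ :=
        disjoint_iff_inter_eq_empty.1 <| disjoint_sdiff_left.mono_right <|
          ball_subset_ball (by linarith)
      rw [h_empty, measureReal_empty, mul_zero]
      exact mul_nonneg (mul_nonneg hlam (h_nonneg ρ)) measureReal_nonneg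

end IsRadialQuasiMinimizer

section TwoBumps

lemma sum_mul_rpow_le_rpow_div {ι : Type*} (s : Finset ι) {p q : ℝ} (hp : 0 < p) (hpq : p ≤ q)
    {w a : ι → ℝ} (hw : ∀ i, 0 ≤ w i) (hw_sum : ∑ i ∈ s, w i ≤ 1) (ha : ∀ i, 0 ≤ a i) :
    ∑ i ∈ s, w i * a i ^ p ≤ (∑ i ∈ s, w i * a i ^ q) ^ (p / q) := by
  have h_holder := Real.inner_le_weight_mul_Lp_of_nonneg s ((one_le_div hp).2 hpq) w
    (fun i ↦ a i ^ p) hw fun i ↦ rpow_nonneg (ha i) p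
  simp only [← rpow_mul (ha _), mul_div_cancel₀ _ hp.ne', inv_div] at h_holder
  exact h_holder.trans <| mul_le_of_le_one_left
    (rpow_nonneg (Finset.sum_nonneg fun i _ ↦ mul_nonneg (hw i) (rpow_nonneg (ha i) q)) _)
    (rpow_le_one (Finset.sum_nonneg fun i _ ↦ hw i) hw_sum
      (sub_nonneg.2 (div_le_one_of_le₀ hpq (hp.le.trans hpq))))

section DisjointSupport

variable {E : Type*} {q : ℝ} {u w : E → ℝ}

lemma abs_sub_rpow_eq_add (hq : q ≠ 0) (hu : ∀ x, 0 ≤ u x) (hw : ∀ x, 0 ≤ w x)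
    (huw : ∀ x, u x = 0 ∨ w x = 0) (x : E) : |u x - w x| ^ q = u x ^ q + w x ^ q := by
  rcases huw x with h | h <;> simp [h, zero_rpow hq, abs_of_nonneg (hu x), abs_of_nonneg (hw x)]

lemma abs_sub_rpow_sub_two_mul_eq_sub (hq : 1 < q) (hu : ∀ x, 0 ≤ u x) (hw : ∀ x, 0 ≤ w x)
    (huw : ∀ x, u x = 0 ∨ w x = 0) (x : E) :
    |u x - w x| ^ (q - 2) * (u x - w x) = u x ^ (q - 1) - w x ^ (q - 1) := by
  have h_pow {t : ℝ} (ht : 0 ≤ t) : t ^ (q - 2) * t = t ^ (q - 1) := by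
    rw [← rpow_add_one' ht (by linarith)]
    ring_nf
  have h_zero : (0 : ℝ) ^ (q - 1) = 0 := zero_rpow (by linarith)
  rcases huw x with h | h <;>
    simp [h, h_zero, abs_of_nonneg (hu x), abs_of_nonneg (hw x), h_pow (hu x), h_pow (hw x)]

variable [NormedAddCommGroup E] [NormedSpace ℝ E]

lemma norm_fderiv_sub_rpow_eq_add {p : ℝ} (hp : p ≠ 0) (hu : ∀ x, 0 ≤ u x) (hw : ∀ x, 0 ≤ w x)
    (huw : ∀ x, u x = 0 ∨ w x = 0) {x : E} (hux : DifferentiableAt ℝ u x)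
    (hwx : DifferentiableAt ℝ w x) : ‖fderiv ℝ (fun y ↦ u y - w y) x‖ ^ p =
      ‖fderiv ℝ u x‖ ^ p + ‖fderiv ℝ w x‖ ^ p := by
  have h_min {v : E → ℝ} (hv : ∀ y, 0 ≤ v y) (hvx : v x = 0) : fderiv ℝ v x = 0 :=
    IsLocalMin.fderiv_eq_zero (.of_forall fun y ↦ hvx ▸ hv y)
  rw [fderiv_fun_sub hux hwx]
  rcases huw x with h | h
  · simp [h_min hu h, hp]
  · simp [h_min hw h, hp]

end DisjointSupport

lemma integrableOn_of_continuous_of_isBounded {E : Type*} [MetricSpace E] [ProperSpace E]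
    [MeasurableSpace E] [OpensMeasurableSpace E] {μ : Measure E} [IsFiniteMeasureOnCompacts μ]
    {f : E → ℝ} {s : Set E} (hf : Continuous f) (hs : Bornology.IsBounded s) :
    IntegrableOn f s μ :=
  (hf.continuousOn.integrableOn_compact hs.isCompact_closure).mono_set subset_closure

variable {N : ℕ} {p q : ℝ} {Ω : Set (EuclideanSpace ℝ (Fin N))}

lemma muPQ_nonneg : 0 ≤ muPQ p q Ω :=
  Real.sInf_nonneg fun _ ⟨_, _, _, _, _, hR⟩ ↦ hR ▸ rayleighQuot_nonneg

lemma muPQ_le_rayleighQuot {v : EuclideanSpace ℝ (Fin N) → ℝ} {K : ℝ≥0}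
    (hv : LipschitzOnWith K v (closure Ω)) (hv_ne : ∃ x ∈ Ω, v x ≠ 0)
    (hv_int : ∫ x in Ω, |v x| ^ (q - 2) * v x = 0) : muPQ p q Ω ≤ rayleighQuot p q Ω v :=
  csInf_le ⟨0, fun _ ⟨_, _, _, _, _, hR⟩ ↦ hR ▸ rayleighQuot_nonneg⟩ ⟨v, K, hv, hv_ne, hv_int, rfl⟩

lemma muPQ_mul_rpow_le (hp : 0 < p) (hq : 1 < q) (hΩ : Bornology.IsBounded Ω)
    {u w : EuclideanSpace ℝ (Fin N) → ℝ} {Ku Kw : ℝ≥0} (hu_lip : LipschitzWith Ku u)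
    (hw_lip : LipschitzWith Kw w) (hu : ∀ x, 0 ≤ u x) (hw : ∀ x, 0 ≤ w x)
    (huw : ∀ x, u x = 0 ∨ w x = 0)
    (h_eq : ∫ x in Ω, u x ^ (q - 1) = ∫ x in Ω, w x ^ (q - 1))
    (h_ne : ∫ x in Ω, u x ^ (q - 1) ≠ 0) :
    muPQ p q Ω * ((∫ x in Ω, u x ^ q) + ∫ x in Ω, w x ^ q) ^ (p / q) ≤
      (∫ x in Ω, ‖fderiv ℝ u x‖ ^ p) + ∫ x in Ω, ‖fderiv ℝ w x‖ ^ p := by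
  have h_int {v : EuclideanSpace ℝ (Fin N) → ℝ} {K : ℝ≥0} (hv : LipschitzWith K v) {s : ℝ}
      (hs : 0 ≤ s) : IntegrableOn (fun x ↦ v x ^ s) Ω :=
    integrableOn_of_continuous_of_isBounded (hv.continuous.rpow_const fun _ ↦ .inr hs) hΩ
  have h_grad {v : EuclideanSpace ℝ (Fin N) → ℝ} {K : ℝ≥0} (hv : LipschitzWith K v) :
      IntegrableOn (fun x ↦ ‖fderiv ℝ v x‖ ^ p) Ω :=
    integrableOn_norm_fderiv_rpow hp.le hv hΩ.measure_lt_top.ne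
  have hq₁ : 0 ≤ q - 1 := by linarith
  have hq₀ : 0 < q := by linarith
  have h_ne_zero : ∃ x ∈ Ω, u x - w x ≠ 0 := by
    by_contra! h
    refine h_ne (setIntegral_eq_zero_of_forall_eq_zero fun x hx ↦ ?_)
    have hx_eq : u x = w x := sub_eq_zero.1 (h x hx)
    have hx_zero : u x = 0 := (huw x).elim id hx_eq.trans
    rw [hx_zero, zero_rpow (by linarith)]
  have h_orth : ∫ x in Ω, |u x - w x| ^ (q - 2) * (u x - w x) = 0 := by
    simp_rw [abs_sub_rpow_sub_two_mul_eq_sub hq hu hw huw]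
    rw [integral_sub (h_int hu_lip hq₁) (h_int hw_lip hq₁), h_eq, sub_self]
  have h_le := muPQ_le_rayleighQuot (p := p) (hu_lip.sub hw_lip).lipschitzOnWith h_ne_zero h_orth
  have h_diff : ∫ x in Ω, ‖fderiv ℝ (fun y ↦ u y - w y) x‖ ^ p =
      (∫ x in Ω, ‖fderiv ℝ u x‖ ^ p) + ∫ x in Ω, ‖fderiv ℝ w x‖ ^ p := by
    rw [← integral_add (h_grad hu_lip) (h_grad hw_lip)]
    refine integral_congr_ae (ae_restrict_of_ae ?_)
    filter_upwards [hu_lip.ae_differentiableAt, hw_lip.ae_differentiableAt] with x hux hwx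
    exact norm_fderiv_sub_rpow_eq_add hp.ne' hu hw huw hux hwx
  simp_rw [rayleighQuot, abs_sub_rpow_eq_add hq₀.ne' hu hw huw] at h_le
  rw [h_diff, integral_add (h_int hu_lip hq₀.le) (h_int hw_lip hq₀.le)] at h_le
  refine mul_le_of_le_div₀ (by positivity) (rpow_nonneg (add_nonneg ?_ ?_) _) h_le
  · exact integral_nonneg fun x ↦ rpow_nonneg (hu x) q
  · exact integral_nonneg fun x ↦ rpow_nonneg (hw x) q

end TwoBumps

section Diametral

section Translate

variable {E : Type*} [NormedAddCommGroup E] {Ω : Set E} {a x₀ x₁ : E}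

lemma isBounded_preimage_add (hΩ : Bornology.IsBounded Ω) (a : E) :
    Bornology.IsBounded ((· + a) ⁻¹' Ω) :=
  (isometry_add_right a).antilipschitz.isBounded_preimage hΩ

lemma setIntegral_comp_sub [MeasurableSpace E] [BorelSpace E] [SecondCountableTopology E]
    {μ : Measure E} [μ.IsAddRightInvariant] (G : E → ℝ) (a : E) :
    ∫ x in Ω, G (x - a) ∂μ = ∫ x in (· + a) ⁻¹' Ω, G x ∂μ := by
  rw [← (measurePreserving_add_right μ a).setIntegral_preimage_emb (measurableEmbedding_addRight a)]
  simp only [add_sub_cancel_right]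

lemma smul_mem_preimage_add [NormedSpace ℝ E] (hΩ : IsOpen Ω) (hΩ_conv : Convex ℝ Ω)
    (ha : a ∈ closure Ω) :
    ∀ x ∈ (· + a) ⁻¹' Ω, ∀ t ∈ Ioc (0 : ℝ) 1, t • x ∈ (· + a) ⁻¹' Ω := fun x hx t ht ↦ by
  have h : (1 - t) • a + t • (x + a) ∈ interior Ω :=
    hΩ_conv.combo_closure_interior_mem_interior ha (hΩ.interior_eq.symm ▸ hx)
      (sub_nonneg.2 ht.2) ht.1 (sub_add_cancel 1 t)
  have h_eq : (1 - t) • a + t • (x + a) = t • x + a := by module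
  rwa [hΩ.interior_eq, h_eq] at h

lemma measureReal_preimage_add_inter_ball_pos [MeasurableSpace E] {μ : Measure E}
    [μ.IsOpenPosMeasure] [IsFiniteMeasureOnCompacts μ] [ProperSpace E] (hΩ : IsOpen Ω)
    (ha : a ∈ closure Ω) {r : ℝ} (hr : 0 < r) :
    0 < μ.real ((· + a) ⁻¹' Ω ∩ ball 0 r) := by
  obtain ⟨x, hx, hxr⟩ := Metric.mem_closure_iff.1 ha r hr
  have h_open : IsOpen ((· + a) ⁻¹' Ω ∩ ball 0 r) :=
    (hΩ.preimage (continuous_add_const a)).inter isOpen_ball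
  refine ENNReal.toReal_pos (h_open.measure_pos μ ⟨x - a, by simpa using hx, ?_⟩).ne'
    (measure_ne_top_of_subset inter_subset_right measure_ball_lt_top.ne)
  rwa [mem_ball_zero_iff, ← dist_eq_norm, dist_comm]

-- By the parallelogram law: if `y + x₀` and `y + x₁` lie in `Ω`, then `y ± (x₀ - x₁)` have norm
-- at most `‖x₀ - x₁‖`.
lemma preimage_add_inter_preimage_add_subset [InnerProductSpace ℝ E]
    (hΩ : Bornology.IsBounded Ω) (hx₀ : x₀ ∈ closure Ω) (hx₁ : x₁ ∈ closure Ω)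
    (hd : dist x₀ x₁ = diam Ω) : (· + x₀) ⁻¹' Ω ∩ (· + x₁) ⁻¹' Ω ⊆ {0} := fun y ⟨hy₀, hy₁⟩ ↦ by
  have h_dist {x z : E} (hx : x ∈ Ω) (hz : z ∈ closure Ω) : ‖x - z‖ ≤ ‖x₀ - x₁‖ := by
    rw [← dist_eq_norm, ← dist_eq_norm, hd, ← diam_closure]
    exact dist_le_diam_of_mem hΩ.closure (subset_closure hx) hz
  have h_plus : ‖y + (x₀ - x₁)‖ ≤ ‖x₀ - x₁‖ := add_sub_assoc y x₀ x₁ ▸ h_dist hy₀ hx₁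
  have h_minus : ‖y - (x₀ - x₁)‖ ≤ ‖x₀ - x₁‖ :=
    sub_sub_eq_add_sub y x₀ x₁ ▸ h_dist hy₁ hx₀
  have h_law := parallelogram_law_with_norm ℝ y (x₀ - x₁)
  have h_sq : ‖y‖ * ‖y‖ ≤ 0 := by
    linarith [mul_self_le_mul_self (norm_nonneg _) h_plus,
      mul_self_le_mul_self (norm_nonneg _) h_minus]
  exact norm_eq_zero.1 (mul_self_eq_zero.1 (h_sq.antisymm (mul_self_nonneg _)))

lemma norm_fderiv_const_mul_comp_sub_rpow [NormedSpace ℝ E] {p b : ℝ} (g : E → ℝ) (hb : 0 ≤ b)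
    (a x : E) : ‖fderiv ℝ (fun x ↦ b * g (x - a)) x‖ ^ p = b ^ p * ‖fderiv ℝ g (x - a)‖ ^ p := by
  have h_smul := congr_fun (fderiv_const_smul_field (𝕜 := ℝ) (f := fun x ↦ g (x - a)) b) x
  rw [Pi.smul_apply, fderiv_comp_sub] at h_smul
  rw [← mul_rpow hb (norm_nonneg _), ← Real.norm_of_nonneg hb, ← norm_smul, Real.norm_of_nonneg hb,
    ← h_smul]
  rfl

end Translate

namespace IsRadialQuasiMinimizer

section InnerProductSpace

variable {E : Type*} [NormedAddCommGroup E] [InnerProductSpace ℝ E] [MeasurableSpace E]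
  {μ : Measure E} {p q lam ε R : ℝ} {f : ℝ → ℝ}

lemma eq_zero_or_eq_zero_of_dist_eq {d : ℝ} (hf : IsRadialQuasiMinimizer μ p q lam ε (d / 2) f)
    {x₀ x₁ : E} (hd : dist x₀ x₁ = d) (x : E) : f ‖x - x₀‖ = 0 ∨ f ‖x - x₁‖ = 0 := by
  have h_tri := dist_triangle_left x₀ x₁ x
  rw [hd, dist_eq_norm, dist_eq_norm] at h_tri
  exact (le_total (d / 2) ‖x - x₀‖).imp hf.eq_zero_of_le fun h ↦ hf.eq_zero_of_le (by linarith)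

lemma setIntegral_rpow_le_one (hf : IsRadialQuasiMinimizer μ p q lam ε R f) (s : Set E) :
    ∫ x in s, f ‖x‖ ^ q ∂μ ≤ 1 :=
  (setIntegral_le_integral hf.integrable_rpow
    (.of_forall fun _ ↦ rpow_nonneg (hf.nonneg _) q)).trans_eq hf.integral_rpow

variable [FiniteDimensional ℝ E] [BorelSpace E]

lemma integrableOn_rpow [IsFiniteMeasureOnCompacts μ]
    (hf : IsRadialQuasiMinimizer μ p q lam ε R f) {s : Set E} (hs : Bornology.IsBounded s) {t : ℝ}
    (ht : 0 ≤ t) : IntegrableOn (fun x ↦ f ‖x‖ ^ t) s μ :=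
  integrableOn_of_continuous_of_isBounded (hf.continuous_norm.rpow_const fun _ ↦ .inr ht) hs

lemma mul_measureReal_le_setIntegral_rpow [IsFiniteMeasureOnCompacts μ]
    (hf : IsRadialQuasiMinimizer μ p q lam ε R f) {s : Set E} (hs : MeasurableSet s)
    (hs_bdd : Bornology.IsBounded s) {t c r : ℝ} (ht : 0 ≤ t) (hc : 0 ≤ c) (hcr : c ≤ f r) :
    c ^ t * μ.real (s ∩ ball 0 r) ≤ ∫ x in s, f ‖x‖ ^ t ∂μ := by
  have h_int := hf.integrableOn_rpow hs_bdd ht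
  calc c ^ t * μ.real (s ∩ ball 0 r) = ∫ _ in s ∩ ball 0 r, c ^ t ∂μ := by
        rw [setIntegral_const, smul_eq_mul, mul_comm]
    _ ≤ ∫ x in s ∩ ball 0 r, f ‖x‖ ^ t ∂μ := by
        refine setIntegral_mono_on (integrableOn_const ?_) (h_int.mono_set inter_subset_left)
          (hs.inter measurableSet_ball) fun x hx ↦ ?_
        · exact (hs_bdd.subset inter_subset_left).measure_lt_top.ne
        · exact rpow_le_rpow hc (hcr.trans (hf.antitone (mem_ball_zero_iff.1 hx.2).le)) ht
    _ ≤ ∫ x in s, f ‖x‖ ^ t ∂μ := setIntegral_mono_set h_int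
        (.of_forall fun _ ↦ rpow_nonneg (hf.nonneg _) t) (.of_forall inter_subset_left)

lemma setIntegral_rpow_sub_one_le [IsFiniteMeasureOnCompacts μ]
    (hf : IsRadialQuasiMinimizer μ p q lam ε R f) (hq : 1 ≤ q) {s : Set E}
    (hs : Bornology.IsBounded s) : ∫ x in s, f ‖x‖ ^ (q - 1) ∂μ ≤ μ.real s + 1 := by
  have h_one : IntegrableOn (fun _ ↦ (1 : ℝ)) s μ := integrableOn_const hs.measure_lt_top.ne
  have h_le (t : ℝ) (ht : 0 ≤ t) : t ^ (q - 1) ≤ 1 + t ^ q := by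
    rcases le_total t 1 with h | h
    · exact (rpow_le_one ht h (sub_nonneg.2 hq)).trans
        (le_add_of_nonneg_right (rpow_nonneg ht q))
    · exact (rpow_le_rpow_of_exponent_le h (sub_le_self q zero_le_one)).trans
        (le_add_of_nonneg_left zero_le_one)
  calc ∫ x in s, f ‖x‖ ^ (q - 1) ∂μ ≤ ∫ x in s, (1 + f ‖x‖ ^ q) ∂μ :=
        integral_mono (hf.integrableOn_rpow hs (sub_nonneg.2 hq))
          (h_one.add hf.integrable_rpow.integrableOn) fun _ ↦ h_le _ (hf.nonneg _)
    _ = μ.real s + ∫ x in s, f ‖x‖ ^ q ∂μ := by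
        rw [integral_add h_one hf.integrable_rpow.integrableOn, setIntegral_const, smul_eq_mul,
          mul_one]
    _ ≤ μ.real s + 1 := by grw [hf.setIntegral_rpow_le_one]

lemma setIntegral_preimage_add_rpow_add_le_one [Nontrivial E] [μ.IsAddHaarMeasure]
    (hf : IsRadialQuasiMinimizer μ p q lam ε R f) {Ω : Set E} (hΩ : MeasurableSet Ω)
    (hΩ_bdd : Bornology.IsBounded Ω) {x₀ x₁ : E} (hx₀ : x₀ ∈ closure Ω) (hx₁ : x₁ ∈ closure Ω)
    (hd : dist x₀ x₁ = diam Ω) :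
    (∫ x in (· + x₀) ⁻¹' Ω, f ‖x‖ ^ q ∂μ) + ∫ x in (· + x₁) ⁻¹' Ω, f ‖x‖ ^ q ∂μ ≤ 1 := by
  have h_disj : AEDisjoint μ ((· + x₀) ⁻¹' Ω) ((· + x₁) ⁻¹' Ω) :=
    measure_mono_null (preimage_add_inter_preimage_add_subset hΩ_bdd hx₀ hx₁ hd)
      (measure_singleton 0)
  rw [← setIntegral_union₀ h_disj (measurable_add_const x₁ hΩ).nullMeasurableSet
    hf.integrable_rpow.integrableOn hf.integrable_rpow.integrableOn]
  exact hf.setIntegral_rpow_le_one _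

end InnerProductSpace

section EuclideanSpace

variable {N : ℕ} [NeZero N] {p q lam ε b : ℝ} {f : ℝ → ℝ} {Ω : Set (EuclideanSpace ℝ (Fin N))}
  {x₀ x₁ : EuclideanSpace ℝ (Fin N)}

-- The competitor for `muPQ` is `f ‖x - x₀‖ - b * f ‖x - x₁‖`.
lemma muPQ_mul_le (hf : IsRadialQuasiMinimizer (E := EuclideanSpace ℝ (Fin N)) volume p q lam ε
      (diam Ω / 2) f) (hp : 1 < p) (hpq : p ≤ q) (hΩ : MeasurableSet Ω)
    (hΩ_bdd : Bornology.IsBounded Ω) (hx₀ : x₀ ∈ closure Ω) (hx₁ : x₁ ∈ closure Ω)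
    (hd : dist x₀ x₁ = diam Ω) (hb : 0 ≤ b) (hb_eq : ∫ x in (· + x₀) ⁻¹' Ω, f ‖x‖ ^ (q - 1) =
      b ^ (q - 1) * ∫ x in (· + x₁) ⁻¹' Ω, f ‖x‖ ^ (q - 1))
    (h_ne : ∫ x in (· + x₀) ⁻¹' Ω, f ‖x‖ ^ (q - 1) ≠ 0) :
    muPQ p q Ω * ((∫ x in (· + x₀) ⁻¹' Ω, f ‖x‖ ^ q) +
        b ^ p * ∫ x in (· + x₁) ⁻¹' Ω, f ‖x‖ ^ q) ≤
      (∫ x in (· + x₀) ⁻¹' Ω, ‖fderiv ℝ (fun x ↦ f ‖x‖) x‖ ^ p) +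
        b ^ p * ∫ x in (· + x₁) ⁻¹' Ω, ‖fderiv ℝ (fun x ↦ f ‖x‖) x‖ ^ p := by
  obtain ⟨K, hK⟩ := hf.exists_lipschitzWith_norm
  have h_trans (a : EuclideanSpace ℝ (Fin N)) : LipschitzWith (K * 1) fun x ↦ f ‖x - a‖ :=
    hK.comp (IsometryEquiv.subRight a).isometry.lipschitz
  have h_smul : LipschitzWith (‖b‖₊ * (K * 1)) fun x ↦ b * f ‖x - x₁‖ :=
    (lipschitzWith_smul b).comp (h_trans x₁)
  have h_rpow (t : ℝ) : ∫ x in Ω, (b * f ‖x - x₁‖) ^ t =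
      b ^ t * ∫ x in (· + x₁) ⁻¹' Ω, f ‖x‖ ^ t := by
    simp_rw [mul_rpow hb (hf.nonneg _)]
    rw [integral_const_mul, setIntegral_comp_sub fun x ↦ f ‖x‖ ^ t]
  have h_le := muPQ_mul_rpow_le (p := p) (q := q) (by linarith) (by linarith) hΩ_bdd (h_trans x₀)
    h_smul (fun _ ↦ hf.nonneg _) (fun _ ↦ mul_nonneg hb (hf.nonneg _)) fun x ↦
      (hf.eq_zero_or_eq_zero_of_dist_eq hd x).imp_right (mul_eq_zero_of_right b)
  simp_rw [h_rpow, fderiv_comp_sub (f := fun x ↦ f ‖x‖),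
    norm_fderiv_const_mul_comp_sub_rpow (fun x ↦ f ‖x‖) hb] at h_le
  rw [integral_const_mul, setIntegral_comp_sub fun x ↦ f ‖x‖ ^ (q - 1),
    setIntegral_comp_sub fun x ↦ f ‖x‖ ^ q,
    setIntegral_comp_sub fun x ↦ ‖fderiv ℝ (fun x ↦ f ‖x‖) x‖ ^ p,
    setIntegral_comp_sub fun x ↦ ‖fderiv ℝ (fun x ↦ f ‖x‖) x‖ ^ p] at h_le
  have h_mass := hf.setIntegral_preimage_add_rpow_add_le_one hΩ hΩ_bdd hx₀ hx₁ hd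
  have h_nonneg (a : EuclideanSpace ℝ (Fin N)) : 0 ≤ ∫ x in (· + a) ⁻¹' Ω, f ‖x‖ ^ q :=
    integral_nonneg fun _ ↦ rpow_nonneg (hf.nonneg _) q
  have h_jensen := sum_mul_rpow_le_rpow_div Finset.univ (by linarith) hpq
    (w := ![∫ x in (· + x₀) ⁻¹' Ω, f ‖x‖ ^ q, ∫ x in (· + x₁) ⁻¹' Ω, f ‖x‖ ^ q]) (a := ![1, b])
    (by simp [Fin.forall_fin_two, h_nonneg]) (by simpa using h_mass)
    (by simp [Fin.forall_fin_two, hb])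
  simp only [Fin.sum_univ_two, Matrix.cons_val_zero, Matrix.cons_val_one, one_rpow, mul_one]
    at h_jensen
  rw [mul_comm _ (b ^ p), mul_comm _ (b ^ q)] at h_jensen
  exact (mul_le_mul_of_nonneg_left h_jensen muPQ_nonneg).trans (h_le hb_eq h_ne)

end EuclideanSpace

end IsRadialQuasiMinimizer

end Diametral

section DiametralEstimate

lemma le_div_sub_div_of_mul_le {a x y z S T : ℝ} (hS : 0 < S) (hST : S ≤ a) (haT : a ≤ T)
    (hy : 0 ≤ y) (hz : 0 ≤ z) (h : x * a ≤ y - z) : x ≤ y / S - z / T := by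
  have ha : 0 < a := hS.trans_le hST
  calc x ≤ (y - z) / a := (le_div_iff₀ ha).2 h
    _ = y / a - z / a := sub_div y z a
    _ ≤ y / S - z / T := by gcongr

namespace IsRadialQuasiMinimizer

variable {N : ℕ} {p q lam c ρ : ℝ} {Ω : Set (EuclideanSpace ℝ (Fin N))}
  {x₀ x₁ : EuclideanSpace ℝ (Fin N)}

lemma exists_forall_exists_rpow_mul_eq (hq : 1 < q) (hΩ : IsOpen Ω)
    (hΩ_bdd : Bornology.IsBounded Ω) (x₀ : EuclideanSpace ℝ (Fin N)) (hx₁ : x₁ ∈ closure Ω)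
    (hc : 0 < c) (hρ : 0 < ρ) :
    ∃ M, 0 ≤ M ∧ ∀ {ε R f},
      IsRadialQuasiMinimizer (E := EuclideanSpace ℝ (Fin N)) volume p q lam ε R f → c ≤ f ρ →
      ∃ b, 0 ≤ b ∧ b ≤ M ∧ ∫ x in (· + x₀) ⁻¹' Ω, f ‖x‖ ^ (q - 1) =
        b ^ (q - 1) * ∫ x in (· + x₁) ⁻¹' Ω, f ‖x‖ ^ (q - 1) := by
  have hq₁ : 0 < q - 1 := sub_pos.2 hq
  have h_pos : 0 < c ^ (q - 1) * volume.real ((· + x₁) ⁻¹' Ω ∩ ball 0 ρ) :=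
    mul_pos (rpow_pos_of_pos hc _) (measureReal_preimage_add_inter_ball_pos hΩ hx₁ hρ)
  refine ⟨((volume.real ((· + x₀) ⁻¹' Ω) + 1) /
    (c ^ (q - 1) * volume.real ((· + x₁) ⁻¹' Ω ∩ ball 0 ρ))) ^ (q - 1)⁻¹, by positivity,
    fun {ε R f} hf hcf ↦ ?_⟩
  have h_le := hf.mul_measureReal_le_setIntegral_rpow
    (hΩ.preimage (continuous_add_const x₁)).measurableSet (isBounded_preimage_add hΩ_bdd x₁)
    hq₁.le hc.le hcf
  have h_nonneg : 0 ≤ ∫ x in (· + x₀) ⁻¹' Ω, f ‖x‖ ^ (q - 1) :=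
    integral_nonneg fun _ ↦ rpow_nonneg (hf.nonneg _) _
  have h_div := div_nonneg h_nonneg (h_pos.le.trans h_le)
  refine ⟨((∫ x in (· + x₀) ⁻¹' Ω, f ‖x‖ ^ (q - 1)) / ∫ x in (· + x₁) ⁻¹' Ω, f ‖x‖ ^ (q - 1)) ^
    (q - 1)⁻¹, rpow_nonneg h_div _, ?_, ?_⟩
  · gcongr
    exact hf.setIntegral_rpow_sub_one_le hq.le (isBounded_preimage_add hΩ_bdd x₀)
  · rw [rpow_inv_rpow h_div hq₁.ne', div_mul_cancel₀ _ (h_pos.trans_le h_le).ne']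

variable [NeZero N]

lemma muPQ_sub_mul_add_le {ε b : ℝ} {f : ℝ → ℝ}
    (hf : IsRadialQuasiMinimizer (E := EuclideanSpace ℝ (Fin N)) volume p q lam ε (diam Ω / 2) f)
    (hp : 1 < p) (hpq : p ≤ q) (hlam : 0 ≤ lam) (hΩ : IsOpen Ω) (hΩ_bdd : Bornology.IsBounded Ω)
    (hΩ_conv : Convex ℝ Ω) (hx₀ : x₀ ∈ closure Ω) (hx₁ : x₁ ∈ closure Ω)
    (hd : dist x₀ x₁ = diam Ω) (hb : 0 ≤ b) (hb_eq : ∫ x in (· + x₀) ⁻¹' Ω, f ‖x‖ ^ (q - 1) =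
      b ^ (q - 1) * ∫ x in (· + x₁) ⁻¹' Ω, f ‖x‖ ^ (q - 1))
    (h_ne : ∫ x in (· + x₀) ⁻¹' Ω, f ‖x‖ ^ (q - 1) ≠ 0) (r : ℝ) :
    (muPQ p q Ω - lam) * ((∫ x in (· + x₀) ⁻¹' Ω, f ‖x‖ ^ q) +
        b ^ p * ∫ x in (· + x₁) ⁻¹' Ω, f ‖x‖ ^ q) +
      lam * f (2 * r) ^ q * volume.real
        (((· + x₀) ⁻¹' Ω \ (2⁻¹ : ℝ) • (· + x₀) ⁻¹' Ω) ∩ ball 0 r) ≤ (1 + b ^ p) * ε := by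
  have h_star {a : EuclideanSpace ℝ (Fin N)} (ha : a ∈ closure Ω) :=
    hf.setIntegral_norm_fderiv_add_le (by linarith) (by linarith) hlam
      (hΩ.preimage (continuous_add_const a)) (isBounded_preimage_add hΩ_bdd a)
      (smul_mem_preimage_add hΩ hΩ_conv ha) r
  have h_mu := hf.muPQ_mul_le hp hpq hΩ.measurableSet hΩ_bdd hx₀ hx₁ hd hb hb_eq h_ne
  have h_gap : 0 ≤ lam * f (2 * r) ^ q * volume.real
      (((· + x₁) ⁻¹' Ω \ (2⁻¹ : ℝ) • (· + x₁) ⁻¹' Ω) ∩ ball 0 r) :=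
    mul_nonneg (mul_nonneg hlam (rpow_nonneg (hf.nonneg _) q)) measureReal_nonneg
  have h_star₁ := mul_le_mul_of_nonneg_left ((le_add_of_nonneg_right h_gap).trans (h_star hx₁))
    (rpow_nonneg hb p)
  linarith [h_star hx₀]

lemma exists_forall_muPQ_add_mul_measureReal_le (hp : 1 < p) (hpq : p ≤ q) (hlam : 0 < lam)
    (hΩ : IsOpen Ω) (hΩ_bdd : Bornology.IsBounded Ω) (hΩ_conv : Convex ℝ Ω)
    (hx₀ : x₀ ∈ closure Ω) (hx₁ : x₁ ∈ closure Ω) (hd : dist x₀ x₁ = diam Ω) (hc : 0 < c)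
    (hρ : 0 < ρ) :
    ∃ A κ, 0 < κ ∧ ∀ {ε f}, 0 ≤ ε →
      IsRadialQuasiMinimizer (E := EuclideanSpace ℝ (Fin N)) volume p q lam ε (diam Ω / 2) f →
      c ≤ f ρ → muPQ p q Ω + κ * volume.real
        (((· + x₀) ⁻¹' Ω \ (2⁻¹ : ℝ) • (· + x₀) ⁻¹' Ω) ∩ ball 0 (2⁻¹ * ρ)) ≤ lam + A * ε := by
  have hq : 1 < q := hp.trans_le hpq
  obtain ⟨M, hM₀, hM⟩ :=
    exists_forall_exists_rpow_mul_eq (p := p) (lam := lam) hq hΩ hΩ_bdd x₀ hx₁ hc hρ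
  have h_pos (t : ℝ) : 0 < c ^ t * volume.real ((· + x₀) ⁻¹' Ω ∩ ball 0 ρ) :=
    mul_pos (rpow_pos_of_pos hc t) (measureReal_preimage_add_inter_ball_pos hΩ hx₀ hρ)
  refine ⟨(1 + M ^ p) / (c ^ q * volume.real ((· + x₀) ⁻¹' Ω ∩ ball 0 ρ)),
    lam * c ^ q / (1 + M ^ p), by positivity, fun {ε f} hε hf hcf ↦ ?_⟩
  obtain ⟨b, hb, hbM, hb_eq⟩ := hM hf hcf
  have hK := (hΩ.preimage (continuous_add_const x₀)).measurableSet
  have hK_bdd := isBounded_preimage_add hΩ_bdd x₀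
  have h_mass := hf.mul_measureReal_le_setIntegral_rpow hK hK_bdd (sub_nonneg.2 hq.le) hc.le hcf
  have h_le := hf.muPQ_sub_mul_add_le hp hpq hlam.le hΩ hΩ_bdd hΩ_conv hx₀ hx₁ hd hb hb_eq
    ((h_pos _).trans_le h_mass).ne' (2⁻¹ * ρ)
  rw [mul_inv_cancel_left₀ two_ne_zero] at h_le
  set a := c ^ q * volume.real ((· + x₀) ⁻¹' Ω ∩ ball 0 ρ)
  set γ := volume.real (((· + x₀) ⁻¹' Ω \ (2⁻¹ : ℝ) • (· + x₀) ⁻¹' Ω) ∩ ball 0 (2⁻¹ * ρ))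
  set T := (∫ x in (· + x₀) ⁻¹' Ω, f ‖x‖ ^ q) + b ^ p * ∫ x in (· + x₁) ⁻¹' Ω, f ‖x‖ ^ q
  have hbM_rpow : b ^ p ≤ M ^ p := by gcongr
  have h_nonneg : 0 ≤ b ^ p * ∫ x in (· + x₁) ⁻¹' Ω, f ‖x‖ ^ q :=
    mul_nonneg (rpow_nonneg hb p) (integral_nonneg fun _ ↦ rpow_nonneg (hf.nonneg _) q)
  have haT : a ≤ T := le_add_of_le_of_nonneg
    (hf.mul_measureReal_le_setIntegral_rpow hK hK_bdd (by linarith) hc.le hcf) h_nonneg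
  have hTM : T ≤ 1 + M ^ p := add_le_add (hf.setIntegral_rpow_le_one _) <|
    (mul_le_of_le_one_right (rpow_nonneg hb p) (hf.setIntegral_rpow_le_one _)).trans hbM_rpow
  have ha : 0 < a := h_pos q
  have h_slack : (muPQ p q Ω - lam) * T ≤ (1 + M ^ p) * ε - lam * c ^ q * γ := by
    grw [hcf, ← hbM_rpow]
    linarith
  have h_div := le_div_sub_div_of_mul_le ha haT hTM (by positivity) (by positivity) h_slack
  rw [div_mul_eq_mul_div, div_mul_eq_mul_div]
  linarith

end IsRadialQuasiMinimizer

variable {N : ℕ} {p q : ℝ} {Ω D : Set (EuclideanSpace ℝ (Fin N))}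
  {x₀ x₁ : EuclideanSpace ℝ (Fin N)}

lemma exists_muPQ_add_mul_measureReal_le_lambdaPQ (hN : 2 ≤ N) (hp : 1 < p) (hpq : p ≤ q)
    (hq : ltCritical N p q) (hΩ : IsOpen Ω) (hΩ_bdd : Bornology.IsBounded Ω)
    (hΩ_conv : Convex ℝ Ω) (hx₀ : x₀ ∈ closure Ω) (hx₁ : x₁ ∈ closure Ω)
    (hd : dist x₀ x₁ = diam Ω) (hD : IsOpen D) (hD_ne : D.Nonempty)
    (hD_bdd : Bornology.IsBounded D)
    (hD_vol : volume D ≤ volume (closedBall (0 : EuclideanSpace ℝ (Fin N)) (diam Ω / 2))) :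
    ∃ r κ, 0 < r ∧ 0 < κ ∧ muPQ p q Ω + κ * volume.real
      (((· + x₀) ⁻¹' Ω \ (2⁻¹ : ℝ) • (· + x₀) ⁻¹' Ω) ∩ ball 0 r) ≤ lambdaPQ p q D := by
  have : NeZero N := ⟨by positivity⟩
  have hp₀ : 0 < p := one_pos.trans hp
  have hq₁ : 1 < q := hp.trans_le hpq
  have hq₀ : 0 < q := one_pos.trans hq₁
  obtain ⟨c, ρ, hc, hρ, h_profile⟩ := exists_pos_le_radialProfile
    (volume : Measure (EuclideanSpace ℝ (Fin N))) (by simpa using hN) hp.le hq₁.le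
    (by simpa using (ltCritical_iff (NeZero.ne N) hp₀ hq₀).1 hq) hD_bdd (lambdaPQ p q D + 1)
  obtain ⟨A, κ, hκ, h_le⟩ :=
    IsRadialQuasiMinimizer.exists_forall_muPQ_add_mul_measureReal_le hp hpq
      (lambdaPQ_pos hN hp.le hq₀ hq hD hD_ne hD_bdd) hΩ hΩ_bdd hΩ_conv hx₀ hx₁ hd hc hρ
  refine ⟨2⁻¹ * ρ, κ, by positivity, hκ, ?_⟩
  have h_lim : Filter.Tendsto (fun ε ↦ lambdaPQ p q D + A * ε) (𝓝[>] 0) (𝓝 (lambdaPQ p q D)) :=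
    tendsto_nhdsWithin_of_tendsto_nhds <| by
      simpa using (continuous_const.add (continuous_const_mul A)).tendsto
        (f := fun ε ↦ lambdaPQ p q D + A * ε) 0
  refine ge_of_tendsto h_lim ?_
  filter_upwards [Ioc_mem_nhdsGT zero_lt_one] with ε hε
  obtain ⟨u, hu, hu_int, hu_le⟩ := exists_isTestFunction_integral_le hp₀.ne' hq₀ hD hD_ne hε.1
  exact h_le hε.1.le (hu.isRadialQuasiMinimizer hp hpq hu_int hu_le hD_vol)
    (h_profile u hu hu_int (by linarith [hε.2]))

end DiametralEstimate

section IsodiametricInequality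

lemma exists_dist_eq_diam_of_isCompact {X : Type*} [PseudoMetricSpace X] {s : Set X}
    (hs : IsCompact s) (hs_ne : s.Nonempty) : ∃ x ∈ s, ∃ y ∈ s, dist x y = diam s := by
  obtain ⟨z, hz, hz_max⟩ := (hs.prod hs).exists_isMaxOn (hs_ne.prod hs_ne)
    continuous_dist.continuousOn
  refine ⟨z.1, hz.1, z.2, hz.2,
    (dist_le_diam_of_mem hs.isBounded hz.1 hz.2).antisymm ?_⟩
  exact diam_le_of_forall_dist_le dist_nonneg fun x hx y hy ↦ hz_max (mk_mem_prod hx hy)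

lemma sub_subset_closedBall_diam {E : Type*} [SeminormedAddCommGroup E] {s : Set E}
    (hs : Bornology.IsBounded s) : s - s ⊆ closedBall 0 (diam s) := by
  rintro _ ⟨x, hx, y, hy, rfl⟩
  rw [mem_closedBall_zero_iff, ← dist_eq_norm]
  exact dist_le_diam_of_mem hs hx hy

variable {E : Type*} [NormedAddCommGroup E] [NormedSpace ℝ E] [FiniteDimensional ℝ E]
  [Nontrivial E] [MeasurableSpace E] [BorelSpace E] (μ : Measure E) [μ.IsAddHaarMeasure] {s : Set E}

lemma two_mul_measure_rpow_inv_le (hs : IsCompact s) :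
    2 * μ s ^ (Module.finrank ℝ E : ℝ)⁻¹ ≤ μ (s - s) ^ (Module.finrank ℝ E : ℝ)⁻¹ := by
  rcases s.eq_empty_or_nonempty with rfl | hs_ne
  · simp [Module.finrank_pos]
  have h := brunn_minkowski μ hs.measurableSet hs.neg.measurableSet (hs.add hs.neg).measurableSet
    hs_ne hs_ne.neg
  rwa [Measure.measure_neg, ← two_mul, ← sub_eq_add_neg] at h

lemma measure_closedBall_rpow_inv_eq_two_mul {d : ℝ} (hd : 0 ≤ d) :
    μ (closedBall 0 d) ^ (Module.finrank ℝ E : ℝ)⁻¹ =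
      2 * μ (closedBall 0 (d / 2)) ^ (Module.finrank ℝ E : ℝ)⁻¹ := by
  rw [measure_closedBall_rpow_inv μ hd, measure_closedBall_rpow_inv μ (by positivity), ← mul_assoc,
    ← ENNReal.ofReal_ofNat 2, ← ENNReal.ofReal_mul zero_le_two, mul_div_cancel₀ d two_ne_zero]

theorem measure_le_measure_closedBall_diam (hs : IsCompact s) :
    μ s ≤ μ (closedBall 0 (diam s / 2)) := by
  have hn : 0 < (Module.finrank ℝ E : ℝ)⁻¹ := inv_pos.2 (Nat.cast_pos.2 Module.finrank_pos)
  rw [← ENNReal.rpow_le_rpow_iff hn,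
    ← ENNReal.mul_le_mul_iff_right two_ne_zero ENNReal.ofNat_ne_top,
    ← measure_closedBall_rpow_inv_eq_two_mul μ diam_nonneg]
  grw [two_mul_measure_rpow_inv_le μ hs, sub_subset_closedBall_diam hs.isBounded]

lemma closedBall_diam_subset_sub (hs : IsCompact s) (hs_diam : 0 < diam s)
    (h : μ (closedBall 0 (diam s / 2)) ≤ μ s) : closedBall 0 (diam s) ⊆ s - s := by
  have hn : 0 < (Module.finrank ℝ E : ℝ)⁻¹ := inv_pos.2 (Nat.cast_pos.2 Module.finrank_pos)
  have h_sub : IsCompact (s - s) := sub_eq_add_neg s s ▸ hs.add hs.neg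
  have h_le : μ (closedBall 0 (diam s)) ≤ μ (s - s) := by
    rw [← ENNReal.rpow_le_rpow_iff hn, measure_closedBall_rpow_inv_eq_two_mul μ diam_nonneg]
    grw [h, two_mul_measure_rpow_inv_le μ hs]
  have h_null : μ (ball 0 (diam s) \ (s - s)) = 0 :=
    measure_mono_null (sdiff_subset_sdiff_left ball_subset_closedBall) <|
      ae_le_set.1 (ae_eq_of_subset_of_measure_ge (sub_subset_closedBall_diam hs.isBounded) h_le
        h_sub.measurableSet.nullMeasurableSet measure_closedBall_lt_top.ne).symm.le
  rw [← closure_ball 0 hs_diam.ne']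
  exact closure_minimal (sdiff_eq_empty.1 <|
    (isOpen_ball.sdiff h_sub.isClosed).eq_empty_of_measure_zero h_null) h_sub.isClosed

end IsodiametricInequality

section NonConical

variable {E : Type*} [NormedAddCommGroup E] [InnerProductSpace ℝ E] {ν : E}

lemma eq_norm_smul_of_norm_le_inner {x : E} (hν : ‖ν‖ = 1) (h : ‖x‖ ≤ inner ℝ ν x) :
    x = ‖x‖ • ν := by
  have h_eq : inner ℝ ν x = ‖ν‖ * ‖x‖ :=
    (real_inner_le_norm ν x).antisymm (by rwa [hν, one_mul])
  rw [inner_eq_norm_mul_iff_real, hν, one_smul] at h_eq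
  exact h_eq.symm

lemma norm_add_smul_sq (hν : ‖ν‖ = 1) (x : E) (r : ℝ) :
    ‖x + r • ν‖ ^ 2 = ‖x‖ ^ 2 + 2 * r * inner ℝ ν x + r ^ 2 := by
  rw [norm_add_sq_real, inner_smul_right, real_inner_comm, norm_smul, hν, mul_one, norm_eq_abs,
    sq_abs, mul_assoc]

lemma mem_ball_neg_smul_iff (hν : ‖ν‖ = 1) {r : ℝ} (hr : 0 ≤ r) {x : E} :
    x ∈ ball (-(r • ν)) r ↔ ‖x‖ ^ 2 + 2 * r * inner ℝ ν x < 0 := by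
  rw [mem_ball, dist_eq_norm, sub_neg_eq_add, ← sq_lt_sq₀ (norm_nonneg _) hr, norm_add_smul_sq hν,
    add_lt_iff_neg_right]

lemma mem_closedBall_neg_smul_iff (hν : ‖ν‖ = 1) {r : ℝ} (hr : 0 ≤ r) {x : E} :
    x ∈ closedBall (-(r • ν)) r ↔ ‖x‖ ^ 2 + 2 * r * inner ℝ ν x ≤ 0 := by
  rw [mem_closedBall, dist_eq_norm, sub_neg_eq_add, ← sq_le_sq₀ (norm_nonneg _) hr,
    norm_add_smul_sq hν, add_le_iff_nonpos_left]

lemma exists_norm_eq_one_inner_eq [FiniteDimensional ℝ E] (hE : 2 ≤ Module.finrank ℝ E)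
    (hν : ‖ν‖ = 1) {a : ℝ} (ha : a ∈ Icc (-1) 1) : ∃ e : E, ‖e‖ = 1 ∧ inner ℝ ν e = a := by
  have h_rank : 1 < Module.rank ℝ E := by
    rw [← Module.finrank_eq_rank]
    exact_mod_cast hE
  have hνν : inner ℝ ν ν = (1 : ℝ) := by rw [real_inner_self_eq_norm_sq, hν, one_pow]
  obtain ⟨e, he, he'⟩ := (isPreconnected_sphere h_rank 0 1).intermediate_value
    (a := -ν) (b := ν) (by simpa using hν) (by simpa using hν)
    (f := fun x ↦ inner ℝ ν x) (by fun_prop) (by simpa only [inner_neg_right, hνν] using ha)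
  exact ⟨e, mem_sphere_zero_iff_norm.1 he, he'⟩

/- Doubling a point `x` of the inner ball that is almost tangent to both spheres keeps it
in `closure K` only as long as its norm stays small, so some `2 ^ n • x` is a last one. -/
lemma exists_mem_ball_two_smul_notMem_closure [FiniteDimensional ℝ E]
    (hE : 2 ≤ Module.finrank ℝ E) (hν : ‖ν‖ = 1) {K : Set E} {s d r : ℝ} (hs : 0 < s) (hd : 0 < d)
    (hr : 0 < r) (h_ball : ball (-(s • ν)) s ⊆ K) (h_closedBall : K ⊆ closedBall (-(d • ν)) d) :
    ∃ x ∈ K, x ∈ ball 0 r ∧ (2 : ℝ) • x ∉ closure K := by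
  set a := min 1 (r / (4 * d))
  have ha : 0 < a := by positivity
  obtain ⟨e, he, heν⟩ := exists_norm_eq_one_inner_eq hE hν (a := -a)
    ⟨neg_le_neg (min_le_left _ _), (neg_nonpos.2 ha.le).trans zero_le_one⟩
  have h_mem : (a * s) • e ∈ K := h_ball <| (mem_ball_neg_smul_iff hν hs.le).2 <| by
    rw [norm_smul, he, mul_one, inner_smul_right, heν, Real.norm_of_nonneg (by positivity)]
    nlinarith [mul_pos (mul_pos ha hs) (mul_pos ha hs)]
  have h_le {t : ℝ} (ht : 0 < t) (hte : t • e ∈ closure K) : t ≤ 2 * d * a := by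
    have h := (mem_closedBall_neg_smul_iff hν hd.le).1
      (closure_minimal h_closedBall isClosed_closedBall hte)
    rw [norm_smul, he, mul_one, inner_smul_right, heν, Real.norm_of_nonneg ht.le] at h
    exact le_of_mul_le_mul_left (by linarith) ht
  obtain ⟨n, hn, hn'⟩ := Nat.exists_not_and_succ_of_not_zero_of_exists
    (p := fun n ↦ (2 ^ n * (a * s)) • e ∉ closure K)
    (by simpa using subset_closure h_mem) <| by
      obtain ⟨n, hn⟩ := pow_unbounded_of_one_lt (2 * d * a / (a * s)) one_lt_two
      exact ⟨n, fun h ↦ ((div_lt_iff₀ (by positivity)).1 hn).not_ge (h_le (by positivity) h)⟩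
  have h_open : IsOpen {x : E | x ∈ ball 0 r ∧ (2 : ℝ) • x ∉ closure K} :=
    isOpen_ball.inter (isClosed_closure.isOpen_compl.preimage (continuous_const_smul 2))
  have h_norm : (2 ^ n * (a * s)) • e ∈ ball 0 r := by
    rw [mem_ball_zero_iff, norm_smul, he, mul_one, Real.norm_of_nonneg (by positivity)]
    have h_min : a * (4 * d) ≤ r := (le_div_iff₀ (by positivity)).1 (min_le_right _ _)
    linarith [h_le (by positivity) (not_not.1 hn)]
  obtain ⟨x, hx, hxK⟩ := mem_closure_iff.1 (not_not.1 hn) _ h_open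
    ⟨h_norm, by rwa [smul_smul, ← mul_assoc, ← pow_succ']⟩
  exact ⟨x, hxK, hx⟩

lemma measureReal_sdiff_smul_inter_ball_pos [FiniteDimensional ℝ E] [MeasurableSpace E]
    {μ : Measure E} [μ.IsOpenPosMeasure] [IsFiniteMeasureOnCompacts μ]
    (hE : 2 ≤ Module.finrank ℝ E) (hν : ‖ν‖ = 1) {K : Set E} (hK : IsOpen K) {s d r : ℝ}
    (hs : 0 < s) (hd : 0 < d) (hr : 0 < r) (h_ball : ball (-(s • ν)) s ⊆ K)
    (h_closedBall : K ⊆ closedBall (-(d • ν)) d) :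
    0 < μ.real ((K \ (2⁻¹ : ℝ) • K) ∩ ball 0 r) := by
  obtain ⟨x, hxK, hxr, hx⟩ :=
    exists_mem_ball_two_smul_notMem_closure hE hν hs hd hr h_ball h_closedBall
  have h_open : IsOpen (K ∩ (ball 0 r ∩ {x : E | (2 : ℝ) • x ∉ closure K})) :=
    hK.inter <| isOpen_ball.inter <|
      isClosed_closure.isOpen_compl.preimage (continuous_const_smul (2 : ℝ))
  have h_sub : K ∩ (ball 0 r ∩ {x : E | (2 : ℝ) • x ∉ closure K}) ⊆
      (K \ (2⁻¹ : ℝ) • K) ∩ ball 0 r := fun y ⟨hyK, hyr, hy⟩ ↦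
    ⟨⟨hyK, fun h ↦ hy <| subset_closure <| by
      rwa [mem_smul_set_iff_inv_smul_mem₀ (by norm_num), inv_inv] at h⟩, hyr⟩
  refine ENNReal.toReal_pos ((h_open.measure_pos μ ⟨x, hxK, hxr, hx⟩).trans_le
    (measure_mono h_sub)).ne' ?_
  exact measure_ne_top_of_subset inter_subset_right measure_ball_lt_top.ne

end NonConical

section ConstantWidth

variable {E : Type*} [NormedAddCommGroup E] [InnerProductSpace ℝ E]

lemma inner_le_zero_of_ball_subset {Ω : Set E} (hΩ : IsOpen Ω) (hΩ_conv : Convex ℝ Ω) {x y z : E}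
    (h_ball : ball z (dist z y) ⊆ Ω) (hy : y ∉ Ω) (hx : x ∈ closure Ω) :
    inner ℝ (y - z) (x - y) ≤ 0 := by
  by_contra! h
  have hxy : 0 < ‖x - y‖ ^ 2 := by
    refine pow_pos (norm_pos_iff.2 fun h₀ ↦ ?_) 2
    rw [h₀, inner_zero_right] at h
    exact h.false
  set t := inner ℝ (y - z) (x - y) / ‖x - y‖ ^ 2
  have ht : 0 < t := div_pos h hxy
  have h_mem : y - t • (x - y) ∈ interior Ω := by
    rw [hΩ.interior_eq]
    refine h_ball ?_
    rw [mem_ball, dist_comm z y, dist_eq_norm, dist_eq_norm, sub_right_comm,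
      ← sq_lt_sq₀ (norm_nonneg _) (norm_nonneg _), norm_sub_sq_real, inner_smul_right, norm_smul,
      mul_pow, norm_eq_abs, sq_abs]
    have h_eq : t * ‖x - y‖ ^ 2 = inner ℝ (y - z) (x - y) := div_mul_cancel₀ _ hxy.ne'
    nlinarith [mul_pos ht h]
  have h_comb := hΩ_conv.combo_interior_closure_mem_interior h_mem hx
    (a := (1 + t)⁻¹) (b := t * (1 + t)⁻¹) (by positivity) (by positivity) (by field_simp)
  have h_eq : (1 + t)⁻¹ • (y - t • (x - y)) + (t * (1 + t)⁻¹) • x = y := by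
    have h_one : (1 + t)⁻¹ + t * (1 + t)⁻¹ = 1 := by field_simp
    linear_combination (norm := module) h_one • y
  rw [h_eq, hΩ.interior_eq] at h_comb
  exact hy h_comb

lemma exists_notMem_ball_subset [FiniteDimensional ℝ E] [Nontrivial E] {Ω : Set E}
    (hΩ : IsOpen Ω) (hΩ_bdd : Bornology.IsBounded Ω) (hΩ_ne : Ω.Nonempty) :
    ∃ y ∉ Ω, ∃ z ∈ Ω, ball z (dist z y) ⊆ Ω := by
  have h_ne : Ωᶜ.Nonempty := nonempty_compl.2 fun h ↦
    NormedSpace.unbounded_univ ℝ E (h ▸ hΩ_bdd)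
  obtain ⟨z, hz⟩ := hΩ_ne
  obtain ⟨y, hy, h_dist⟩ := hΩ.isClosed_compl.exists_infDist_eq_dist h_ne z
  exact ⟨y, hy, z, hz, h_dist ▸ ball_infDist_compl_subset⟩

/- A bounded set whose difference body is a ball has the same width in every direction, so the
point opposite to a boundary point with normal `ν` is at distance `diam s` along `-ν`. -/
lemma sub_diam_smul_mem {s : Set E} (hs : Bornology.IsBounded s)
    (h_width : closedBall 0 (diam s) ⊆ s - s) {y ν : E} (hν : ‖ν‖ = 1) (hy : y ∈ s)
    (h_support : ∀ x ∈ s, inner ℝ ν (x - y) ≤ 0) : y - diam s • ν ∈ s := by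
  obtain ⟨a, ha, b, hb, hab : a - b = diam s • ν⟩ :=
    h_width (show diam s • ν ∈ closedBall 0 (diam s) by
      rw [mem_closedBall_zero_iff, norm_smul, hν, mul_one, Real.norm_of_nonneg diam_nonneg])
  have h_le : ‖y - b‖ ≤ diam s := by
    rw [← dist_eq_norm]
    exact dist_le_diam_of_mem hs hy hb
  have h_inner : diam s ≤ inner ℝ ν (y - b) := by
    have h_ab : inner ℝ ν (a - b) = diam s := by
      rw [hab, inner_smul_right, real_inner_self_eq_norm_sq, hν, one_pow, mul_one]
    have h_split : y - b = (a - b) - (a - y) := by abel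
    rw [h_split, inner_sub_right, h_ab]
    linarith [h_support a ha]
  have h_norm : ‖y - b‖ = diam s :=
    h_le.antisymm (h_inner.trans ((real_inner_le_norm _ _).trans_eq (by rw [hν, one_mul])))
  have h_eq := eq_norm_smul_of_norm_le_inner hν (h_le.trans h_inner)
  rwa [← h_norm, ← h_eq, sub_sub_cancel]

lemma exists_touching_balls [FiniteDimensional ℝ E] [Nontrivial E] {Ω : Set E} (hΩ : IsOpen Ω)
    (hΩ_bdd : Bornology.IsBounded Ω) (hΩ_conv : Convex ℝ Ω) (hΩ_ne : Ω.Nonempty)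
    (h_width : closedBall 0 (diam Ω) ⊆ closure Ω - closure Ω) :
    ∃ y ∈ closure Ω, ∃ ν : E, ∃ s, ‖ν‖ = 1 ∧ 0 < s ∧ y - diam Ω • ν ∈ closure Ω ∧
      ball (-(s • ν)) s ⊆ (· + y) ⁻¹' Ω ∧
      (· + y) ⁻¹' Ω ⊆ closedBall (-(diam Ω • ν)) (diam Ω) := by
  obtain ⟨y, hy, z, hz, h_ball⟩ := exists_notMem_ball_subset hΩ hΩ_bdd hΩ_ne
  have hs : 0 < dist z y := dist_pos.2 fun h ↦ hy (h ▸ hz)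
  have hy_mem : y ∈ closure Ω := closure_mono h_ball <| by
    rw [closure_ball _ hs.ne', mem_closedBall']
  set s := dist z y
  set ν := s⁻¹ • (y - z)
  have hsν : s • ν = y - z := smul_inv_smul₀ hs.ne' _
  have hν : ‖ν‖ = 1 := by
    rw [norm_smul, norm_inv, Real.norm_of_nonneg hs.le, ← dist_eq_norm', inv_mul_cancel₀ hs.ne']
  have h_opposite : y - diam Ω • ν ∈ closure Ω := by
    rw [← diam_closure Ω] at h_width ⊢
    refine sub_diam_smul_mem hΩ_bdd.closure h_width hν hy_mem fun x hx ↦ ?_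
    rw [real_inner_smul_left]
    exact mul_nonpos_of_nonneg_of_nonpos (inv_nonneg.2 hs.le)
      (inner_le_zero_of_ball_subset hΩ hΩ_conv h_ball hy hx)
  refine ⟨y, hy_mem, ν, s, hν, hs, h_opposite, fun x hx ↦ h_ball ?_, fun x hx ↦ ?_⟩
  · rwa [hsν, neg_sub, mem_ball, ← dist_add_right _ _ y, sub_add_cancel] at hx
  · rw [mem_closedBall, ← dist_add_right _ _ y, neg_add_eq_sub, ← diam_closure Ω]
    exact dist_le_diam_of_mem hΩ_bdd.closure (subset_closure hx) (diam_closure Ω ▸ h_opposite)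

end ConstantWidth

section Comparison

variable {N : ℕ} {p q : ℝ} {Ω : Set (EuclideanSpace ℝ (Fin N))}

lemma muPQ_lt_lambdaPQ_of_volume_lt (hN : 2 ≤ N) (hp : 1 < p) (hpq : p ≤ q)
    (hq : ltCritical N p q) (hΩ : IsOpen Ω) (hΩ_bdd : Bornology.IsBounded Ω)
    (hΩ_conv : Convex ℝ Ω) (hΩ_ne : Ω.Nonempty)
    (h_vol : volume Ω < volume (closedBall (0 : EuclideanSpace ℝ (Fin N)) (diam Ω / 2))) :
    muPQ p q Ω < lambdaPQ p q Ω := by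
  have : NeZero N := ⟨by positivity⟩
  obtain ⟨ρ, hρ₀, hρ_vol⟩ := exists_measure_closedBall_eq
    (volume : Measure (EuclideanSpace ℝ (Fin N))) (V := volume Ω) hΩ_bdd.measure_lt_top.ne
  have hρ : 0 < ρ := hρ₀.lt_of_ne' fun h ↦ by
    simpa [← hρ_vol, h] using hΩ.measure_pos volume hΩ_ne
  have hρ_lt : ρ < diam Ω / 2 := by
    by_contra! h
    exact (hρ_vol ▸ h_vol).not_ge (measure_mono (closedBall_subset_closedBall h))
  set t := diam Ω / 2 / ρ
  have ht : 1 < t := (one_lt_div hρ).2 hρ_lt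
  have ht₀ : t ≠ 0 := by positivity
  have ht_vol :
      volume (t • Ω) = volume (closedBall (0 : EuclideanSpace ℝ (Fin N)) (diam Ω / 2)) := by
    rw [Measure.addHaar_smul, ← hρ_vol, ← Measure.addHaar_smul, smul_closedBall _ _ hρ₀, smul_zero,
      Real.norm_of_nonneg (by positivity), div_mul_cancel₀ _ hρ.ne']
  obtain ⟨x₀, hx₀, x₁, hx₁, hd⟩ :=
    exists_dist_eq_diam_of_isCompact hΩ_bdd.isCompact_closure hΩ_ne.closure
  rw [diam_closure] at hd
  obtain ⟨r, κ, -, hκ, h_le⟩ := exists_muPQ_add_mul_measureReal_le_lambdaPQ hN hp hpq hq hΩ hΩ_bdd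
    hΩ_conv hx₀ hx₁ hd (hΩ.smul₀ ht₀) hΩ_ne.smul_set (hΩ_bdd.smul₀ t) ht_vol.le
  calc muPQ p q Ω
    _ ≤ lambdaPQ p q (t • Ω) := (le_add_of_nonneg_right (by positivity)).trans h_le
    _ < lambdaPQ p q Ω :=
      lambdaPQ_smul_lt hN hp.le (by linarith) hq hΩ hΩ_ne hΩ_bdd ht

lemma muPQ_lt_lambdaPQ_of_le_volume (hN : 2 ≤ N) (hp : 1 < p) (hpq : p ≤ q)
    (hq : ltCritical N p q) (hΩ : IsOpen Ω) (hΩ_bdd : Bornology.IsBounded Ω)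
    (hΩ_conv : Convex ℝ Ω) (hΩ_ne : Ω.Nonempty)
    (h_vol : volume (closedBall (0 : EuclideanSpace ℝ (Fin N)) (diam Ω / 2)) ≤ volume Ω) :
    muPQ p q Ω < lambdaPQ p q Ω := by
  have : NeZero N := ⟨by positivity⟩
  have hΩ_compact := hΩ_bdd.isCompact_closure
  have h_isodiametric :
      volume Ω ≤ volume (closedBall (0 : EuclideanSpace ℝ (Fin N)) (diam Ω / 2)) := by
    rw [← diam_closure Ω]
    exact (measure_mono subset_closure).trans (measure_le_measure_closedBall_diam _ hΩ_compact)
  have h_diam : 0 < diam Ω := diam_nonneg.lt_of_ne' fun h ↦ by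
    simpa [h] using (hΩ.measure_pos volume hΩ_ne).trans_le h_isodiametric
  have h_width : closedBall 0 (diam Ω) ⊆ closure Ω - closure Ω := by
    rw [← diam_closure Ω] at h_diam h_vol ⊢
    exact closedBall_diam_subset_sub volume hΩ_compact h_diam
      (h_vol.trans (measure_mono subset_closure))
  obtain ⟨y, hy, ν, s, hν, hs, hy', h_ball, h_closedBall⟩ :=
    exists_touching_balls hΩ hΩ_bdd hΩ_conv hΩ_ne h_width
  have h_dist : dist y (y - diam Ω • ν) = diam Ω := by
    rw [dist_self_sub_right, norm_smul, hν, mul_one, Real.norm_of_nonneg h_diam.le]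
  obtain ⟨r, κ, hr, hκ, h_le⟩ := exists_muPQ_add_mul_measureReal_le_lambdaPQ hN hp hpq hq hΩ hΩ_bdd
    hΩ_conv hy hy' h_dist hΩ hΩ_ne hΩ_bdd h_isodiametric
  have h_gap := measureReal_sdiff_smul_inter_ball_pos (μ := volume) (by simpa using hN) hν
    (hΩ.preimage (continuous_add_const y)) hs h_diam hr h_ball h_closedBall
  exact (lt_add_of_pos_right _ (mul_pos hκ h_gap)).trans_le h_le

end Comparison

/-- Proposition 5.1, inequality (5.1). Let `1 < p ≤ q < p*`. For every
open bounded convex set `Ω ⊂ ℝ^N`, `μ_{p,q}(Ω) < λ_{p,q}(Ω)`. -/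
theorem muPQ_lt_lambdaPQ {N : ℕ} (hN : 2 ≤ N) (p q : ℝ) (hp : 1 < p) (hpq : p ≤ q)
    (hq : ltCritical N p q)
    (Ω : Set (EuclideanSpace ℝ (Fin N))) (hΩo : IsOpen Ω)
    (hΩb : Bornology.IsBounded Ω) (hΩc : Convex ℝ Ω) (hΩne : Ω.Nonempty) :
    muPQ p q Ω < lambdaPQ p q Ω := by
  rcases lt_or_ge (volume Ω)
    (volume (closedBall (0 : EuclideanSpace ℝ (Fin N)) (diam Ω / 2))) with h_vol | h_vol
  · exact muPQ_lt_lambdaPQ_of_volume_lt hN hp hpq hq hΩo hΩb hΩc hΩne h_vol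
  · exact muPQ_lt_lambdaPQ_of_le_volume hN hp hpq hq hΩo hΩb hΩc hΩne h_vol
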